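/- Let ℓ be an integer and c>0 with ℓ ≥ 3⌈1/c⌉ + 1. Let k≥1 be an integer, and let 0 < d,λ' ≤ 1. Then there exist an integer K≥1 and λ>0 with the following property: for every graph G and every blockade A=(A_i : i∈I) in G of length K, with linkage at most λ, that is not (2^{−6−2ℓ}/K, K^{−K}|G|^{−c})-divergent, there is an A-rainbow bi-grading (L, M, B) with length k and height ℓ, such that B has A-size at least 2^{−k−2ℓ}K^{−K}|G|^{−d} and linkage at most λ'. -/

import Mathlib

noncomputable section

namespace PurePairs

open SimpleGraph

variable {V W : Type*}

/-- A pure pair in `G`: a pair of disjoint vertex sets that are complete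
or anticomplete to each other. -/
def PurePair (G : SimpleGraph V) (A B : Set V) : Prop :=
  Disjoint A B ∧
    ((∀ a ∈ A, ∀ b ∈ B, G.Adj a b) ∨ (∀ a ∈ A, ∀ b ∈ B, ¬ G.Adj a b))

/-- `G` contains `H`: some induced subgraph of `G` is isomorphic to `H`. -/
def Contains (G : SimpleGraph V) (H : SimpleGraph W) : Prop :=
  Nonempty (H ↪g G)

/-- The congestion of a graph `H`: the maximum (here: supremum, together with `0`)
of `1 - (|J|-1)/|E(J)|` over all subgraphs `J` of `H` with at least one edge.
If `H` has no edges this is `0`. -/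
def congestion (H : SimpleGraph V) : ℝ :=
  sSup ({0} ∪ {x : ℝ | ∃ J : H.Subgraph, J.edgeSet.Nonempty ∧
    x = 1 - ((J.verts.ncard : ℝ) - 1) / (J.edgeSet.ncard : ℝ)})

/-- `A` is anticomplete to `B`: no edges between them. -/
def Anticomplete (G : SimpleGraph V) (A B : Set V) : Prop :=
  ∀ a ∈ A, ∀ b ∈ B, ¬ G.Adj a b

/-- `A` covers `B`: every vertex of `B` has a neighbour in `A`. -/
def Covers (G : SimpleGraph V) (A B : Set V) : Prop :=
  ∀ b ∈ B, ∃ a ∈ A, G.Adj a b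

/-- `G` is `ε`-sparse: every vertex has degree less than `ε|G|`. -/
def EpsSparse (G : SimpleGraph V) [Fintype V] (ε : ℝ) : Prop :=
  ∀ v : V, ((G.neighborSet v).ncard : ℝ) < ε * (Fintype.card V : ℝ)

/-- `G` is `(γ,δ)`-coherent: there is no pair of disjoint anticomplete sets `A`, `B`
with `|A| ≥ γ` and `|B| ≥ δ`. -/
def Coherent (G : SimpleGraph V) (γ δ : ℝ) : Prop :=
  ¬ ∃ A B : Set V, Disjoint A B ∧ Anticomplete G A B ∧
      γ ≤ (A.ncard : ℝ) ∧ δ ≤ (B.ncard : ℝ)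

/-- `N(X)`: the set of vertices with a neighbour in `X`. -/
def nbhd (G : SimpleGraph V) (X : Set V) : Set V :=
  {v | ∃ x ∈ X, G.Adj x v}

/-- A blockade: a family of nonempty pairwise disjoint vertex sets indexed by a
finite set of integers. -/
def IsBlockade (I : Finset ℤ) (A : ℤ → Set V) : Prop :=
  (∀ i ∈ I, (A i).Nonempty) ∧
    ∀ i ∈ I, ∀ j ∈ I, i ≠ j → Disjoint (A i) (A j)

/-- The blockade `(A i : i ∈ I)` is `(γ,δ)`-divergent. -/
def Divergent (G : SimpleGraph V) (I : Finset ℤ) (A : ℤ → Set V) (γ δ : ℝ) : Prop :=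
  ∃ i ∈ I, ∃ j ∈ I, i ≠ j ∧ ∃ X ⊆ A i, ∃ Y ⊆ A j,
    γ * ((A i).ncard : ℝ) ≤ (X.ncard : ℝ) ∧ δ * ((A j).ncard : ℝ) ≤ (Y.ncard : ℝ) ∧
    Anticomplete G X Y

/-- The blockade `(A i : i ∈ I)` is `τ`-expanding. -/
def Expanding (G : SimpleGraph V) (I : Finset ℤ) (A : ℤ → Set V) (τ : ℝ) : Prop :=
  ∀ i ∈ I, ∀ j ∈ I, i ≠ j → ∀ X ⊆ A i,
    min (τ * (X.ncard : ℝ) / ((A i).ncard : ℝ)) (1/4)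
      ≤ (((nbhd G X) ∩ A j).ncard : ℝ) / ((A j).ncard : ℝ)

/-- The linkage of the blockade `(A i : i ∈ I)` is at most `lam`. -/
def LinkageLE (G : SimpleGraph V) (I : Finset ℤ) (A : ℤ → Set V) (lam : ℝ) : Prop :=
  ∀ i ∈ I, ∀ j ∈ I, i ≠ j → ∀ v ∈ A i,
    ((G.neighborSet v ∩ A j).ncard : ℝ) ≤ lam * ((A j).ncard : ℝ)

/-- The shrinkage of the blockade `(A i : i ∈ I)` is at most `σ`, i.e. its width is at
least `|G|^{1-σ}`. -/
def ShrinkageLE [Fintype V] (I : Finset ℤ) (A : ℤ → Set V) (σ : ℝ) : Prop :=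
  ∀ i ∈ I, (Fintype.card V : ℝ) ^ (1 - σ) ≤ ((A i).ncard : ℝ)

/-- `(L 0, …, L k)` is a levelling in `G`. -/
def IsLevelling (G : SimpleGraph V) (L : ℕ → Set V) (k : ℕ) : Prop :=
  1 ≤ k ∧ (L 0).ncard = 1 ∧
  (∀ i ≤ k, ∀ j ≤ k, i ≠ j → Disjoint (L i) (L j)) ∧
  (∀ i, 1 ≤ i → i ≤ k → Covers G (L (i-1)) (L i)) ∧
  (∀ i, 2 ≤ i → i ≤ k → ∀ h, h + 2 ≤ i → Anticomplete G (L h) (L i))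

/-- The levelling `(L 0, …, L k)` reaches `C`, i.e. `(L 0, …, L k, C)` is a levelling. -/
def Reaches (G : SimpleGraph V) (L : ℕ → Set V) (k : ℕ) (C : Set V) : Prop :=
  IsLevelling G (fun i => if i = k + 1 then C else L i) (k + 1)

/-- The levelling `(L 0, …, L k)` is `(B i : i ∈ I)`-rainbow. -/
def RainbowLevelling (I : Finset ℤ) (B : ℤ → Set V) (L : ℕ → Set V) (k : ℕ) : Prop :=
  ∃ q : ℕ → ℤ, (∀ i ≤ k, q i ∈ I ∧ L i ⊆ B (q i)) ∧
    ∀ i ≤ k, ∀ j ≤ k, q i = q j → i = j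

/-- The levelling `(L 0, …, L k)` grades the blockade `(C j : j ∈ J)` (in some order). -/
def Grades (G : SimpleGraph V) (L : ℕ → Set V) (k : ℕ) (J : Finset ℤ) (C : ℤ → Set V) :
    Prop :=
  Reaches G L k (⋃ j ∈ J, C j) ∧
  ∃ e : ℕ → ℤ, (∀ g < J.card, e g ∈ J) ∧
    (∀ g < J.card, ∀ h < J.card, e g = e h → g = h) ∧
    ∀ g < J.card, ∃ Y ⊆ L k,
      (∀ h, g ≤ h → h < J.card → Covers G Y (C (e h))) ∧
      (∀ h, h < g → Anticomplete G Y (C (e h)))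

/-- The levelling `(L 0, …, L k)` grades the blockade `(C j : j ∈ J)` forwards. -/
def GradesFwd (G : SimpleGraph V) (L : ℕ → Set V) (k : ℕ) (J : Finset ℤ) (C : ℤ → Set V) :
    Prop :=
  Reaches G L k (⋃ j ∈ J, C j) ∧
  ∀ j ∈ J, ∃ Y ⊆ L k,
    (∀ i ∈ J, j ≤ i → Covers G Y (C i)) ∧
    (∀ i ∈ J, i < j → Anticomplete G Y (C i))

/-- The levelling `(L 0, …, L k)` grades the blockade `(C j : j ∈ J)` backwards. -/
def GradesBwd (G : SimpleGraph V) (L : ℕ → Set V) (k : ℕ) (J : Finset ℤ) (C : ℤ → Set V) :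
    Prop :=
  Reaches G L k (⋃ j ∈ J, C j) ∧
  ∀ j ∈ J, ∃ Y ⊆ L k,
    (∀ i ∈ J, i ≤ j → Covers G Y (C i)) ∧
    (∀ i ∈ J, j < i → Anticomplete G Y (C i))

/-- Two levellings are parallel. -/
def Parallel (G : SimpleGraph V) (L : ℕ → Set V) (k : ℕ) (M : ℕ → Set V) (m : ℕ) : Prop :=
  L 0 = M 0 ∧
  Disjoint (⋃ j ∈ Finset.Icc 1 m, M j) (⋃ i ∈ Finset.Icc 1 k, L i) ∧
  Anticomplete G (⋃ j ∈ Finset.Icc 1 m, M j) (⋃ i ∈ Finset.Icc 1 k, L i)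

/-- `(L, M, C)` is a bi-levelling, where `L` has height `k` and `M` has height `m`:
`C` is a blockade, `L, M` are parallel levellings both reaching the union of the
blocks of `C`, and `L` grades `C` forwards. Its height is `k + m` and its length is
the length of `C`. -/
def IsBiLevelling (G : SimpleGraph V) (L : ℕ → Set V) (k : ℕ) (M : ℕ → Set V) (m : ℕ)
    (J : Finset ℤ) (C : ℤ → Set V) : Prop :=
  IsBlockade J C ∧ IsLevelling G L k ∧ IsLevelling G M m ∧ Parallel G L k M m ∧
    Reaches G M m (⋃ j ∈ J, C j) ∧ GradesFwd G L k J C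

/-- A bi-grading: a bi-levelling in which `M` also grades `C` backwards. -/
def IsBiGrading (G : SimpleGraph V) (L : ℕ → Set V) (k : ℕ) (M : ℕ → Set V) (m : ℕ)
    (J : Finset ℤ) (C : ℤ → Set V) : Prop :=
  IsBiLevelling G L k M m J C ∧ GradesBwd G M m J C

/-- The bi-levelling `(L, M, C)` is `(A i : i ∈ I)`-rainbow: each block of `C`, each
level of `L`, and each level of `M` other than `M 0 = L 0` is included in a block of
`A`, and distinct such sets lie in distinct blocks. -/
def RainbowBiLevelling (I : Finset ℤ) (A : ℤ → Set V)
    (L : ℕ → Set V) (k : ℕ) (M : ℕ → Set V) (m : ℕ)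
    (J : Finset ℤ) (C : ℤ → Set V) : Prop :=
  ∃ (qc : ℤ → ℤ) (ql qm : ℕ → ℤ),
    (∀ j ∈ J, qc j ∈ I ∧ C j ⊆ A (qc j)) ∧
    (∀ i ≤ k, ql i ∈ I ∧ L i ⊆ A (ql i)) ∧
    (∀ i, 1 ≤ i → i ≤ m → qm i ∈ I ∧ M i ⊆ A (qm i)) ∧
    (∀ j ∈ J, ∀ j' ∈ J, qc j = qc j' → j = j') ∧
    (∀ i ≤ k, ∀ i' ≤ k, ql i = ql i' → i = i') ∧
    (∀ i, 1 ≤ i → i ≤ m → ∀ i', 1 ≤ i' → i' ≤ m → qm i = qm i' → i = i') ∧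
    (∀ j ∈ J, ∀ i ≤ k, qc j ≠ ql i) ∧
    (∀ j ∈ J, ∀ i, 1 ≤ i → i ≤ m → qc j ≠ qm i) ∧
    (∀ i ≤ k, ∀ i', 1 ≤ i' → i' ≤ m → ql i ≠ qm i')

/-- Each block of `(C j : j ∈ J)` lies in a block of `(A i : i ∈ I)`; the `A`-size of
`C` is at least `η` when every block of `C` has size at least `η` times the size of the
block of `A` containing it. -/
def SizeGE (I : Finset ℤ) (A : ℤ → Set V) (J : Finset ℤ) (C : ℤ → Set V) (η : ℝ) : Prop :=
  ∀ j ∈ J, ∀ i ∈ I, C j ⊆ A i → η * ((A i).ncard : ℝ) ≤ ((C j).ncard : ℝ)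

/-- A `(B i : i ∈ I)`-rainbow induced path `p 0 - p 1 - ⋯ - p n` in `G`. -/
def RainbowPath (G : SimpleGraph V) (I : Finset ℤ) (B : ℤ → Set V)
    (n : ℕ) (p : ℕ → V) : Prop :=
  (∀ i ≤ n, ∀ j ≤ n, p i = p j → i = j) ∧
  (∀ i < n, G.Adj (p i) (p (i+1))) ∧
  (∀ i j, i + 1 < j → j ≤ n → ¬ G.Adj (p i) (p j)) ∧
  ∃ q : ℕ → ℤ, (∀ i ≤ n, q i ∈ I ∧ p i ∈ B (q i)) ∧
    ∀ i ≤ n, ∀ j ≤ n, q i = q j → i = j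

/-- A `(B i : i ∈ I)`-rainbow copy of `H` in `G`: an induced copy of `H` with each
vertex in a different block. -/
def RainbowCopy (G : SimpleGraph V) (I : Finset ℤ) (B : ℤ → Set V)
    (H : SimpleGraph W) : Prop :=
  ∃ (f : H ↪g G) (q : W → ℤ), Function.Injective q ∧ ∀ w : W, q w ∈ I ∧ f w ∈ B (q w)

/-- `(N,K,σ,lam,c)` forces `H`. -/
def Forces (H : SimpleGraph W) (N K : ℕ) (σ lam c : ℝ) : Prop :=
  ∀ {V : Type} [Fintype V] (G : SimpleGraph V),
    Coherent G ((Fintype.card V : ℝ) ^ (1 - c)) ((Fintype.card V : ℝ) ^ (1 - c)) →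
    N ≤ Fintype.card V →
    ∀ (I : Finset ℤ) (A : ℤ → Set V), IsBlockade I A → I.card = K →
      ShrinkageLE I A σ → LinkageLE G I A lam →
      RainbowCopy G I A H

/-- `p 0 - ⋯ - p n` is a handle of length `n` that can be added to (the graph induced
on) `S` inside the ambient graph `H`: an induced path of `H[S ∪ p]` of length at least
two whose ends lie in `S`, whose internal vertices avoid `S` and have degree two in
`H[S ∪ p]`. -/
def IsHandle (H : SimpleGraph V) (S : Set V) (n : ℕ) (p : ℕ → V) : Prop :=
  2 ≤ n ∧
  (∀ i ≤ n, ∀ j ≤ n, p i = p j → i = j) ∧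
  p 0 ∈ S ∧ p n ∈ S ∧
  (∀ i, 0 < i → i < n → p i ∉ S) ∧
  (∀ i < n, H.Adj (p i) (p (i+1))) ∧
  (∀ i j, i + 1 < j → j ≤ n → ¬ H.Adj (p i) (p j)) ∧
  (∀ i, 0 < i → i < n → ∀ w, (w ∈ S ∨ ∃ j ≤ n, w = p j) → H.Adj (p i) w →
    w = p (i-1) ∨ w = p (i+1))

/-- The vertex sets `S` such that the induced subgraph `H[S]` can be built, starting
from the two-vertex graph with no edges, by repeatedly adding handles of length at
least `β`. -/
inductive BuildableOn (H : SimpleGraph V) (β : ℕ) : Set V → Prop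
  | base (u v : V) (huv : u ≠ v) (hadj : ¬ H.Adj u v) : BuildableOn H β {u, v}
  | handle (S : Set V) (n : ℕ) (p : ℕ → V) (hS : BuildableOn H β S)
      (hh : IsHandle H S n p) (hn : β ≤ n) :
      BuildableOn H β (S ∪ {w | ∃ j ≤ n, w = p j})

/-- `H` is `β`-buildable. -/
def Buildable [Fintype V] (H : SimpleGraph V) (β : ℕ) : Prop :=
  BuildableOn H β Set.univ

/-- The vertex sets `S` such that the induced subgraph `H[S]` can be built, starting
from the null graph, by repeatedly adding a subleaf or a handle of length at least
`β`. -/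
inductive WeaklyBuildableOn (H : SimpleGraph V) (β : ℕ) : Set V → Prop
  | empty : WeaklyBuildableOn H β ∅
  | subleaf (S : Set V) (v : V) (hv : v ∉ S) (hdeg : (S ∩ H.neighborSet v).ncard ≤ 1)
      (hS : WeaklyBuildableOn H β S) : WeaklyBuildableOn H β (insert v S)
  | handle (S : Set V) (n : ℕ) (p : ℕ → V) (hS : WeaklyBuildableOn H β S)
      (hh : IsHandle H S n p) (hn : β ≤ n) :
      WeaklyBuildableOn H β (S ∪ {w | ∃ j ≤ n, w = p j})

/-- `H` is weakly `β`-buildable. -/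
def WeaklyBuildable [Fintype V] (H : SimpleGraph V) (β : ℕ) : Prop :=
  WeaklyBuildableOn H β Set.univ

set_option linter.unusedSectionVars false

section Basics
open Classical
variable {V : Type} [Fintype V]

/-- weight of a finite set -/
def ws (wt : V → NNReal) (S : Finset V) : ℝ := ∑ v ∈ S, (wt v : ℝ)

/-- neighbourhood as a finset -/
def nb (G : SimpleGraph V) (X : Finset V) : Finset V :=
  Finset.univ.filter (fun v => ∃ x ∈ X, G.Adj x v)

/-- no edges between the two finsets -/
def ant (G : SimpleGraph V) (X Y : Finset V) : Prop :=
  ∀ x ∈ X, ∀ y ∈ Y, ¬ G.Adj x y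

lemma mem_nb {G : SimpleGraph V} {X : Finset V} {v : V} :
    v ∈ nb G X ↔ ∃ x ∈ X, G.Adj x v := by simp [nb]

lemma nb_mono {G : SimpleGraph V} {X Y : Finset V} (h : X ⊆ Y) : nb G X ⊆ nb G Y := by
  intro v hv
  rw [mem_nb] at hv ⊢
  obtain ⟨x, hx, hxv⟩ := hv
  exact ⟨x, h hx, hxv⟩

lemma nb_union {G : SimpleGraph V} {X Y : Finset V} : nb G (X ∪ Y) = nb G X ∪ nb G Y := by
  ext v
  simp only [mem_nb, Finset.mem_union, or_and_right, exists_or]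

lemma nb_empty {G : SimpleGraph V} : nb G (∅ : Finset V) = ∅ := by
  ext v; simp [mem_nb]

lemma ant_mono {G : SimpleGraph V} {X X' Y Y' : Finset V} (h : ant G X Y) (hX : X' ⊆ X)
    (hY : Y' ⊆ Y) : ant G X' Y' := fun x hx y hy => h x (hX hx) y (hY hy)

lemma ant_symm {G : SimpleGraph V} {X Y : Finset V} (h : ant G X Y) : ant G Y X :=
  fun x hx y hy hxy => h y hy x hx hxy.symm

lemma ant_sdiff {G : SimpleGraph V} {X Y : Finset V} : ant G X (Y \ nb G X) := by
  intro x hx y hy hxy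
  rw [Finset.mem_sdiff, mem_nb] at hy
  exact hy.2 ⟨x, hx, hxy⟩

lemma ws_nonneg (wt : V → NNReal) (S : Finset V) : 0 ≤ ws wt S :=
  Finset.sum_nonneg (fun v _ => (wt v).2)

lemma ws_mono (wt : V → NNReal) {S T : Finset V} (h : S ⊆ T) : ws wt S ≤ ws wt T :=
  Finset.sum_le_sum_of_subset_of_nonneg h (fun v _ _ => (wt v).2)

lemma ws_empty (wt : V → NNReal) : ws wt ∅ = 0 := by simp [ws]

lemma ws_union_le (wt : V → NNReal) (S T : Finset V) : ws wt (S ∪ T) ≤ ws wt S + ws wt T := by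
  unfold ws
  rw [← Finset.sum_union_inter]
  have := ws_nonneg wt (S ∩ T)
  unfold ws at this
  linarith

lemma ws_union (wt : V → NNReal) {S T : Finset V} (h : Disjoint S T) :
    ws wt (S ∪ T) = ws wt S + ws wt T := Finset.sum_union h

lemma ws_inter_sdiff (wt : V → NNReal) (S T : Finset V) :
    ws wt (S ∩ T) + ws wt (S \ T) = ws wt S := by
  rw [← ws_union]
  · congr 1
    ext v; simp only [Finset.mem_union, Finset.mem_inter, Finset.mem_sdiff]; tauto
  · exact Finset.disjoint_left.2 (fun v hv hv' => by
      rw [Finset.mem_inter] at hv; rw [Finset.mem_sdiff] at hv'; exact hv'.2 hv.2)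

lemma ws_sdiff_ge (wt : V → NNReal) (S T : Finset V) :
    ws wt S - ws wt T ≤ ws wt (S \ T) := by
  have := ws_inter_sdiff wt S T
  have h2 := ws_mono wt (Finset.inter_subset_right : S ∩ T ⊆ T)
  linarith

lemma ws_biUnion_le {ι : Type*} (wt : V → NNReal) (P : Finset ι) (f : ι → Finset V) :
    ws wt (P.biUnion f) ≤ ∑ i ∈ P, ws wt (f i) := by
  induction P using Finset.induction_on with
  | empty => simp [ws]
  | insert a s ha ih =>
    rw [Finset.biUnion_insert, Finset.sum_insert ha]
    have := ws_union_le wt (f a) (s.biUnion f)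
    linarith

/-- the environment -/
structure Env (G : SimpleGraph V) (wt : V → NNReal) (I : Finset ℤ) (A : ℤ → Finset V)
    (lam γ δ ω : ℝ) : Prop where
  wpos : 0 < ω
  wge : ∀ v, ω ≤ (wt v : ℝ)
  one : ∀ i ∈ I, ws wt (A i) = 1
  disj : ∀ i ∈ I, ∀ j ∈ I, i ≠ j → Disjoint (A i) (A j)
  link : ∀ i ∈ I, ∀ j ∈ I, i ≠ j → ∀ v ∈ A i, ws wt (nb G {v} ∩ A j) ≤ lam
  nd : ∀ i ∈ I, ∀ j ∈ I, i ≠ j → ∀ X ⊆ A i, ∀ Y ⊆ A j, γ ≤ ws wt X → δ ≤ ws wt Y →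
    ∃ x ∈ X, ∃ y ∈ Y, G.Adj x y
  dpos : 0 < δ
  lpos : 0 < lam

variable {G : SimpleGraph V} {wt : V → NNReal} {I : Finset ℤ} {A : ℤ → Finset V}
    {lam γ δ ω : ℝ}

lemma Env.cover (E : Env G wt I A lam γ δ ω) {i j : ℤ} (hi : i ∈ I) (hj : j ∈ I) (hij : i ≠ j)
    {X C : Finset V} (hX : X ⊆ A i) (hC : C ⊆ A j) (hw : δ ≤ ws wt X) :
    ws wt (C \ nb G X) < γ := by
  by_contra hcon
  push Not at hcon
  obtain ⟨x, hx, y, hy, hxy⟩ := E.nd j hj i hi hij.symm (C \ nb G X)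
    (Finset.sdiff_subset.trans hC) X hX hcon hw
  rw [Finset.mem_sdiff, mem_nb] at hx
  exact hx.2 ⟨y, hy, hxy.symm⟩

lemma Env.link' (E : Env G wt I A lam γ δ ω) {i j : ℤ} (hi : i ∈ I) (hj : j ∈ I) (hij : i ≠ j)
    {v : V} {C : Finset V} (hv : v ∈ A i) (hC : C ⊆ A j) : ws wt (nb G {v} ∩ C) ≤ lam :=
  (ws_mono wt (Finset.inter_subset_inter_left hC)).trans (E.link i hi j hj hij v hv)

lemma Env.ws_pos (E : Env G wt I A lam γ δ ω) {S : Finset V} (hS : S.Nonempty) :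
    ω ≤ ws wt S := by
  obtain ⟨v, hv⟩ := hS
  calc ω ≤ wt v := E.wge v
    _ = ws wt {v} := by simp [ws]
    _ ≤ ws wt S := ws_mono wt (by simpa using hv)

lemma nonempty_of_ws {S : Finset V} (h : 0 < ws wt S) : S.Nonempty := by
  by_contra hS
  rw [Finset.not_nonempty_iff_eq_empty] at hS
  rw [hS, ws_empty] at h
  exact lt_irrefl _ h

lemma split_lem {ι : Type*} [DecidableEq ι] (X : Finset V) (Q : Finset ι) (C : ι → Finset V)
    (m : ℕ) (hmQ : m ≤ Q.card) (hcov : ∀ j ∈ Q, C j ⊆ nb G X)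
    (hlam : ∀ j ∈ Q, ∀ x ∈ X, ws wt (nb G {x} ∩ C j) ≤ ws wt (C j) / 4) :
    ∃ X' ⊆ X, ∃ E ⊆ Q, E.card = m ∧ (∀ j ∈ E, ws wt (C j) / 2 ≤ ws wt (C j ∩ nb G X')) ∧
      ∀ j ∈ Q \ E, ws wt (C j) / 4 ≤ ws wt (C j \ nb G X') := by
  have key : ∀ n : ℕ, ∀ X' ⊆ X, X'.card = n →
      m ≤ (Q.filter (fun j => ws wt (C j) / 2 ≤ ws wt (C j ∩ nb G X'))).card →
      ∃ X' ⊆ X, ∃ E ⊆ Q, E.card = m ∧ (∀ j ∈ E, ws wt (C j) / 2 ≤ ws wt (C j ∩ nb G X')) ∧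
      ∀ j ∈ Q \ E, ws wt (C j) / 4 ≤ ws wt (C j \ nb G X') := by
    intro n
    induction n with
    | zero =>
      intro X' hX' hc hm
      have h0 : X' = ∅ := Finset.card_eq_zero.1 hc
      obtain ⟨E, hE, hEc⟩ := Finset.exists_subset_card_eq hm
      refine ⟨X', hX', E, hE.trans (Finset.filter_subset _ _), hEc, ?_, ?_⟩
      · intro j hj
        exact (Finset.mem_filter.1 (hE hj)).2
      · intro j hj
        rw [h0, nb_empty, Finset.sdiff_empty]
        have := ws_nonneg wt (C j)
        linarith
    | succ n ih =>
      intro X' hX' hc hm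
      obtain ⟨x, hx⟩ : X'.Nonempty := Finset.card_pos.1 (by omega)
      by_cases h : m ≤ (Q.filter (fun j => ws wt (C j) / 2 ≤
          ws wt (C j ∩ nb G (X'.erase x)))).card
      · exact ih (X'.erase x) ((Finset.erase_subset _ _).trans hX')
          (by rw [Finset.card_erase_of_mem hx]; omega) h
      · push Not at h
        have hsub : Q.filter (fun j => ws wt (C j) / 2 ≤ ws wt (C j ∩ nb G (X'.erase x))) ⊆
          Q.filter (fun j => ws wt (C j) / 2 ≤ ws wt (C j ∩ nb G X')) := by
          intro j hj
          rw [Finset.mem_filter] at hj ⊢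
          exact ⟨hj.1, hj.2.trans (ws_mono wt (Finset.inter_subset_inter_left
            (nb_mono (Finset.erase_subset _ _))))⟩
        obtain ⟨E, hE1, hE2, hEc⟩ := Finset.exists_subsuperset_card_eq hsub h.le hm
        refine ⟨X', hX', E, hE2.trans (Finset.filter_subset _ _), hEc, ?_, ?_⟩
        · intro j hj
          exact (Finset.mem_filter.1 (hE2 hj)).2
        · intro j hj
          rw [Finset.mem_sdiff] at hj
          have h1 : ws wt (C j ∩ nb G (X'.erase x)) < ws wt (C j) / 2 := by
            by_contra hcon
            push Not at hcon
            exact hj.2 (hE1 (Finset.mem_filter.2 ⟨hj.1, hcon⟩))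
          have h2 := hlam j hj.1 x (hX' hx)
          have h3 : C j ∩ nb G X' ⊆ (C j ∩ nb G (X'.erase x)) ∪ (nb G {x} ∩ C j) := by
            intro v hv
            rw [Finset.mem_inter, mem_nb] at hv
            obtain ⟨hv1, y, hy, hyv⟩ := hv
            rw [Finset.mem_union, Finset.mem_inter, Finset.mem_inter, mem_nb, mem_nb]
            by_cases hyx : y = x
            · right; exact ⟨⟨y, by simp [hyx], hyv⟩, hv1⟩
            · left; exact ⟨hv1, y, Finset.mem_erase.2 ⟨hyx, hy⟩, hyv⟩
          have h4 := (ws_mono wt h3).trans (ws_union_le wt _ _)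
          have h5 := ws_inter_sdiff wt (C j) (nb G X')
          linarith
  refine key X.card X le_rfl rfl ?_
  rw [Finset.filter_true_of_mem]
  · exact hmQ
  · intro j hj
    rw [Finset.inter_eq_left.2 (hcov j hj)]
    have := ws_nonneg wt (C j)
    linarith

lemma core_lem (E : Env G wt I A lam γ δ ω) (P : Finset ℤ) (hP : P ⊆ I) (D : ℤ → Finset V)
    (hD : ∀ j ∈ P, D j ⊆ A j) (κ : ℝ) (hκ : ∀ j ∈ P, κ ≤ ws wt (D j))
    (hPδ : P.card * δ ≤ κ / 2) (hγ : γ ≤ κ / 4) (hκ0 : 0 < κ) :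
    ∃ B : ℤ → Finset V, ∀ i ∈ P, B i ⊆ D i ∧ κ / 2 ≤ ws wt (B i) ∧
      ∀ j ∈ P, i ≠ j → ∀ X ⊆ B i, ws wt X < δ → κ / 8 / δ * ws wt X ≤ ws wt (nb G X ∩ B j) := by
  have hδ := E.dpos
  set τ := κ / 8 / δ with hτ
  have hτδ : τ * δ = κ / 8 := by rw [hτ]; field_simp
  have hτ0 : 0 < τ := by positivity
  have key : ∀ n : ℕ, ∀ Xs : ℤ → ℤ → Finset V,
      (∀ i ∈ P, ∀ j ∈ P, ws wt (Xs i j) < δ ∧ Xs i j ⊆ D i ∧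
        (i ≠ j → ws wt (nb G (Xs i j) ∩ (D j \ P.biUnion (Xs j))) ≤ τ * ws wt (Xs i j))) →
      ∑ i ∈ P, (D i \ P.biUnion (Xs i)).card = n →
    ∃ B : ℤ → Finset V, ∀ i ∈ P, B i ⊆ D i ∧ κ / 2 ≤ ws wt (B i) ∧
      ∀ j ∈ P, i ≠ j → ∀ X ⊆ B i, ws wt X < δ → τ * ws wt X ≤ ws wt (nb G X ∩ B j) := by
    intro n
    induction n using Nat.strong_induction_on with
    | _ n ih =>
    intro Xs hXs hn
    have hbig : ∀ i ∈ P, κ / 2 ≤ ws wt (D i \ P.biUnion (Xs i)) := by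
      intro i hi
      have h1 := ws_sdiff_ge wt (D i) (P.biUnion (Xs i))
      have h2 := ws_biUnion_le wt P (Xs i)
      have h3 : ∑ j ∈ P, ws wt (Xs i j) ≤ P.card * δ := by
        have : ∑ j ∈ P, ws wt (Xs i j) ≤ ∑ j ∈ P, δ :=
          Finset.sum_le_sum (fun j hj => (hXs i hi j hj).1.le)
        simpa using this
      have := hκ i hi
      linarith
    by_cases hgood : ∀ i ∈ P, ∀ j ∈ P, i ≠ j → ∀ X ⊆ D i \ P.biUnion (Xs i), ws wt X < δ →
        τ * ws wt X ≤ ws wt (nb G X ∩ (D j \ P.biUnion (Xs j)))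
    · exact ⟨fun i => D i \ P.biUnion (Xs i), fun i hi =>
        ⟨Finset.sdiff_subset, hbig i hi, hgood i hi⟩⟩
    · push Not at hgood
      obtain ⟨i, hi, j, hj, hij, X, hX, hXδ, hXlt⟩ := hgood
      have hXne : X.Nonempty := by
        apply nonempty_of_ws (wt := wt)
        by_contra hcon
        have := ws_nonneg wt (nb G X ∩ (D j \ P.biUnion (Xs j)))
        nlinarith
      set Xs' : ℤ → ℤ → Finset V := fun a b => if a = i ∧ b = j then Xs i j ∪ X else Xs a b
        with hXs'
      have hij' : Xs' i j = Xs i j ∪ X := by simp [hXs']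
      have hother : ∀ a b, ¬ (a = i ∧ b = j) → Xs' a b = Xs a b := by
        intro a b hab; simp only [hXs']; rw [if_neg hab]
      have hsub : ∀ a b, Xs a b ⊆ Xs' a b := by
        intro a b
        by_cases hab : a = i ∧ b = j
        · rw [hab.1, hab.2, hij']; exact Finset.subset_union_left
        · rw [hother a b hab]
      have hU : ∀ a, D a \ P.biUnion (Xs' a) ⊆ D a \ P.biUnion (Xs a) := fun a =>
        Finset.sdiff_subset_sdiff le_rfl (Finset.biUnion_mono (fun b _ => hsub a b))
      have hDj : D j \ P.biUnion (Xs' j) = D j \ P.biUnion (Xs j) := by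
        congr 1
        apply Finset.biUnion_congr rfl
        intro b hb
        exact hother j b (fun h => hij h.1.symm)
      have hdisj : Disjoint (Xs i j) X := by
        rw [Finset.disjoint_left]
        intro v hv hvX
        exact (Finset.mem_sdiff.1 (hX hvX)).2 (Finset.mem_biUnion.2 ⟨j, hj, hv⟩)
      have hwX : ws wt (Xs' i j) = ws wt (Xs i j) + ws wt X := by
        rw [hij', ws_union wt hdisj]
      have hcovle : ws wt (nb G (Xs' i j) ∩ (D j \ P.biUnion (Xs j))) ≤ τ * ws wt (Xs' i j) := by
        rw [hwX, hij', nb_union, Finset.union_inter_distrib_right]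
        have := ws_union_le wt (nb G (Xs i j) ∩ (D j \ P.biUnion (Xs j)))
          (nb G X ∩ (D j \ P.biUnion (Xs j)))
        have := (hXs i hi j hj).2.2 hij
        linarith
      have hXs'D : Xs' i j ⊆ D i := by
        rw [hij']
        exact Finset.union_subset (hXs i hi j hj).2.1 (hX.trans Finset.sdiff_subset)
      have hlt : ws wt (Xs' i j) < δ := by
        by_contra hcon
        push Not at hcon
        have h1 := E.cover (hP hi) (hP hj) hij (hXs'D.trans (hD i hi))
          (C := D j \ P.biUnion (Xs j)) (Finset.sdiff_subset.trans (hD j hj)) hcon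
        have h2 := ws_inter_sdiff wt (D j \ P.biUnion (Xs j)) (nb G (Xs' i j))
        rw [Finset.inter_comm] at h2
        have h3 := hbig j hj
        have h4 := (hXs i hi j hj).1
        have h5 : τ * ws wt (Xs' i j) ≤ τ * (2 * δ) := by
          apply mul_le_mul_of_nonneg_left _ hτ0.le
          linarith
        nlinarith
      refine ih _ ?_ Xs' ?_ rfl
      · rw [← hn]
        apply Finset.sum_lt_sum
        · intro a ha; exact Finset.card_le_card (hU a)
        · refine ⟨i, hi, Finset.card_lt_card ?_⟩
          refine (Finset.ssubset_iff_subset_ne).2 ⟨hU i, fun heq => ?_⟩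
          obtain ⟨x, hx⟩ := hXne
          have h1 := hX hx
          rw [← heq, Finset.mem_sdiff] at h1
          exact h1.2 (Finset.mem_biUnion.2 ⟨j, hj, by rw [hij']; exact Finset.mem_union_right _ hx⟩)
      · intro a ha b hb
        by_cases hab : a = i ∧ b = j
        · obtain ⟨rfl, rfl⟩ := hab
          exact ⟨hlt, hXs'D, fun _ => by rw [hDj]; exact hcovle⟩
        · rw [hother a b hab]
          refine ⟨(hXs a ha b hb).1, (hXs a ha b hb).2.1, fun hne => ?_⟩
          exact (ws_mono wt (Finset.inter_subset_inter_left (hU b))).trans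
            ((hXs a ha b hb).2.2 hne)
  refine key _ (fun _ _ => ∅) ?_ rfl
  intro i _ j _
  refine ⟨by rw [ws_empty]; exact hδ, Finset.empty_subset _, fun _ => ?_⟩
  rw [nb_empty, Finset.empty_inter, ws_empty, mul_zero]

end Basics

section Growth
open Classical
variable {V : Type} [Fintype V]
variable {G : SimpleGraph V} {wt : V → NNReal} {I : Finset ℤ} {A : ℤ → Finset V}
    {lam γ δ ω : ℝ}

/-- levelling conditions (without disjointness) -/
def Lev (G : SimpleGraph V) (M : ℕ → Finset V) (b : ℕ) : Prop :=
  (∀ i < b, M (i + 1) ⊆ nb G (M i)) ∧ ∀ i j, i + 2 ≤ j → j ≤ b → ant G (M i) (M j)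

/-- outcome of growth -/
def GrowOut (G : SimpleGraph V) (wt : V → NNReal) (P Q : Finset ℤ) (B C : ℤ → Finset V) (v : V)
    (T n : ℕ) (ε : ℝ) : Prop :=
  ∃ (b : ℕ) (M : ℕ → Finset V) (q : ℕ → ℤ) (Q' : Finset ℤ) (C' : ℤ → Finset V),
    1 ≤ b ∧ b ≤ T ∧ M 0 = {v} ∧ Lev G M b ∧
    (∀ s, 1 ≤ s → s ≤ b → q s ∈ P ∧ M s ⊆ B (q s)) ∧
    (∀ s, 1 ≤ s → s ≤ b → ∀ s', 1 ≤ s' → s' ≤ b → q s = q s' → s = s') ∧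
    Q' ⊆ Q ∧ n ≤ Q'.card ∧ ∀ j ∈ Q', C' j ⊆ C j ∧ C' j ⊆ nb G (M b) ∧
      (∀ s < b, ant G (M s) (C' j)) ∧ ε ≤ ws wt (C' j)

lemma growth_ind (E : Env G wt I A lam γ δ ω) (P Q : Finset ℤ) (hP : P ⊆ I) (hQ : Q ⊆ I)
    (hPQ : Disjoint P Q) (B C : ℤ → Finset V) (hBA : ∀ j ∈ P, B j ⊆ A j)
    (hCA : ∀ j ∈ Q, C j ⊆ A j) (τ κ ε : ℝ) (T n : ℕ) (hτ : 4 ≤ τ) (hn : 1 ≤ n)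
    (hcore : ∀ i ∈ P, ∀ j ∈ P, i ≠ j → ∀ X ⊆ B i, ws wt X < δ →
      τ * ws wt X ≤ ws wt (nb G X ∩ B j))
    (hκ : ∀ j ∈ Q, κ ≤ ws wt (C j)) (hPT : T + 1 ≤ P.card) (v : V)
    (hε : 0 ≤ ε) (hγε : γ + (T + 1) * ε ≤ κ) (r : ℕ) :
    ∀ (i : ℕ) (M : ℕ → Finset V) (q : ℕ → ℤ) (Q' : Finset ℤ), i + r = T → 1 ≤ i →
      M 0 = {v} → Lev G M i → (∀ s, 1 ≤ s → s ≤ i → q s ∈ P ∧ M s ⊆ B (q s)) →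
      (∀ s, 1 ≤ s → s ≤ i → ∀ s', 1 ≤ s' → s' ≤ i → q s = q s' → s = s') →
      Q' ⊆ Q → 2 ^ (r + 1) * n ≤ Q'.card →
      (∀ j ∈ Q', ws wt (C j ∩ nb G ((Finset.range i).biUnion M)) ≤ i * ε) →
      (∀ j ∈ P, (∀ s, 1 ≤ s → s ≤ i → q s ≠ j) →
        ws wt (nb G ((Finset.range i).biUnion M) ∩ B j) ≤ 2 * ws wt (M i)) →
      δ ≤ (τ / 2) ^ r * ws wt (M i) → 
      GrowOut G wt P Q B C v T n ε := by
  induction r with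
  | zero =>
    intro i M q Q' hiT hi hM0 hlev hq hqinj hQ' hcard hcum hun hw
    have hMδ : δ ≤ ws wt (M i) := by simpa using hw
    refine ⟨i, M, q, Q', fun j => (C j ∩ nb G (M i)) \ nb G ((Finset.range i).biUnion M), hi,
      by omega, hM0, hlev, hq, hqinj, hQ', by omega, ?_⟩
    intro j hj
    refine ⟨Finset.sdiff_subset.trans Finset.inter_subset_left,
      Finset.sdiff_subset.trans Finset.inter_subset_right, ?_, ?_⟩
    · intro s hs
      refine ant_mono (ant_sdiff (X := (Finset.range i).biUnion M)) ?_ le_rfl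
      exact Finset.subset_biUnion_of_mem M (Finset.mem_range.2 hs)
    · have hqi := hq i hi le_rfl
      have hne : q i ≠ j := fun h => Finset.disjoint_left.1 hPQ hqi.1 (h ▸ hQ' hj)
      have h1 := E.cover (hP hqi.1) (hQ (hQ' hj)) hne (hqi.2.trans (hBA _ hqi.1))
        (hCA j (hQ' hj)) hMδ
      have h2 := ws_inter_sdiff wt (C j) (nb G (M i))
      have h3 := hcum j hj
      have h4 := hκ j (hQ' hj)
      have h5 := ws_inter_sdiff wt (C j ∩ nb G (M i)) (nb G ((Finset.range i).biUnion M))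
      have h6 : ws wt (C j ∩ nb G (M i) ∩ nb G ((Finset.range i).biUnion M)) ≤
          ws wt (C j ∩ nb G ((Finset.range i).biUnion M)) :=
        ws_mono wt (Finset.inter_subset_inter_right Finset.inter_subset_left)
      have h7 : (i : ℝ) = T := by exact_mod_cast (by omega : i = T)
      rw [h7] at h3
      nlinarith
  | succ r ih =>
    intro i M q Q' hiT hi hM0 hlev hq hqinj hQ' hcard hcum hun hw
    set U := nb G ((Finset.range i).biUnion M) with hU
    set Qa := Q'.filter (fun j => ε ≤ ws wt ((C j ∩ nb G (M i)) \ U)) with hQa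
    set Qb := Q'.filter (fun j => ¬ ε ≤ ws wt ((C j ∩ nb G (M i)) \ U)) with hQb
    have hab : Qa.card + Qb.card = Q'.card := Finset.card_filter_add_card_filter_not _
    by_cases hbig : n ≤ Qa.card
    · refine ⟨i, M, q, Qa, fun j => (C j ∩ nb G (M i)) \ U, hi,
        by omega, hM0, hlev, hq, hqinj, (Finset.filter_subset _ _).trans hQ', hbig, ?_⟩
      intro j hj
      refine ⟨Finset.sdiff_subset.trans Finset.inter_subset_left,
        Finset.sdiff_subset.trans Finset.inter_subset_right, ?_, (Finset.mem_filter.1 hj).2⟩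
      intro s hs
      refine ant_mono (ant_sdiff (X := (Finset.range i).biUnion M)) ?_ le_rfl
      exact Finset.subset_biUnion_of_mem M (Finset.mem_range.2 hs)
    · push Not at hbig
      have hQbcard : 2 ^ (r + 1) * n ≤ Qb.card := by
        have h1 : 2 ^ (r + 1 + 1) * n = 2 ^ (r + 1) * n + 2 ^ (r + 1) * n := by ring
        have h2 : n ≤ 2 ^ (r + 1) * n := Nat.le_mul_of_pos_left _ (by positivity)
        omega
      have hQbQ : Qb ⊆ Q := (Finset.filter_subset _ _).trans hQ'
      have hcum' : ∀ j ∈ Qb, ws wt (C j ∩ nb G ((Finset.range (i + 1)).biUnion M)) ≤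
          ((i + 1 : ℕ) : ℝ) * ε := by
        intro j hj
        have hj' := Finset.mem_filter.1 hj
        have h1 : C j ∩ nb G ((Finset.range (i + 1)).biUnion M) ⊆
            (C j ∩ U) ∪ ((C j ∩ nb G (M i)) \ U) := by
          intro x hx
          rw [Finset.range_add_one, Finset.biUnion_insert, nb_union] at hx
          simp only [Finset.mem_inter, Finset.mem_union, Finset.mem_sdiff] at hx ⊢
          tauto
        have h2 := (ws_mono wt h1).trans (ws_union_le wt _ _)
        have h3 := hcum j hj'.1
        have h4 := hj'.2
        push Not at h4
        push_cast
        nlinarith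
      have hqi := hq i hi le_rfl
      have hMlt : ws wt (M i) < δ := by
        by_contra hcon
        push Not at hcon
        obtain ⟨j, hj⟩ : Qb.Nonempty := by
          rw [← Finset.card_pos]
          have : 0 < 2 ^ (r + 1) * n := by positivity
          omega
        have hne : q i ≠ j := fun h => Finset.disjoint_left.1 hPQ hqi.1 (h ▸ hQbQ hj)
        have h1 := E.cover (hP hqi.1) (hQ (hQbQ hj)) hne (hqi.2.trans (hBA _ hqi.1))
          (hCA j (hQbQ hj)) hcon
        have h2 := ws_inter_sdiff wt (C j) (nb G (M i))
        have h3 := hcum' j hj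
        have h4 := hκ j (hQbQ hj)
        have h5 : ws wt (C j ∩ nb G (M i)) ≤
            ws wt (C j ∩ nb G ((Finset.range (i + 1)).biUnion M)) :=
          ws_mono wt (Finset.inter_subset_inter_left (nb_mono
            (Finset.subset_biUnion_of_mem M (Finset.mem_range.2 (Nat.lt_succ_self i)))))
        have h6 : ((i + 1 : ℕ) : ℝ) ≤ T + 1 := by exact_mod_cast (by omega : i + 1 ≤ T + 1)
        nlinarith
      -- unused blocks
      set Pu := P.filter (fun j => ∀ s, 1 ≤ s → s ≤ i → q s ≠ j) with hPu
      have hmemPu : ∀ j, j ∈ Pu ↔ j ∈ P ∧ ∀ s, 1 ≤ s → s ≤ i → q s ≠ j := by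
        intro j; rw [hPu]; simp only [Finset.mem_filter]
      have hPune : Pu.Nonempty := by
        rw [← Finset.card_pos]
        have h1 : P ⊆ Pu ∪ (Finset.Icc 1 i).image q := by
          intro j hj
          rw [Finset.mem_union, Finset.mem_image]
          by_cases h : ∃ a ∈ Finset.Icc 1 i, q a = j
          · right; exact h
          · left
            push Not at h
            exact (hmemPu j).2 ⟨hj, fun s h1 h2 => h s (Finset.mem_Icc.2 ⟨h1, h2⟩)⟩
        have h2 := Finset.card_le_card h1
        have h3 := Finset.card_union_le Pu ((Finset.Icc 1 i).image q)
        have h4 : ((Finset.Icc 1 i).image q).card ≤ i :=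
          Finset.card_image_le.trans (by simp)
        omega
      obtain ⟨j0, hj0, hmax⟩ := Finset.exists_max_image Pu
        (fun j => ws wt ((B j ∩ nb G (M i)) \ U)) hPune
      have hj0' := (hmemPu j0).1 hj0
      set N := (B j0 ∩ nb G (M i)) \ U with hN
      have hNw : τ / 2 * ws wt (M i) ≤ ws wt N := by
        have h1 := hcore (q i) hqi.1 j0 hj0'.1 (hj0'.2 i hi le_rfl) (M i) hqi.2 hMlt
        have h2 := hun j0 hj0'.1 hj0'.2
        have h3 := ws_inter_sdiff wt (B j0 ∩ nb G (M i)) U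
        have h4 : ws wt (B j0 ∩ nb G (M i) ∩ U) ≤ ws wt (U ∩ B j0) := ws_mono wt (by
          intro x; simp only [Finset.mem_inter]; tauto)
        have h5 := ws_nonneg wt (M i)
        rw [Finset.inter_comm] at h1
        nlinarith
      have hNw2 : 2 * ws wt (M i) ≤ ws wt N := by
        have h5 := ws_nonneg wt (M i)
        nlinarith
      set M' : ℕ → Finset V := fun s => if s = i + 1 then N else M s with hM'
      set q' : ℕ → ℤ := fun s => if s = i + 1 then j0 else q s with hq'
      have hM'N : M' (i + 1) = N := by simp [hM']
      have hM's : ∀ s, s ≤ i → M' s = M s := by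
        intro s hs; simp only [hM']; rw [if_neg (by omega)]
      have hq's : ∀ s, s ≤ i → q' s = q s := by
        intro s hs; simp only [hq']; rw [if_neg (by omega)]
      have hq'N : q' (i + 1) = j0 := by simp [hq']
      have hU' : (Finset.range (i + 1)).biUnion M' = (Finset.range (i + 1)).biUnion M :=
        Finset.biUnion_congr rfl (fun s hs => hM's s (by
          have := Finset.mem_range.1 hs; omega))
      refine ih (i + 1) M' q' Qb (by omega) (by omega) (by rw [hM's 0 (by omega), hM0]) ?_ ?_ ?_
        hQbQ hQbcard (by rw [hU']; exact hcum') ?_ ?_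
      · constructor
        · intro s hs
          rcases Nat.lt_or_ge s i with h | h
          · rw [hM's s (by omega), hM's (s + 1) (by omega)]; exact hlev.1 s h
          · have : s = i := by omega
            subst this
            rw [hM'N, hM's s le_rfl]
            exact Finset.sdiff_subset.trans Finset.inter_subset_right
        · intro s t hst ht
          rcases Nat.lt_or_ge t (i + 1) with h | h
          · rw [hM's s (by omega), hM's t (by omega)]; exact hlev.2 s t hst (by omega)
          · have : t = i + 1 := by omega
            subst this
            rw [hM'N, hM's s (by omega)]
            refine ant_mono (ant_sdiff (X := (Finset.range i).biUnion M)) ?_ le_rfl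
            exact Finset.subset_biUnion_of_mem M (Finset.mem_range.2 (by omega))
      · intro s h1 h2
        rcases Nat.lt_or_ge s (i + 1) with h | h
        · rw [hM's s (by omega), hq's s (by omega)]; exact hq s h1 (by omega)
        · have : s = i + 1 := by omega
          subst this
          rw [hM'N, hq'N]
          exact ⟨hj0'.1, Finset.sdiff_subset.trans Finset.inter_subset_left⟩
      · intro s h1 h2 s' h1' h2' hss
        rcases Nat.lt_or_ge s (i + 1) with h | h
        · rw [hq's s (by omega)] at hss
          rcases Nat.lt_or_ge s' (i + 1) with h' | h'
          · rw [hq's s' (by omega)] at hss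
            exact hqinj s h1 (by omega) s' h1' (by omega) hss
          · have h3 : s' = i + 1 := by omega
            rw [h3, hq'N] at hss
            exact absurd hss (hj0'.2 s h1 (by omega))
        · have h3 : s = i + 1 := by omega
          rw [h3, hq'N] at hss
          rcases Nat.lt_or_ge s' (i + 1) with h' | h'
          · rw [hq's s' (by omega)] at hss
            exact absurd hss.symm (hj0'.2 s' h1' (by omega))
          · omega
      · intro j hj hjun
        rw [hU', hM'N]
        have hjun' : ∀ s, 1 ≤ s → s ≤ i → q s ≠ j := by
          intro s h1 h2
          rw [← hq's s h2]
          exact hjun s h1 (by omega)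
        have h1 := hun j hj hjun'
        have h2 := hmax j ((hmemPu j).2 ⟨hj, hjun'⟩)
        have h3 : nb G ((Finset.range (i + 1)).biUnion M) ∩ B j ⊆
            (U ∩ B j) ∪ ((B j ∩ nb G (M i)) \ U) := by
          intro x hx
          rw [Finset.range_add_one, Finset.biUnion_insert, nb_union] at hx
          simp only [Finset.mem_inter, Finset.mem_union, Finset.mem_sdiff] at hx ⊢
          tauto
        have h4 := (ws_mono wt h3).trans (ws_union_le wt _ _)
        linarith
      · rw [hM'N]
        calc δ ≤ (τ / 2) ^ (r + 1) * ws wt (M i) := hw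
          _ = (τ / 2) ^ r * (τ / 2 * ws wt (M i)) := by ring
          _ ≤ (τ / 2) ^ r * ws wt N := mul_le_mul_of_nonneg_left hNw (by positivity)

lemma growth_lem (E : Env G wt I A lam γ δ ω) (P Q : Finset ℤ) (hP : P ⊆ I) (hQ : Q ⊆ I)
    (hPQ : Disjoint P Q) (B C : ℤ → Finset V) (hBA : ∀ j ∈ P, B j ⊆ A j)
    (hCA : ∀ j ∈ Q, C j ⊆ A j) (τ κ ε : ℝ) (T n : ℕ) (hτ : 4 ≤ τ) (hn : 1 ≤ n) (hT : 1 ≤ T)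
    (hcore : ∀ i ∈ P, ∀ j ∈ P, i ≠ j → ∀ X ⊆ B i, ws wt X < δ →
      τ * ws wt X ≤ ws wt (nb G X ∩ B j))
    (hκ : ∀ j ∈ Q, κ ≤ ws wt (C j)) (hPT : T + 1 ≤ P.card) (v : V) (q0 : ℤ)
    (hq0 : q0 ∈ I) (hv : v ∈ A q0) (hq0Q : q0 ∉ Q)
    (hvB : ∃ j ∈ P, (nb G {v} ∩ B j).Nonempty)
    (hlam : lam ≤ ε) (hγε : γ + (T + 1) * ε ≤ κ) (hcard : 2 ^ T * n ≤ Q.card)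
    (hω : δ ≤ (τ / 2) ^ (T - 1) * ω) :
    GrowOut G wt P Q B C v T n ε := by
  obtain ⟨j1, hj1, hne⟩ := hvB
  obtain ⟨j0, hj0, hmax⟩ := Finset.exists_max_image P
        (fun j => ws wt (nb G {v} ∩ B j)) ⟨j1, hj1⟩
  have hwN : ω ≤ ws wt (nb G {v} ∩ B j0) := (E.ws_pos hne).trans (hmax j1 hj1)
  have hr1 : (Finset.range 1).biUnion (fun s => if s = 0 then ({v} : Finset V) else nb G {v} ∩ B j0)
      = {v} := by simp
  refine growth_ind E P Q hP hQ hPQ B C hBA hCA τ κ ε T n hτ hn hcore hκ hPT v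
    (E.lpos.le.trans hlam) hγε (T - 1) 1
    (fun s => if s = 0 then {v} else nb G {v} ∩ B j0) (fun _ => j0) Q (by omega) le_rfl (by simp)
    ?_ ?_ ?_ le_rfl ?_ ?_ ?_ ?_
  · constructor
    · intro i hi
      have : i = 0 := by omega
      subst this
      simp
    · intro i j hij hj; omega
  · intro s h1 h2
    refine ⟨hj0, ?_⟩
    simp only [show s ≠ 0 by omega, if_false]
    exact Finset.inter_subset_right
  · intro s h1 h2 s' h1' h2' _; omega
  · rw [show T - 1 + 1 = T by omega]; exact hcard
  · intro j hj
    rw [hr1, Finset.inter_comm]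
    have hne : q0 ≠ j := fun h => hq0Q (h ▸ hj)
    have := E.link' hq0 (hQ hj) hne hv (hCA j hj)
    simpa using this.trans hlam
  · intro j hj _
    rw [hr1]
    have h1 := hmax j hj
    have h2 := ws_nonneg wt (nb G {v} ∩ B j0)
    simp only [one_ne_zero, if_false]
    linarith
  · simp only [one_ne_zero, if_false]
    exact hω.trans (mul_le_mul_of_nonneg_left hwN (by positivity))

end Growth

section Desc
open Classical
variable {V : Type} [Fintype V]
variable {G : SimpleGraph V} {wt : V → NNReal} {I : Finset ℤ} {A : ℤ → Finset V}
    {lam γ δ ω : ℝ}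

/-- vertices of level `s` reachable downwards from `x` starting in level `j` -/
def reach (G : SimpleGraph V) (Z : ℕ → Finset V) (x : V) (j : ℕ) : ℕ → Finset V
  | 0 => ∅
  | s + 1 => if s + 1 = j then nb G {x} ∩ Z (s + 1) else nb G (reach G Z x j s) ∩ Z (s + 1)

lemma reach_sub (Z : ℕ → Finset V) (x : V) (j s : ℕ) : reach G Z x j s ⊆ Z s := by
  cases s with
  | zero => simp [reach]
  | succ s =>
    rw [reach]
    split_ifs
    · exact Finset.inter_subset_right
    · exact Finset.inter_subset_right

lemma reach_empty (Z : ℕ → Finset V) (x : V) (j s : ℕ) (h : s < j) : reach G Z x j s = ∅ := by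
  induction s with
  | zero => simp [reach]
  | succ s ih =>
    rw [reach, if_neg (by omega), ih (by omega), nb_empty, Finset.empty_inter]

lemma reach_step (Z : ℕ → Finset V) (x : V) (j s : ℕ) {u u' : V} (hu : u ∈ reach G Z x j s)
    (hu' : u' ∈ Z (s + 1)) (h : G.Adj u u') : u' ∈ reach G Z x j (s + 1) := by
  have hs : ¬ s < j := by
    intro hs
    rw [reach_empty Z x j s hs] at hu
    simp at hu
  rw [reach, if_neg (by omega), Finset.mem_inter, mem_nb]
  exact ⟨⟨u, hu, h⟩, hu'⟩

lemma reach_self (Z : ℕ → Finset V) (x : V) (j : ℕ) (hj : 1 ≤ j) :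
    reach G Z x j j = nb G {x} ∩ Z j := by
  obtain ⟨s, rfl⟩ : ∃ s, j = s + 1 := ⟨j - 1, by omega⟩
  rw [reach, if_pos rfl]

/-- the cleaned reach sets -/
def reachC (G : SimpleGraph V) (Z : ℕ → Finset V) (y : ℕ → V) (a t : ℕ) (p : ℕ × ℕ) (s : ℕ) :
    Finset V :=
  reach G Z (y p.1) p.2 s \ ((Finset.range (a + 1) ×ˢ Finset.Icc 1 t).filter
    (fun p' => p.1 < p'.1 ∨ (p.1 = p'.1 ∧ p.2 < p'.2))).biUnion
      (fun p' => reach G Z (y p'.1) p'.2 s)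

lemma mem_reachC {Z : ℕ → Finset V} {y : ℕ → V} {a t : ℕ} {p : ℕ × ℕ} {s : ℕ} {u : V} :
    u ∈ reachC G Z y a t p s ↔ u ∈ reach G Z (y p.1) p.2 s ∧
      ∀ i j, i ≤ a → 1 ≤ j → j ≤ t → (p.1 < i ∨ (p.1 = i ∧ p.2 < j)) →
        u ∉ reach G Z (y i) j s := by
  unfold reachC
  rw [Finset.mem_sdiff, Finset.mem_biUnion]
  constructor
  · rintro ⟨h1, h2⟩
    refine ⟨h1, fun i j hi hj1 hj2 hb hu => h2 ⟨(i, j), ?_, hu⟩⟩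
    simp only [Finset.mem_filter, Finset.mem_product, Finset.mem_range, Finset.mem_Icc]
    exact ⟨⟨by omega, hj1, hj2⟩, hb⟩
  · rintro ⟨h1, h2⟩
    refine ⟨h1, ?_⟩
    rintro ⟨⟨i, j⟩, hp, hu⟩
    simp only [Finset.mem_filter, Finset.mem_product, Finset.mem_range, Finset.mem_Icc] at hp
    exact h2 i j (by omega) hp.1.2.1 hp.1.2.2 hp.2 hu

lemma desc_lem (Z : ℕ → Finset V) (t : ℕ) (ht : 1 ≤ t) (hZ : Lev G Z t) (z : V) (hz : Z 0 = {z})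
    (y : ℕ → V) (a : ℕ) (hy0 : y 0 = z) (hyadj : ∀ i < a, G.Adj (y i) (y (i + 1)))
    (hynon : ∀ i j, i + 2 ≤ j → j ≤ a → ¬ G.Adj (y i) (y j)) (Q : Finset ℤ)
    (C : ℤ → Finset V) (hcov : ∀ q ∈ Q, C q ⊆ nb G (Z t))
    (hant : ∀ q ∈ Q, ∀ s < t, ant G (Z s) (C q)) (hyC : ∀ q ∈ Q, ∀ i < a, ant G {y i} (C q))
    (hya : ∀ q ∈ Q, ws wt (nb G {y a} ∩ C q) ≤ ws wt (C q) / (2 * ((a + 1) * t : ℕ)))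
    (qx qz : ℕ → ℤ) (hqx : ∀ i ≤ a, ∀ i' ≤ a, qx i = qx i' → i = i')
    (hqz : ∀ j, 1 ≤ j → j ≤ t → ∀ j', 1 ≤ j' → j' ≤ t → qz j = qz j' → j = j')
    (hqxz : ∀ i ≤ a, ∀ j, 1 ≤ j → j ≤ t → qx i ≠ qz j) :
    ∃ (h : ℕ) (L : ℕ → Finset V) (ql : ℕ → ℤ) (Q' : Finset ℤ) (C' : ℤ → Finset V),
      1 ≤ h ∧ h ≤ a + t ∧ L 0 = {y a} ∧ ql 0 = qx a ∧ Lev G L h ∧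
      (∀ s, 1 ≤ s → s ≤ h → (∃ i < a, L s = {y i} ∧ ql s = qx i) ∨
        (∃ j, 1 ≤ j ∧ j ≤ t ∧ L s ⊆ Z j ∧ ql s = qz j)) ∧
      (∀ s ≤ h, ∀ s' ≤ h, ql s = ql s' → s = s') ∧ Q' ⊆ Q ∧
      Q.card ≤ (a + 1) * t * Q'.card ∧
      ∀ q ∈ Q', C' q ⊆ C q ∧ C' q ⊆ nb G (L h) ∧ (∀ s < h, ant G (L s) (C' q)) ∧
        ws wt (C q) / (2 * ((a + 1) * t : ℕ)) ≤ ws wt (C' q) := by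
  set pairs := Finset.range (a + 1) ×ˢ Finset.Icc 1 t with hpairs
  have hpc : pairs.card = (a + 1) * t := by simp [hpairs]
  have hppos : 0 < (a + 1) * t := by positivity
  have hmemp : ∀ p : ℕ × ℕ, p ∈ pairs ↔ p.1 ≤ a ∧ 1 ≤ p.2 ∧ p.2 ≤ t := by
    intro p
    simp only [hpairs, Finset.mem_product, Finset.mem_range, Finset.mem_Icc]
    omega
  -- every vertex of the last level belongs to some class
  have hfull : ∀ s, 1 ≤ s → s ≤ t → Z s ⊆ reach G Z (y 0) 1 s := by
    intro s hs
    induction s, hs using Nat.le_induction with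
    | base =>
      intro _
      rw [reach_self _ _ _ le_rfl, hy0, ← hz]
      intro u hu
      exact Finset.mem_inter.2 ⟨hZ.1 0 (by omega) hu, hu⟩
    | succ s hs ih =>
      intro hst u hu
      obtain ⟨x, hx, hxu⟩ := mem_nb.1 (hZ.1 s (by omega) hu)
      exact reach_step Z _ _ _ (ih (by omega) hx) hu hxu
  have hclass : ∀ u ∈ Z t, ∃ p ∈ pairs, u ∈ reachC G Z y a t p t := by
    intro u hu
    obtain ⟨p, hp, hmax⟩ := Finset.exists_max_image
      (pairs.filter (fun p => u ∈ reach G Z (y p.1) p.2 t)) (fun p => p.1 * (t + 1) + p.2)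
      ⟨(0, 1), Finset.mem_filter.2 ⟨(hmemp _).2 ⟨by simp, le_rfl, ht⟩, hfull t ht le_rfl hu⟩⟩
    rw [Finset.mem_filter] at hp
    refine ⟨p, hp.1, mem_reachC.2 ⟨hp.2, ?_⟩⟩
    intro i j hi hj1 hj2 hb hu'
    have h1 := hmax (i, j) (Finset.mem_filter.2 ⟨(hmemp _).2 ⟨hi, hj1, hj2⟩, hu'⟩)
    simp only at h1
    have h2 := (hmemp p).1 hp.1
    rcases hb with hb | ⟨hb1, hb2⟩
    · nlinarith
    · rw [hb1] at h1; omega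
  have hpick : ∀ q ∈ Q, ∃ p ∈ pairs, ws wt (C q) / ((a + 1) * t : ℕ) ≤
      ws wt (C q ∩ nb G (reachC G Z y a t p t)) := by
    intro q hq
    by_contra hcon
    push Not at hcon
    have h1 : C q ⊆ pairs.biUnion (fun p => C q ∩ nb G (reachC G Z y a t p t)) := by
      intro v hv
      obtain ⟨u, hu, huv⟩ := mem_nb.1 (hcov q hq hv)
      obtain ⟨p, hp, hup⟩ := hclass u hu
      exact Finset.mem_biUnion.2 ⟨p, hp, Finset.mem_inter.2 ⟨hv, mem_nb.2 ⟨u, hup, huv⟩⟩⟩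
    have h2 := (ws_mono wt h1).trans (ws_biUnion_le wt _ _)
    have h3 : ∑ p ∈ pairs, ws wt (C q ∩ nb G (reachC G Z y a t p t)) <
        ∑ p ∈ pairs, ws wt (C q) / ((a + 1) * t : ℕ) :=
      Finset.sum_lt_sum_of_nonempty (Finset.card_pos.1 (by rw [hpc]; exact hppos)) hcon
    rw [Finset.sum_const, hpc, nsmul_eq_mul, mul_div_cancel₀ _ (by positivity)] at h3
    linarith
  choose! f hf1 hf2 using hpick
  obtain ⟨p, hp, hpcard⟩ : ∃ p ∈ pairs, Q.card ≤ (a + 1) * t * (Q.filter (fun q => f q = p)).card := by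
    by_contra hcon
    push Not at hcon
    have h1 := Finset.card_eq_sum_card_fiberwise (f := f) (s := Q) (t := pairs) hf1
    have h2 : ∑ p ∈ pairs, (a + 1) * t * (Q.filter (fun q => f q = p)).card <
        ∑ p ∈ pairs, Q.card :=
      Finset.sum_lt_sum_of_nonempty (Finset.card_pos.1 (by rw [hpc]; exact hppos)) hcon
    rw [← Finset.mul_sum, Finset.sum_const, hpc, ← h1, smul_eq_mul] at h2
    exact lt_irrefl _ h2
  obtain ⟨i, j⟩ := p
  obtain ⟨hi, hj1, hj2⟩ := (hmemp _).1 hp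
  simp only at hi hj1 hj2
  set R := reachC G Z y a t (i, j) with hR
  have hRZ : ∀ s, R s ⊆ Z s := fun s => Finset.sdiff_subset.trans (reach_sub _ _ _ _)
  have hRstep : ∀ s, j ≤ s → s < t → R (s + 1) ⊆ nb G (R s) := by
    intro s hs hst u hu
    obtain ⟨hu1, hu2⟩ := mem_reachC.1 hu
    have huZ := hRZ _ hu
    rw [reach, if_neg (by simp only; omega), Finset.mem_inter, mem_nb] at hu1
    obtain ⟨⟨x, hx, hxu⟩, _⟩ := hu1
    refine mem_nb.2 ⟨x, mem_reachC.2 ⟨hx, ?_⟩, hxu⟩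
    intro i' j' h1 h2 h3 h4 h5
    exact hu2 i' j' h1 h2 h3 h4 (reach_step Z _ _ _ h5 huZ hxu)
  have hyR : ∀ i' s, i ≤ i' → i' ≤ a → j ≤ s → s ≤ t → (i < i' ∨ j < s) → ant G {y i'} (R s) := by
    intro i' s h1 h2 h3 h4 h5 x hx u hu hxu
    rw [Finset.mem_singleton] at hx
    subst hx
    refine (mem_reachC.1 hu).2 i' s h2 (by omega) h4 (by simp only; omega) ?_
    rw [reach_self _ _ _ (by omega), Finset.mem_inter, mem_nb]
    exact ⟨⟨y i', by simp, hxu⟩, hRZ s hu⟩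
  set e := a - i with he
  refine ⟨e + 1 + (t - j), fun s => if s ≤ e then {y (a - s)} else R (s - e - 1 + j),
    fun s => if s ≤ e then qx (a - s) else qz (s - e - 1 + j), Q.filter (fun q => f q = (i, j)),
    fun q => (C q ∩ nb G (R t)) \ nb G {y a}, by omega, by omega, by simp, by simp, ?_, ?_, ?_,
    Finset.filter_subset _ _, hpcard, ?_⟩
  · constructor
    · intro s hs
      simp only
      rcases Nat.lt_trichotomy s e with h | h | h
      · rw [if_pos (by omega), if_pos (by omega)]
        intro u hu
        rw [Finset.mem_singleton] at hu
        subst hu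
        refine mem_nb.2 ⟨y (a - s), by simp, ?_⟩
        have := hyadj (a - (s + 1)) (by omega)
        rw [show a - (s + 1) + 1 = a - s by omega] at this
        exact this.symm
      · rw [if_pos (show s ≤ e by omega), if_neg (show ¬ s + 1 ≤ e by omega),
          show s + 1 - e - 1 + j = j by omega,
          show a - s = i by omega]
        intro u hu
        have := (mem_reachC.1 hu).1
        rw [reach_self _ _ _ hj1] at this
        exact (Finset.mem_inter.1 this).1
      · rw [if_neg (by omega), if_neg (by omega),
          show s + 1 - e - 1 + j = (s - e - 1 + j) + 1 by omega]
        exact hRstep _ (by omega) (by omega)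
    · intro s s' hss hs'
      simp only
      by_cases h' : s' ≤ e
      · rw [if_pos h', if_pos (by omega)]
        intro x hx u hu hxu
        rw [Finset.mem_singleton] at hx hu
        subst hx; subst hu
        exact hynon (a - s') (a - s) (by omega) (by omega) hxu.symm
      · rw [if_neg h']
        by_cases h : s ≤ e
        · rw [if_pos h]
          exact hyR _ _ (by omega) (by omega) (by omega) (by omega) (by omega)
        · rw [if_neg h]
          exact ant_mono (hZ.2 (s - e - 1 + j) (s' - e - 1 + j) (by omega) (by omega))
            (hRZ _) (hRZ _)
  · intro s h1 h2
    by_cases h : s ≤ e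
    · left
      exact ⟨a - s, by omega, by simp only [if_pos h], by simp only [if_pos h]⟩
    · right
      exact ⟨s - e - 1 + j, by omega, by omega, by simp only [if_neg h]; exact hRZ _,
        by simp only [if_neg h]⟩
  · intro s hs s' hs' hss
    simp only at hss
    by_cases h : s ≤ e
    · rw [if_pos h] at hss
      by_cases h' : s' ≤ e
      · rw [if_pos h'] at hss
        have := hqx _ (by omega) _ (by omega) hss
        omega
      · rw [if_neg h'] at hss
        exact absurd hss (hqxz _ (by omega) _ (by omega) (by omega))
    · rw [if_neg h] at hss
      by_cases h' : s' ≤ e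
      · rw [if_pos h'] at hss
        exact absurd hss.symm (hqxz _ (by omega) _ (by omega) (by omega))
      · rw [if_neg h'] at hss
        have := hqz _ (by omega) (by omega) _ (by omega) (by omega) hss
        omega
  · intro q hq
    have hq' := Finset.mem_filter.1 hq
    refine ⟨Finset.sdiff_subset.trans Finset.inter_subset_left, ?_, ?_, ?_⟩
    · simp only
      rw [if_neg (show ¬ e + 1 + (t - j) ≤ e by omega),
        show e + 1 + (t - j) - e - 1 + j = t by omega]
      exact Finset.sdiff_subset.trans Finset.inter_subset_right
    · intro s hs
      simp only
      by_cases h : s ≤ e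
      · rw [if_pos h]
        rcases Nat.eq_zero_or_pos s with h0 | h0
        · subst h0
          rw [Nat.sub_zero]
          exact ant_sdiff
        · exact ant_mono (hyC q hq'.1 (a - s) (by omega)) le_rfl
            (Finset.sdiff_subset.trans Finset.inter_subset_left)
      · rw [if_neg h]
        exact ant_mono (hant q hq'.1 (s - e - 1 + j) (by omega)) (hRZ _)
            (Finset.sdiff_subset.trans Finset.inter_subset_left)
    · have h1 := hf2 q hq'.1
      rw [hq'.2] at h1
      have h2 := hya q hq'.1
      have h3 := ws_inter_sdiff wt (C q ∩ nb G (R t)) (nb G {y a})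
      have h4 : ws wt (C q ∩ nb G (R t) ∩ nb G {y a}) ≤ ws wt (nb G {y a} ∩ C q) :=
        ws_mono wt (by intro x; simp only [Finset.mem_inter]; tauto)
      have h5 : ws wt (C q) / (2 * ((a + 1) * t : ℕ)) = ws wt (C q) / ((a + 1) * t : ℕ) / 2 := by
        rw [div_div, mul_comm]
      linarith

lemma grade_lem (X : Finset V) (n : ℕ) : ∀ (Q : Finset ℤ) (C : ℤ → Finset V) (κ lam : ℝ),
    n ≤ Q.card → (∀ j ∈ Q, C j ⊆ nb G X) → (∀ j ∈ Q, κ ≤ ws wt (C j)) →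
    (∀ j ∈ Q, ∀ x ∈ X, ws wt (nb G {x} ∩ C j) ≤ lam) → lam ≤ κ / 4 ^ (n + 1) → 0 < κ →
    ∃ (idx : ℕ → ℤ) (C' Y : ℕ → Finset V), (∀ i < n, idx i ∈ Q) ∧
      (∀ i < n, ∀ j < n, idx i = idx j → i = j) ∧
      (∀ i < n, C' i ⊆ C (idx i) ∧ κ / 4 ^ n ≤ ws wt (C' i) ∧ Y i ⊆ X) ∧
      (∀ i < n, ∀ j < n, i ≤ j → C' j ⊆ nb G (Y i)) ∧
      (∀ i < n, ∀ j < n, j < i → ant G (Y i) (C' j)) := by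
  induction n with
  | zero =>
    intro Q C κ lam _ _ _ _ _ _
    exact ⟨fun _ => 0, fun _ => ∅, fun _ => ∅, by simp, by simp, by simp, by simp, by simp⟩
  | succ n ih =>
    intro Q C κ lam hn hcov hκ hl hlam hκ0
    have h4 : (4 : ℝ) ≤ 4 ^ (n + 1 + 1) := by
      calc (4 : ℝ) = 4 ^ 1 := by norm_num
        _ ≤ 4 ^ (n + 1 + 1) := pow_le_pow_right₀ (by norm_num) (by omega)
    obtain ⟨X', hX', E, hE, hEc, hE2, hE3⟩ := split_lem (wt := wt) (G := G) X Q C 1 (by omega) hcov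
      (by
        intro j hj x hx
        refine (hl j hj x hx).trans (hlam.trans ?_)
        have h5 : κ / 4 ^ (n + 1 + 1) ≤ κ / 4 :=
          div_le_div_of_nonneg_left hκ0.le (by norm_num) h4
        have := hκ j hj
        linarith)
    obtain ⟨e0, rfl⟩ := Finset.card_eq_one.1 hEc
    have he0 : e0 ∈ Q := hE (by simp)
    obtain ⟨idx, C', Y, h1, h2, h3, h4', h5⟩ := ih (Q \ {e0}) (fun j => C j \ nb G X') (κ / 4) lam
      (by rw [Finset.card_sdiff_of_subset hE, hEc]; omega)
      (by
        intro j hj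
        exact Finset.sdiff_subset.trans (hcov j (Finset.mem_sdiff.1 hj).1))
      (by
        intro j hj
        have := hE3 j hj
        have := hκ j (Finset.mem_sdiff.1 hj).1
        linarith)
      (by
        intro j hj x hx
        exact (ws_mono wt (Finset.inter_subset_inter_left Finset.sdiff_subset)).trans
          (hl j (Finset.mem_sdiff.1 hj).1 x hx))
      (by
        rw [div_div, ← pow_succ']; exact hlam)
      (by positivity)
    have hXant : ∀ j < n, ant G X' (C' j) := by
      intro j hj
      exact ant_mono ant_sdiff le_rfl (h3 j hj).1
    refine ⟨fun i => if i = n then e0 else idx i, fun i => if i = n then C e0 ∩ nb G X' else C' i,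
      fun i => if i = n then X' else Y i ∪ X', ?_, ?_, ?_, ?_, ?_⟩
    · intro i hi
      simp only
      split_ifs with h
      · exact he0
      · exact (Finset.mem_sdiff.1 (h1 i (by omega))).1
    · intro i hi j hj hij
      simp only at hij
      split_ifs at hij with ha hb hb
      · omega
      · exact absurd (h1 j (by omega)) (by rw [← hij]; simp)
      · exact absurd (h1 i (by omega)) (by rw [hij]; simp)
      · exact h2 i (by omega) j (by omega) hij
    · intro i hi
      simp only
      split_ifs with h
      · refine ⟨Finset.inter_subset_left, ?_, hX'⟩
        have h6 := hE2 e0 (by simp)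
        have h7 := hκ e0 he0
        have h8 : κ / 4 ^ (n + 1) ≤ κ / 2 := by
          apply div_le_div_of_nonneg_left hκ0.le (by norm_num)
          calc (2 : ℝ) ≤ 4 ^ 1 := by norm_num
            _ ≤ 4 ^ (n + 1) := pow_le_pow_right₀ (by norm_num) (by omega)
        linarith
      · obtain ⟨h6, h7, h8⟩ := h3 i (by omega)
        refine ⟨h6.trans Finset.sdiff_subset, ?_, Finset.union_subset h8 hX'⟩
        rw [div_div, ← pow_succ'] at h7
        exact h7
    · intro i hi j hj hij
      simp only
      split_ifs with ha hb hb
      · exact Finset.inter_subset_right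
      · exact Finset.inter_subset_right.trans (nb_mono Finset.subset_union_right)
      · omega
      · exact (h4' i (by omega) j (by omega) hij).trans (nb_mono Finset.subset_union_left)
    · intro i hi j hj hij
      simp only
      rw [if_neg (show j ≠ n by omega)]
      split_ifs with ha
      · exact hXant j (by omega)
      · intro x hx
        rcases Finset.mem_union.1 hx with hx | hx
        · exact h5 i (by omega) j (by omega) hij x hx
        · exact hXant j (by omega) x hx

end Desc

section Pick
open Classical
variable {V : Type} [Fintype V]
variable {G : SimpleGraph V} {wt : V → NNReal} {I : Finset ℤ} {A : ℤ → Finset V}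

lemma pick_lem (X B : Finset V) (hcov : B ⊆ nb G X) (F : Finset (Finset V))
    (hF : ∀ D ∈ F, 0 < ws wt D) (lam κ ρ lam1 : ℝ)
    (hlink : ∀ D ∈ F, ∀ v ∈ D, ws wt (nb G {v} ∩ B) ≤ lam) (hκB : κ ≤ ws wt B) (hκ : 0 < κ)
    (hρ : 0 < ρ) (hρκ : ρ ≤ κ / 4) (hlam : 0 < lam) (hlam1 : 0 < lam1)
    (h16 : 16 * lam * (F.card + 1) ≤ κ * lam1) :
    ∃ S ⊆ X, ∃ P ⊆ B, P ⊆ nb G S ∧ ρ ≤ ws wt P ∧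
      ((S.card : ℝ) - 1) * κ ≤ 4 * X.card * ρ ∧
      ∀ D ∈ F, ws wt (D.filter (fun v => lam1 * ws wt P < ws wt (nb G {v} ∩ P))) ≤
        ws wt D / 4 := by
  have hex : ∀ u ∈ B, ∃ x ∈ X, G.Adj x u := fun u hu => mem_nb.1 (hcov hu)
  choose! φ hφ1 hφ2 using hex
  set fib : V → Finset V := fun x => B.filter (fun u => φ u = x) with hfib
  set Pof : Finset V → Finset V := fun S => B.filter (fun u => φ u ∈ S) with hPof
  have hsumT : ∀ T S : Finset V, ∑ x ∈ S, ws wt (T ∩ fib x) = ws wt (T ∩ Pof S) := by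
    intro T S
    have h := Finset.sum_fiberwise_of_maps_to (s := T ∩ Pof S) (t := S) (g := φ)
      (fun u hu => by
        simp only [hPof, Finset.mem_inter, Finset.mem_filter] at hu
        exact hu.2.2) (fun u => (wt u : ℝ))
    unfold ws
    rw [← h]
    apply Finset.sum_congr rfl
    intro x hx
    apply Finset.sum_congr _ (fun _ _ => rfl)
    ext u
    simp only [hPof, hfib, Finset.mem_inter, Finset.mem_filter]
    constructor
    · rintro ⟨h1, h2, h3⟩
      exact ⟨⟨h1, h2, h3 ▸ hx⟩, h3⟩
    · rintro ⟨⟨h1, h2, _⟩, h3⟩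
      exact ⟨h1, h2, h3⟩
  have hsum1 : ∀ S : Finset V, ∑ x ∈ S, ws wt (fib x) = ws wt (Pof S) := by
    intro S
    have := hsumT Finset.univ S
    simpa using this
  have hPX : Pof X = B := by
    simp only [hPof]
    exact Finset.filter_true_of_mem hφ1
  set a : V → ℝ := fun x => ws wt (fib x) with ha
  set l : V → ℝ := fun x => ∑ D ∈ F, (1 / ws wt D) * ∑ d ∈ D, (wt d : ℝ) * ws wt (nb G {d} ∩ fib x)
    with hl
  have hl0 : ∀ x, 0 ≤ l x := by
    intro x
    apply Finset.sum_nonneg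
    intro D hD
    apply mul_nonneg (by have := hF D hD; positivity)
    apply Finset.sum_nonneg
    intro d _
    exact mul_nonneg (wt d).2 (ws_nonneg wt _)
  have hlS : ∀ S : Finset V, ∑ x ∈ S, l x = ∑ D ∈ F, (1 / ws wt D) *
      ∑ d ∈ D, (wt d : ℝ) * ws wt (nb G {d} ∩ Pof S) := by
    intro S
    simp only [hl]
    rw [Finset.sum_comm]
    apply Finset.sum_congr rfl
    intro D _
    rw [← Finset.mul_sum, Finset.sum_comm]
    congr 1
    apply Finset.sum_congr rfl
    intro d _
    rw [← Finset.mul_sum, hsumT]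
  have hlX : ∑ x ∈ X, l x ≤ F.card * lam := by
    rw [hlS, hPX]
    calc _ ≤ ∑ D ∈ F, lam := by
          apply Finset.sum_le_sum
          intro D hD
          have h1 : ∑ d ∈ D, (wt d : ℝ) * ws wt (nb G {d} ∩ B) ≤ ws wt D * lam := by
            unfold ws
            rw [Finset.sum_mul]
            apply Finset.sum_le_sum
            intro d hd
            exact mul_le_mul_of_nonneg_left (hlink D hD d hd) (wt d).2
          have h2 := hF D hD
          rw [one_div, inv_mul_le_iff₀ h2]
          exact h1
      _ = F.card * lam := by simp
  set c : ℝ := 4 * (F.card + 1) * lam / κ with hc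
  have hc0 : 0 < c := by positivity
  have hXne : X.Nonempty := by
    obtain ⟨u, hu⟩ : B.Nonempty := nonempty_of_ws (wt := wt) (by linarith)
    exact ⟨φ u, hφ1 u hu⟩
  have hXc : (0 : ℝ) < X.card := by exact_mod_cast Finset.card_pos.2 hXne
  set good := X.filter (fun x => l x ≤ c * a x ∧ κ / (4 * X.card) ≤ a x) with hgood
  have hgoodsum : κ / 2 ≤ ∑ x ∈ good, a x := by
    have h1 : ∀ x ∈ X, a x ≤ (if l x ≤ c * a x ∧ κ / (4 * X.card) ≤ a x then a x else 0) +
        l x / c + κ / (4 * X.card) := by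
      intro x hx
      have h2 := hl0 x
      have h3 : 0 ≤ l x / c := by positivity
      have h4 : 0 ≤ κ / (4 * X.card) := by positivity
      split_ifs with h
      · linarith
      · rw [not_and_or] at h
        rcases h with h | h
        · push Not at h
          have : a x ≤ l x / c := by rw [le_div_iff₀ hc0]; linarith
          linarith
        · push Not at h
          linarith
    have h2 := Finset.sum_le_sum h1
    rw [Finset.sum_add_distrib, Finset.sum_add_distrib, ← Finset.sum_filter, ← Finset.sum_div,
      Finset.sum_const, nsmul_eq_mul] at h2
    have h3 : ∑ x ∈ X, a x = ws wt B := by rw [← hPX]; exact hsum1 X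
    have h4 : (X.card : ℝ) * (κ / (4 * X.card)) = κ / 4 := by field_simp
    have h5 : (∑ x ∈ X, l x) / c ≤ κ / 4 := by
      rw [div_le_iff₀ hc0]
      have : κ / 4 * c = (F.card + 1) * lam := by rw [hc]; field_simp
      rw [this]
      nlinarith
    rw [h3, h4] at h2
    linarith
  obtain ⟨S, hS, hSmin⟩ := Finset.exists_min_image
    (good.powerset.filter (fun S => ρ ≤ ∑ x ∈ S, a x)) (fun S => S.card)
    ⟨good, Finset.mem_filter.2 ⟨Finset.mem_powerset.2 le_rfl, by linarith⟩⟩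
  rw [Finset.mem_filter, Finset.mem_powerset] at hS
  obtain ⟨hSg, hSρ⟩ := hS
  have hwP : ws wt (Pof S) = ∑ x ∈ S, a x := (hsum1 S).symm
  have hP0 : 0 < ws wt (Pof S) := by rw [hwP]; linarith
  refine ⟨S, hSg.trans (Finset.filter_subset _ _), Pof S, Finset.filter_subset _ _, ?_, ?_, ?_, ?_⟩
  · intro u hu
    have := Finset.mem_filter.1 hu
    exact mem_nb.2 ⟨φ u, this.2, hφ2 u this.1⟩
  · rw [hwP]; exact hSρ
  · have hSne : S.Nonempty := by
      by_contra h
      rw [Finset.not_nonempty_iff_eq_empty] at h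
      rw [h, Finset.sum_empty] at hSρ
      linarith
    obtain ⟨x, hx⟩ := hSne
    have h1 : ∑ y ∈ S.erase x, a y < ρ := by
      by_contra hcon
      push Not at hcon
      have := hSmin (S.erase x) (Finset.mem_filter.2
        ⟨Finset.mem_powerset.2 ((Finset.erase_subset _ _).trans hSg), hcon⟩)
      have h3 := Finset.card_erase_lt_of_mem hx
      omega
    have h2 : ((S.erase x).card : ℝ) * (κ / (4 * X.card)) ≤ ∑ y ∈ S.erase x, a y := by
      have := Finset.card_nsmul_le_sum (S.erase x) a (κ / (4 * X.card)) (fun y hy =>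
        (Finset.mem_filter.1 (hSg (Finset.mem_of_mem_erase hy))).2.2)
      rwa [nsmul_eq_mul] at this
    have h3 : ((S.erase x).card : ℝ) = (S.card : ℝ) - 1 := by
      rw [Finset.card_erase_of_mem hx, Nat.cast_sub (Finset.card_pos.2 ⟨x, hx⟩)]; simp
    rw [h3, ← mul_div_assoc] at h2
    have h4 := h2.trans h1.le
    rw [div_le_iff₀ (by positivity)] at h4
    linarith
  · intro D hD
    have hD0 := hF D hD
    have h1 : ∑ x ∈ S, l x ≤ lam1 / 4 * ws wt (Pof S) := by
      have h2 : ∑ x ∈ S, l x ≤ ∑ x ∈ S, c * a x := Finset.sum_le_sum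
        (fun x hx => (Finset.mem_filter.1 (hSg hx)).2.1)
      rw [← Finset.mul_sum, ← hwP] at h2
      have h3 : c ≤ lam1 / 4 := by
        rw [hc, div_le_iff₀ hκ]
        linarith
      exact h2.trans (mul_le_mul_of_nonneg_right h3 hP0.le)
    rw [hlS] at h1
    have h2 : (1 / ws wt D) * ∑ d ∈ D, (wt d : ℝ) * ws wt (nb G {d} ∩ Pof S) ≤
        lam1 / 4 * ws wt (Pof S) := by
      refine le_trans ?_ h1
      refine Finset.single_le_sum (f := fun D => (1 / ws wt D) * ∑ d ∈ D, (wt d : ℝ) *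
        ws wt (nb G {d} ∩ Pof S)) ?_ hD
      intro D' hD'
      apply mul_nonneg (by have := hF D' hD'; positivity)
      apply Finset.sum_nonneg
      intro d _
      exact mul_nonneg (wt d).2 (ws_nonneg wt _)
    rw [one_div, inv_mul_le_iff₀ hD0] at h2
    have h3 : ws wt (D.filter (fun v => lam1 * ws wt (Pof S) < ws wt (nb G {v} ∩ Pof S))) *
        (lam1 * ws wt (Pof S)) ≤ ∑ d ∈ D, (wt d : ℝ) * ws wt (nb G {d} ∩ Pof S) := by
      calc _ ≤ ∑ d ∈ D.filter (fun v => lam1 * ws wt (Pof S) < ws wt (nb G {v} ∩ Pof S)),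
            (wt d : ℝ) * ws wt (nb G {d} ∩ Pof S) := by
            nth_rewrite 1 [ws]
            rw [Finset.sum_mul]
            apply Finset.sum_le_sum
            intro d hd
            exact mul_le_mul_of_nonneg_left (Finset.mem_filter.1 hd).2.le (wt d).2
        _ ≤ _ := Finset.sum_le_sum_of_subset_of_nonneg (Finset.filter_subset _ _)
            (fun d _ _ => mul_nonneg (wt d).2 (ws_nonneg wt _))
    have h4 : 0 < lam1 * ws wt (Pof S) := by positivity
    rw [← mul_le_mul_iff_left₀ h4]
    linarith

lemma os_lem (R : Finset ℕ) (D : ℕ → Finset V) (lam κ0 ρ lam1 : ℝ) (q nQ : ℕ) (hq : 1 ≤ q)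
    (hκ0 : 0 < κ0)
    (hρ : 0 < ρ) (hρκ : ρ ≤ κ0 / 4) (hlam : 0 < lam) (hlam1 : 0 < lam1) (hlam1' : lam1 ≤ 1)
    (h16 : 16 * lam * (nQ + R.card + 1) ≤ κ0 * lam1) (hDpos : ∀ r ∈ R, 0 < ws wt (D r)) (s : ℕ) :
    ∀ (X : Finset V) (Q : Finset ℕ) (C : ℕ → Finset V),
      (X.card : ℝ) * (8 * ρ / κ0) ^ s < 1 → (∀ j ∈ Q, κ0 * 2 ^ s ≤ ws wt (C j)) →
      2 ^ s * (q + 1) ≤ Q.card → Q.card ≤ nQ → (∀ j ∈ Q, C j ⊆ nb G X) →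
      (∀ j ∈ Q, ∀ x ∈ X, ws wt (nb G {x} ∩ C j) ≤ lam) →
      (∀ j ∈ Q, ∀ j' ∈ Q, j ≠ j' → ∀ v ∈ C j, ws wt (nb G {v} ∩ C j') ≤ lam) →
      (∀ r ∈ R, ∀ j' ∈ Q, ∀ v ∈ D r, ws wt (nb G {v} ∩ C j') ≤ lam) →
      ∃ i ∈ Q, ∃ J ⊆ Q, ∃ S ⊆ X, ∃ P ⊆ C i, ∃ C' D' : ℕ → Finset V,
        q ≤ J.card ∧ (∀ j ∈ J, i < j) ∧ P ⊆ nb G S ∧ ρ ≤ ws wt P ∧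
        (∀ j ∈ J, C' j ⊆ C j ∧ ant G S (C' j) ∧ κ0 / 4 ≤ ws wt (C' j) ∧
          ∀ v ∈ C' j, ws wt (nb G {v} ∩ P) ≤ lam1 * ws wt P) ∧
        (∀ r ∈ R, D' r ⊆ D r ∧ ws wt (D r) / 2 ≤ ws wt (D' r) ∧
          ∀ v ∈ D' r, ws wt (nb G {v} ∩ P) ≤ lam1 * ws wt P) := by
  induction s with
  | zero =>
    intro X Q C hX hC hQ hQn hcov _ _ _
    exfalso
    obtain ⟨j, hj⟩ : Q.Nonempty := Finset.card_pos.1 (by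
      rw [pow_zero, one_mul] at hQ; omega)
    have h1 : X = ∅ := by
      rw [pow_zero, mul_one] at hX
      have : X.card < 1 := by exact_mod_cast hX
      exact Finset.card_eq_zero.1 (by omega)
    have h2 := hcov j hj
    rw [h1, nb_empty] at h2
    have h3 := (hC j hj).trans (ws_mono wt h2)
    rw [ws_empty] at h3
    simp at h3
    linarith
  | succ s ih =>
    intro X Q C hX hC hQ hQn hcov hXl hCl hDl
    have h2s : (1 : ℝ) ≤ 2 ^ (s + 1) := one_le_pow₀ (by norm_num)
    have hQpos : 0 < Q.card := lt_of_lt_of_le (by positivity) hQ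
    have hQne : Q.Nonempty := Finset.card_pos.1 hQpos
    set i := Q.min' hQne with hi
    have hiQ : i ∈ Q := Finset.min'_mem _ _
    have hmin : ∀ j ∈ Q.erase i, i < j := by
      intro j hj
      exact lt_of_le_of_ne (Finset.min'_le _ _ (Finset.mem_of_mem_erase hj))
        (Finset.ne_of_mem_erase hj).symm
    have hκj : ∀ j ∈ Q, κ0 ≤ ws wt (C j) := by
      intro j hj
      refine le_trans ?_ (hC j hj)
      nlinarith
    set F : Finset (Finset V) := (Q.erase i).image C ∪ R.image D with hF
    have hFc : (F.card : ℝ) + 1 ≤ nQ + R.card + 1 := by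
      have h1 : F.card ≤ nQ + R.card := by
        refine (Finset.card_union_le _ _).trans (Nat.add_le_add ?_ Finset.card_image_le)
        exact Finset.card_image_le.trans ((Finset.card_le_card (Finset.erase_subset _ _)).trans hQn)
      have : (F.card : ℝ) ≤ nQ + R.card := by exact_mod_cast h1
      linarith
    obtain ⟨S, hSX, P, hPC, hPS, hPρ, hScard, hFbad⟩ := pick_lem (G := G) (wt := wt) X (C i)
      (hcov i hiQ) F (by
        intro T hT
        rcases Finset.mem_union.1 hT with hT | hT
        · obtain ⟨j, hj, rfl⟩ := Finset.mem_image.1 hT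
          have := hκj j (Finset.mem_of_mem_erase hj)
          linarith
        · obtain ⟨r, hr, rfl⟩ := Finset.mem_image.1 hT
          exact hDpos r hr) lam κ0 ρ lam1 (by
        intro T hT v hv
        rcases Finset.mem_union.1 hT with hT | hT
        · obtain ⟨j, hj, rfl⟩ := Finset.mem_image.1 hT
          exact hCl j (Finset.mem_of_mem_erase hj) i hiQ (Finset.ne_of_mem_erase hj) v hv
        · obtain ⟨r, hr, rfl⟩ := Finset.mem_image.1 hT
          exact hDl r hr i hiQ v hv) (hκj i hiQ) hκ0 hρ hρκ hlam hlam1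
      (by
        refine le_trans ?_ h16
        exact mul_le_mul_of_nonneg_left hFc (by positivity))
    have hfilt : ∀ T : Finset V, ws wt T - ws wt (T.filter (fun v => lam1 * ws wt P <
        ws wt (nb G {v} ∩ P))) ≤ ws wt (T.filter (fun v => ws wt (nb G {v} ∩ P) ≤
          lam1 * ws wt P)) := by
      intro T
      have := Finset.sum_filter_add_sum_filter_not T (fun v => lam1 * ws wt P <
        ws wt (nb G {v} ∩ P)) (fun v => (wt v : ℝ))
      simp only [not_lt] at this
      unfold ws at this ⊢
      linarith
    set Ja := (Q.erase i).filter (fun j => ws wt (C j) / 2 ≤ ws wt (C j \ nb G S)) with hJa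
    set Jb := (Q.erase i).filter (fun j => ¬ ws wt (C j) / 2 ≤ ws wt (C j \ nb G S)) with hJb
    have hJab : Ja.card + Jb.card = (Q.erase i).card := Finset.card_filter_add_card_filter_not _
    rw [Finset.card_erase_of_mem hiQ] at hJab
    by_cases hsucc : q ≤ Ja.card
    · refine ⟨i, hiQ, Ja, (Finset.filter_subset _ _).trans (Finset.erase_subset _ _), S, hSX, P,
        hPC, fun j => (C j \ nb G S).filter (fun v => ws wt (nb G {v} ∩ P) ≤ lam1 * ws wt P),
        fun r => (D r).filter (fun v => ws wt (nb G {v} ∩ P) ≤ lam1 * ws wt P), hsucc,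
        fun j hj => hmin j (Finset.mem_filter.1 hj).1, hPS, hPρ, ?_, ?_⟩
      · intro j hj
        obtain ⟨hj1, hj2⟩ := Finset.mem_filter.1 hj
        refine ⟨(Finset.filter_subset _ _).trans Finset.sdiff_subset,
          ant_mono ant_sdiff le_rfl (Finset.filter_subset _ _), ?_,
          fun v hv => (Finset.mem_filter.1 hv).2⟩
        have h1 := hfilt (C j \ nb G S)
        have h2 := hFbad (C j) (Finset.mem_union_left _ (Finset.mem_image_of_mem _ hj1))
        have h3 := ws_mono wt (Finset.filter_subset_filter (fun v => lam1 * ws wt P <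
          ws wt (nb G {v} ∩ P)) (Finset.sdiff_subset : C j \ nb G S ⊆ C j))
        have h4 := hκj j (Finset.mem_of_mem_erase hj1)
        linarith
      · intro r hr
        refine ⟨Finset.filter_subset _ _, ?_, fun v hv => (Finset.mem_filter.1 hv).2⟩
        have h1 := hfilt (D r)
        have h2 := hFbad (D r) (Finset.mem_union_right _ (Finset.mem_image_of_mem _ hr))
        have h3 := hDpos r hr
        linarith
    · push Not at hsucc
      have hpow : 2 ^ (s + 1) * (q + 1) = 2 ^ s * (q + 1) + 2 ^ s * (q + 1) := by ring
      have hpow1 : q + 1 ≤ 2 ^ s * (q + 1) := Nat.le_mul_of_pos_left _ (by positivity)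
      have hJbc : 2 ^ s * (q + 1) ≤ Jb.card := by omega
      have hJbQ : Jb ⊆ Q := (Finset.filter_subset _ _).trans (Finset.erase_subset _ _)
      have hJbw : ∀ j ∈ Jb, ws wt (C j) / 2 ≤ ws wt (C j ∩ nb G S) := by
        intro j hj
        have h1 := (Finset.mem_filter.1 hj).2
        push Not at h1
        have h2 := ws_inter_sdiff wt (C j) (nb G S)
        linarith
      have hS2 : 2 ≤ S.card := by
        by_contra hcon
        obtain ⟨j, hj⟩ : Jb.Nonempty := Finset.card_pos.1 (by omega)
        have h1 := hJbw j hj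
        have h2 := hκj j (hJbQ hj)
        have h3 : ws wt (C j ∩ nb G S) ≤ lam := by
          rcases Nat.eq_zero_or_pos S.card with h0 | h0
          · rw [Finset.card_eq_zero.1 h0, nb_empty, Finset.inter_empty, ws_empty]
            exact hlam.le
          · obtain ⟨x, rfl⟩ := Finset.card_eq_one.1 (by omega : S.card = 1)
            rw [Finset.inter_comm]
            exact hXl j (hJbQ hj) x (hSX (by simp))
        have h4 : 16 * lam ≤ κ0 := by
          have h5 : 16 * lam * 1 ≤ 16 * lam * (nQ + R.card + 1) := by
            apply mul_le_mul_of_nonneg_left _ (by positivity)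
            have : (0 : ℝ) ≤ nQ + R.card := by positivity
            linarith
          nlinarith
        linarith
      have hSc : (S.card : ℝ) ≤ X.card * (8 * ρ / κ0) := by
        have h1 : (2 : ℝ) ≤ S.card := by exact_mod_cast hS2
        rw [← mul_div_assoc, le_div_iff₀ hκ0]
        nlinarith
      obtain ⟨i', hi', J, hJ, S', hS', P', hP', C', D', h1, h2, h3, h4, h5, h6⟩ := ih S Jb
        (fun j => C j ∩ nb G S) (by
          refine lt_of_le_of_lt ?_ hX
          rw [pow_succ']
          have : 0 ≤ (8 * ρ / κ0) ^ s := by positivity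
          calc _ ≤ X.card * (8 * ρ / κ0) * (8 * ρ / κ0) ^ s := mul_le_mul_of_nonneg_right hSc this
            _ = _ := by ring) (by
          intro j hj
          have h1 := hJbw j hj
          have h2 := hC j (hJbQ hj)
          rw [pow_succ] at h2
          linarith) hJbc ((Finset.card_le_card hJbQ).trans hQn)
        (fun j _ => Finset.inter_subset_right)
        (fun j hj x hx => (ws_mono wt (Finset.inter_subset_inter_left
          Finset.inter_subset_left)).trans (hXl j (hJbQ hj) x (hSX hx)))
        (fun j hj j' hj' hne v hv => (ws_mono wt (Finset.inter_subset_inter_left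
          Finset.inter_subset_left)).trans
            (hCl j (hJbQ hj) j' (hJbQ hj') hne v (Finset.mem_inter.1 hv).1))
        (fun r hr j' hj' v hv => (ws_mono wt (Finset.inter_subset_inter_left
          Finset.inter_subset_left)).trans (hDl r hr j' (hJbQ hj') v hv))
      refine ⟨i', hJbQ hi', J, hJ.trans hJbQ, S', hS'.trans hSX, P',
        hP'.trans Finset.inter_subset_left, C', D', h1, h2, h3, h4, ?_, h6⟩
      intro j hj
      exact ⟨(h5 j hj).1.trans Finset.inter_subset_left, (h5 j hj).2⟩

end Pick

section States
open Classical
variable {V : Type} [Fintype V]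
variable {G : SimpleGraph V} {wt : V → NNReal} {I : Finset ℤ} {A : ℤ → Finset V}
    {lam γ δ ω : ℝ}

/-- state: a bi-levelling whose blocks are indexed by natural numbers -/
structure St (G : SimpleGraph V) (I : Finset ℤ) (A : ℤ → Finset V) (h b : ℕ)
    (L M : ℕ → Finset V) (Q : Finset ℕ) (Y C : ℕ → Finset V) (ql qm idx : ℕ → ℤ) : Prop where
  h1 : 1 ≤ h
  b1 : 1 ≤ b
  root : ∃ v, L 0 = {v} ∧ M 0 = {v}
  levL : Lev G L h
  levM : Lev G M b
  par : ∀ s t, 1 ≤ s → s ≤ h → 1 ≤ t → t ≤ b → ant G (L s) (M t)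
  CL : ∀ j ∈ Q, ∀ s < h, ant G (L s) (C j)
  CM : ∀ j ∈ Q, ∀ s < b, ant G (M s) (C j)
  Mcov : ∀ j ∈ Q, C j ⊆ nb G (M b)
  YL : ∀ j ∈ Q, Y j ⊆ L h
  Ycov : ∀ i ∈ Q, ∀ j ∈ Q, i ≤ j → C j ⊆ nb G (Y i)
  Yant : ∀ i ∈ Q, ∀ j ∈ Q, j < i → ant G (Y i) (C j)
  qlA : ∀ s ≤ h, ql s ∈ I ∧ L s ⊆ A (ql s)
  qmA : ∀ s, 1 ≤ s → s ≤ b → qm s ∈ I ∧ M s ⊆ A (qm s)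
  qcA : ∀ j ∈ Q, idx j ∈ I ∧ C j ⊆ A (idx j)
  ql_inj : ∀ s ≤ h, ∀ s' ≤ h, ql s = ql s' → s = s'
  qm_inj : ∀ s, 1 ≤ s → s ≤ b → ∀ s', 1 ≤ s' → s' ≤ b → qm s = qm s' → s = s'
  qc_inj : ∀ j ∈ Q, ∀ j' ∈ Q, idx j = idx j' → j = j'
  qcl : ∀ j ∈ Q, ∀ s ≤ h, idx j ≠ ql s
  qcm : ∀ j ∈ Q, ∀ s, 1 ≤ s → s ≤ b → idx j ≠ qm s
  qlm : ∀ s ≤ h, ∀ t, 1 ≤ t → t ≤ b → ql s ≠ qm t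

lemma St.mono {h b : ℕ} {L M : ℕ → Finset V} {Q : Finset ℕ} {Y C : ℕ → Finset V}
    {ql qm idx : ℕ → ℤ} (S : St G I A h b L M Q Y C ql qm idx) {Q' : Finset ℕ} (hQ : Q' ⊆ Q)
    {C' : ℕ → Finset V} (hC : ∀ j ∈ Q', C' j ⊆ C j) : St G I A h b L M Q' Y C' ql qm idx where
  h1 := S.h1
  b1 := S.b1
  root := S.root
  levL := S.levL
  levM := S.levM
  par := S.par
  CL := fun j hj s hs => ant_mono (S.CL j (hQ hj) s hs) le_rfl (hC j hj)
  CM := fun j hj s hs => ant_mono (S.CM j (hQ hj) s hs) le_rfl (hC j hj)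
  Mcov := fun j hj => (hC j hj).trans (S.Mcov j (hQ hj))
  YL := fun j hj => S.YL j (hQ hj)
  Ycov := fun i hi j hj hij => (hC j hj).trans (S.Ycov i (hQ hi) j (hQ hj) hij)
  Yant := fun i hi j hj hij => ant_mono (S.Yant i (hQ hi) j (hQ hj) hij) le_rfl (hC j hj)
  qlA := S.qlA
  qmA := S.qmA
  qcA := fun j hj => ⟨(S.qcA j (hQ hj)).1, (hC j hj).trans (S.qcA j (hQ hj)).2⟩
  ql_inj := S.ql_inj
  qm_inj := S.qm_inj
  qc_inj := fun j hj j' hj' => S.qc_inj j (hQ hj) j' (hQ hj')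
  qcl := fun j hj => S.qcl j (hQ hj)
  qcm := fun j hj => S.qcm j (hQ hj)
  qlm := S.qlm

/-- global constants for the last phase -/
structure Par (N : ℕ) (lam γ δ ρ lam1 κmin : ℝ) (s nQ : ℕ) : Prop where
  κ0 : 0 < κmin
  ρ0 : 0 < ρ
  δρ : δ ≤ ρ
  ρκ : ρ ≤ κmin / 2 ^ s / 4
  hN : (N : ℝ) * (8 * ρ / (κmin / 2 ^ s)) ^ s < 1
  l0 : 0 < lam1
  l1 : lam1 ≤ 1
  l16 : 16 * lam * (nQ + nQ + 1) ≤ κmin / 2 ^ s * lam1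
  hγ : γ ≤ κmin / 2 ^ (s + 3)

/-- number of blocks needed -/
def nn (s : ℕ) : ℕ → ℕ
  | 0 => 1
  | m + 1 => 2 ^ s * (nn s m + 1)

lemma nn_pos (s m : ℕ) : 1 ≤ nn s m := by
  cases m with
  | zero => simp [nn]
  | succ m => rw [nn]; exact Nat.one_le_iff_ne_zero.2 (by positivity)

lemma St.os (E : Env G wt I A lam γ δ ω) {ρ lam1 κmin : ℝ} {s nQ : ℕ}
    (Pr : Par (Fintype.card V) lam γ δ ρ lam1 κmin s nQ)
    {h b : ℕ} {L M : ℕ → Finset V} {Q R : Finset ℕ} {Y C : ℕ → Finset V}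
    {ql qm idx : ℕ → ℤ} (S : St G I A h b L M (R ∪ Q) Y C ql qm idx)
    (hRQ : ∀ r ∈ R, ∀ j ∈ Q, r < j) (q : ℕ) (hq : 1 ≤ q) (κ : ℝ) (hκ : κmin ≤ κ)
    (hC : ∀ j ∈ Q, κ ≤ ws wt (C j)) (hCR : ∀ r ∈ R, 0 < ws wt (C r))
    (hQ : 2 ^ s * (q + 1) ≤ Q.card) (hQn : Q.card ≤ nQ) (hRn : R.card ≤ nQ) :
    ∃ i ∈ Q, ∃ J ⊆ Q, ∃ S ⊆ M b, ∃ P ⊆ C i, ∃ C' D' : ℕ → Finset V,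
        q ≤ J.card ∧ (∀ j ∈ J, i < j) ∧ P ⊆ nb G S ∧ ρ ≤ ws wt P ∧
        (∀ j ∈ J, C' j ⊆ C j ∧ ant G S (C' j) ∧ κ / 2 ^ (s + 2) ≤ ws wt (C' j) ∧
          ∀ v ∈ C' j, ws wt (nb G {v} ∩ P) ≤ lam1 * ws wt P) ∧
        (∀ r ∈ R, D' r ⊆ C r ∧ ws wt (C r) / 2 ≤ ws wt (D' r) ∧
          ∀ v ∈ D' r, ws wt (nb G {v} ∩ P) ≤ lam1 * ws wt P) := by
  have hκ0 : 0 < κ := Pr.κ0.trans_le hκ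
  have hp : (0 : ℝ) < 2 ^ s := by positivity
  have hdiv : κmin / 2 ^ s ≤ κ / 2 ^ s := div_le_div_of_nonneg_right hκ hp.le
  have hmin0 : 0 < κmin / 2 ^ s := div_pos Pr.κ0 hp
  have hlink : ∀ j ∈ R ∪ Q, ∀ j' ∈ R ∪ Q, j ≠ j' → ∀ v ∈ C j, ws wt (nb G {v} ∩ C j') ≤ lam := by
    intro j hj j' hj' hne v hv
    exact E.link' (S.qcA j hj).1 (S.qcA j' hj').1 (fun h => hne (S.qc_inj j hj j' hj' h))
      ((S.qcA j hj).2 hv) (S.qcA j' hj').2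
  have hRn' : (R.card : ℝ) ≤ nQ := by exact_mod_cast hRn
  have hρ := Pr.ρκ
  have hρ0 := Pr.ρ0
  have hE := E.lpos
  obtain ⟨i, hi, J, hJ, S', hS', P, hP, C', D', h1, h2, h3, h4, h5, h6⟩ := os_lem (G := G) (wt := wt)
    R C lam (κ / 2 ^ s) ρ lam1 q nQ hq (by positivity) Pr.ρ0 (by linarith) E.lpos Pr.l0 Pr.l1
    (by
      calc 16 * lam * (nQ + R.card + 1) ≤ 16 * lam * (nQ + nQ + 1) :=
            mul_le_mul_of_nonneg_left (by linarith) (by positivity)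
        _ ≤ κmin / 2 ^ s * lam1 := Pr.l16
        _ ≤ κ / 2 ^ s * lam1 := mul_le_mul_of_nonneg_right hdiv Pr.l0.le)
    hCR s (M b) Q C
    (by
      refine lt_of_le_of_lt ?_ Pr.hN
      apply mul_le_mul
      · exact_mod_cast Finset.card_le_univ _
      · apply pow_le_pow_left₀ (by positivity)
        exact div_le_div_of_nonneg_left (by positivity) hmin0 hdiv
      · positivity
      · positivity)
    (by intro j hj; rw [div_mul_cancel₀ _ hp.ne']; exact hC j hj) hQ hQn
    (fun j hj => S.Mcov j (Finset.mem_union_right _ hj))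
    (fun j hj x hx => E.link' (S.qmA b S.b1 le_rfl).1
      (S.qcA j (Finset.mem_union_right _ hj)).1
      (S.qcm j (Finset.mem_union_right _ hj) b S.b1 le_rfl).symm
      ((S.qmA b S.b1 le_rfl).2 hx) (S.qcA j (Finset.mem_union_right _ hj)).2)
    (fun j hj j' hj' => hlink j (Finset.mem_union_right _ hj) j' (Finset.mem_union_right _ hj'))
    (fun r hr j' hj' => hlink r (Finset.mem_union_left _ hr) j' (Finset.mem_union_right _ hj')
      (hRQ r hr j' hj').ne)
  refine ⟨i, hi, J, hJ, S', hS', P, hP, C', D', h1, h2, h3, h4, ?_, h6⟩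
  intro j hj
  obtain ⟨h7, h8, h9, h10⟩ := h5 j hj
  refine ⟨h7, h8, ?_, h10⟩
  rw [div_div] at h9
  rw [pow_add]
  norm_num at h9 ⊢
  exact h9

lemma St.extend (E : Env G wt I A lam γ δ ω) {ρ lam1 κmin : ℝ} {s nQ : ℕ}
    (Pr : Par (Fintype.card V) lam γ δ ρ lam1 κmin s nQ)
    {h b : ℕ} {L M : ℕ → Finset V} {Q : Finset ℕ} {Y C : ℕ → Finset V}
    {ql qm idx : ℕ → ℤ} (S : St G I A h b L M Q Y C ql qm idx) (q : ℕ) (hq : 1 ≤ q)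
    (κ : ℝ) (hκ : κmin ≤ κ)
    (hC : ∀ j ∈ Q, κ ≤ ws wt (C j)) (hQ : 2 ^ s * (q + 1) ≤ Q.card) (hQn : Q.card ≤ nQ) :
    ∃ (L' M' : ℕ → Finset V) (Q' : Finset ℕ) (C' : ℕ → Finset V) (qm' : ℕ → ℤ),
      St G I A h (b + 1) L' M' Q' Y C' ql qm' idx ∧ q ≤ Q'.card ∧ Q'.card ≤ nQ ∧
      ∀ j ∈ Q', κ / 2 ^ (s + 3) ≤ ws wt (C' j) := by
  obtain ⟨i, hi, J, hJ, X, hX, P, hP, C1, D', h1, h2, h3, h4, h5, -⟩ := St.os E Pr (R := ∅)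
    (Q := Q) (by rw [Finset.empty_union]; exact S) (by simp) q hq κ hκ hC (by simp) hQ hQn (by simp)
  have hb1 := S.b1
  have hh1 := S.h1
  set M' : ℕ → Finset V := fun t => if t < b then M t else if t = b then X else P with hM'
  have hMlt : ∀ t, t < b → M' t = M t := fun t ht => by simp only [hM', if_pos ht]
  have hMb : M' b = X := by simp [hM']
  have hMb1 : M' (b + 1) = P := by simp [hM']
  have hMle : ∀ t, t ≤ b → M' t ⊆ M t := by
    intro t ht
    rcases Nat.lt_or_ge t b with h | h
    · rw [hMlt t h]
    · have : t = b := by omega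
      subst this
      rw [hMb]; exact hX
  set qm' : ℕ → ℤ := fun t => if t = b + 1 then idx i else qm t with hqm'
  have hqle : ∀ t, t ≤ b → qm' t = qm t := by
    intro t ht; simp only [hqm']; rw [if_neg (by omega)]
  have hqb1 : qm' (b + 1) = idx i := by simp [hqm']
  set L' : ℕ → Finset V := fun t => if t = h then J.biUnion Y else L t with hL'
  have hLh : L' h = J.biUnion Y := by simp [hL']
  have hLne : ∀ t, t ≠ h → L' t = L t := by intro t ht; simp only [hL']; rw [if_neg ht]
  have hLle : ∀ t, L' t ⊆ L t := by
    intro t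
    by_cases ht : t = h
    · subst ht
      rw [hLh]
      exact Finset.biUnion_subset.2 (fun j hj => S.YL j (hJ hj))
    · rw [hLne t ht]
  have hiJ : i ∉ J := fun hiJ => lt_irrefl _ (h2 i hiJ)
  have hcases : ∀ t, t ≤ b + 1 → t ≤ b ∨ t = b + 1 := by intro t ht; omega
  refine ⟨L', M', J, fun j => C1 j ∩ nb G P, qm', ?_, h1, (Finset.card_le_card hJ).trans hQn, ?_⟩
  · have hC1 : ∀ j ∈ J, C1 j ∩ nb G P ⊆ C j := fun j hj =>
      Finset.inter_subset_left.trans (h5 j hj).1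
    constructor
    · exact S.h1
    · omega
    · obtain ⟨v, hv1, hv2⟩ := S.root
      exact ⟨v, by rw [hLne 0 (by omega)]; exact hv1, by rw [hMlt 0 (by omega)]; exact hv2⟩
    · constructor
      · intro t ht
        rw [hLne t (by omega)]
        exact (hLle _).trans (S.levL.1 t ht)
      · intro t t' h1 h2
        exact ant_mono (S.levL.2 t t' h1 h2) (hLle _) (hLle _)
    · constructor
      · intro t ht
        rcases Nat.lt_or_ge t b with h' | h'
        · rw [hMlt t h']
          exact (hMle _ (by omega)).trans (S.levM.1 t h')
        · have : t = b := by omega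
          subst this
          rw [hMb, hMb1]; exact h3
      · intro t t' h1 h2
        rcases hcases t' h2 with h' | h'
        · exact ant_mono (S.levM.2 t t' h1 h') (hMle _ (by omega)) (hMle _ h')
        · subst h'
          rw [hMb1]
          exact ant_mono (S.CM i hi t (by omega)) (hMle _ (by omega)) hP
    · intro t t' h1 h2' h3' h4'
      rcases hcases t' h4' with h' | h'
      · exact ant_mono (S.par t t' h1 h2' h3' h') (hLle _) (hMle _ h')
      · subst h'
        rw [hMb1]
        by_cases ht : t = h
        · subst ht
          rw [hLh]
          intro x hx
          obtain ⟨j, hj, hxj⟩ := Finset.mem_biUnion.1 hx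
          exact ant_mono (S.Yant j (hJ hj) i hi (h2 j hj)) le_rfl hP x hxj
        · exact ant_mono (S.CL i hi t (by omega)) (hLle _) hP
    · intro j hj t ht
      exact ant_mono (S.CL j (hJ hj) t ht) (hLle _) (hC1 j hj)
    · intro j hj t ht
      rcases Nat.lt_or_ge t b with h' | h'
      · exact ant_mono (S.CM j (hJ hj) t h') (hMle _ (by omega)) (hC1 j hj)
      · have : t = b := by omega
        subst this
        rw [hMb]
        exact ant_mono (h5 j hj).2.1 le_rfl Finset.inter_subset_left
    · intro j hj
      rw [hMb1]; exact Finset.inter_subset_right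
    · intro j hj
      rw [hLh]; exact Finset.subset_biUnion_of_mem Y hj
    · intro a ha j hj haj
      exact (hC1 j hj).trans (S.Ycov a (hJ ha) j (hJ hj) haj)
    · intro a ha j hj haj
      exact ant_mono (S.Yant a (hJ ha) j (hJ hj) haj) le_rfl (hC1 j hj)
    · intro t ht
      exact ⟨(S.qlA t ht).1, (hLle _).trans (S.qlA t ht).2⟩
    · intro t ht1 ht2
      rcases hcases t ht2 with h' | h'
      · rw [hqle t h']
        exact ⟨(S.qmA t ht1 h').1, (hMle _ h').trans (S.qmA t ht1 h').2⟩
      · subst h'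
        rw [hqb1, hMb1]
        exact ⟨(S.qcA i hi).1, hP.trans (S.qcA i hi).2⟩
    · intro j hj
      exact ⟨(S.qcA j (hJ hj)).1, (hC1 j hj).trans (S.qcA j (hJ hj)).2⟩
    · exact S.ql_inj
    · intro t h1 h2 t' h1' h2' htt
      rcases hcases t h2 with h' | h' <;> rcases hcases t' h2' with h'' | h''
      · rw [hqle t h', hqle t' h''] at htt
        exact S.qm_inj t h1 h' t' h1' h'' htt
      · subst h''
        rw [hqb1, hqle t h'] at htt
        exact absurd htt.symm (S.qcm i hi t h1 h')
      · subst h'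
        rw [hqb1, hqle t' h''] at htt
        exact absurd htt (S.qcm i hi t' h1' h'')
      · omega
    · exact fun j hj j' hj' => S.qc_inj j (hJ hj) j' (hJ hj')
    · exact fun j hj => S.qcl j (hJ hj)
    · intro j hj t h1 h2
      rcases hcases t h2 with h' | h'
      · rw [hqle t h']; exact S.qcm j (hJ hj) t h1 h'
      · subst h'
        rw [hqb1]
        exact fun h => hiJ (S.qc_inj j (hJ hj) i hi h ▸ hj)
    · intro t ht t' h1 h2
      rcases hcases t' h2 with h' | h'
      · rw [hqle t' h']; exact S.qlm t ht t' h1 h'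
      · subst h'
        rw [hqb1]
        exact (S.qcl i hi t ht).symm
  · intro j hj
    have hne : idx i ≠ idx j := fun h => hiJ (S.qc_inj i hi j (hJ hj) h ▸ hj)
    have h6 := E.cover (S.qcA i hi).1 (S.qcA j (hJ hj)).1 hne (hP.trans (S.qcA i hi).2)
      ((h5 j hj).1.trans (S.qcA j (hJ hj)).2) (Pr.δρ.trans h4)
    have h7 := ws_inter_sdiff wt (C1 j) (nb G P)
    have h8 := (h5 j hj).2.2.1
    have h9 := Pr.hγ
    have h10 : κmin / 2 ^ (s + 3) ≤ κ / 2 ^ (s + 3) :=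
      div_le_div_of_nonneg_right hκ (by positivity)
    have h11 : κ / 2 ^ (s + 2) = κ / 2 ^ (s + 3) + κ / 2 ^ (s + 3) := by
      rw [pow_succ (2 : ℝ) (s + 2)]
      field_simp
      ring
    linarith

lemma St.extend_many (E : Env G wt I A lam γ δ ω) {ρ lam1 κmin : ℝ} {s nQ : ℕ}
    (Pr : Par (Fintype.card V) lam γ δ ρ lam1 κmin s nQ) {h : ℕ} {Y : ℕ → Finset V}
    {ql idx : ℕ → ℤ} (k : ℕ) (e : ℕ) :
    ∀ {b : ℕ} {L M : ℕ → Finset V} {Q : Finset ℕ} {C : ℕ → Finset V} {qm : ℕ → ℤ},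
      St G I A h b L M Q Y C ql qm idx →
      (∀ j ∈ Q, κmin * (2 ^ (s + 3)) ^ (k + e) ≤ ws wt (C j)) → nn s (k + e) ≤ Q.card →
      Q.card ≤ nQ →
      ∃ (L' M' : ℕ → Finset V) (Q' : Finset ℕ) (C' : ℕ → Finset V) (qm' : ℕ → ℤ),
        St G I A h (b + e) L' M' Q' Y C' ql qm' idx ∧ nn s k ≤ Q'.card ∧ Q'.card ≤ nQ ∧
        ∀ j ∈ Q', κmin * (2 ^ (s + 3)) ^ k ≤ ws wt (C' j) := by
  induction e with
  | zero =>
    intro b L M Q C qm S hC hQ hQn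
    exact ⟨L, M, Q, C, qm, S, hQ, hQn, hC⟩
  | succ e ih =>
    intro b L M Q C qm S hC hQ hQn
    have hp : (1 : ℝ) ≤ 2 ^ (s + 3) := one_le_pow₀ (by norm_num)
    obtain ⟨L', M', Q', C', qm', S', h1, h2, h3⟩ := St.extend E Pr S (nn s (k + e)) (nn_pos _ _)
      (κmin * (2 ^ (s + 3)) ^ (k + (e + 1)))
      (le_mul_of_one_le_right Pr.κ0.le (one_le_pow₀ hp)) hC hQ hQn
    obtain ⟨L2, M2, Q2, C2, qm2, S2, h4, h5, h6⟩ := ih S' (by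
      intro j hj
      refine le_trans (le_of_eq ?_) (h3 j hj)
      rw [← add_assoc, pow_succ _ (k + e)]
      field_simp) h1 h2
    refine ⟨L2, M2, Q2, C2, qm2, ?_, h4, h5, h6⟩
    rw [show b + (e + 1) = b + 1 + e by omega]
    exact S2

lemma St.final (E : Env G wt I A lam γ δ ω) {ρ lam' κmin : ℝ} {s nQ k : ℕ}
    (Pr : Par (Fintype.card V) lam γ δ ρ (lam' / 2 ^ k) κmin s nQ) (hl' : 0 < lam')
    {h b : ℕ} {L M : ℕ → Finset V} {Y : ℕ → Finset V} {ql qm idx : ℕ → ℤ} (m : ℕ) :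
    ∀ (R Q : Finset ℕ) (C X : ℕ → Finset V), R.card + m = k →
      St G I A h b L M (R ∪ Q) Y C ql qm idx → (∀ r ∈ R, ∀ j ∈ Q, r < j) →
      nn s m ≤ Q.card → Q.card ≤ nQ → R.card + m ≤ nQ →
      (∀ j ∈ Q, κmin * (2 ^ (s + 3)) ^ m ≤ ws wt (C j)) →
      (∀ r ∈ R, ρ * 2 ^ m / 2 ^ k ≤ ws wt (C r)) →
      (∀ r ∈ R, X r ⊆ M b ∧ C r ⊆ nb G (X r) ∧ ∀ j ∈ R ∪ Q, r < j → ant G (X r) (C j)) →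
      (∀ r ∈ R, ∀ j ∈ R ∪ Q, j ≠ r → ∀ v ∈ C j,
        ws wt (nb G {v} ∩ C r) ≤ lam' / 2 ^ m * ws wt (C r)) →
      ∃ (R' : Finset ℕ) (C' X' : ℕ → Finset V), R'.card = k ∧
        St G I A h b L M R' Y C' ql qm idx ∧ (∀ r ∈ R', ρ / 2 ^ k ≤ ws wt (C' r)) ∧
        (∀ r ∈ R', X' r ⊆ M b ∧ C' r ⊆ nb G (X' r) ∧ ∀ j ∈ R', r < j → ant G (X' r) (C' j)) ∧
        (∀ r ∈ R', ∀ j ∈ R', j ≠ r → ∀ v ∈ C' j,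
          ws wt (nb G {v} ∩ C' r) ≤ lam' * ws wt (C' r)) := by
  induction m with
  | zero =>
    intro R Q C X hR S hRQ hQ hQn hRn hCQ hCR hX hlink
    refine ⟨R, C, X, by omega, S.mono Finset.subset_union_left (fun _ _ => le_rfl), ?_, ?_, ?_⟩
    · intro r hr
      simpa using hCR r hr
    · intro r hr
      exact ⟨(hX r hr).1, (hX r hr).2.1, fun j hj => (hX r hr).2.2 j (Finset.mem_union_left _ hj)⟩
    · intro r hr j hj hne v hv
      simpa using hlink r hr j (Finset.mem_union_left _ hj) hne v hv
  | succ m ih =>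
    intro R Q C X hR S hRQ hQ hQn hRn hCQ hCR hX hlink
    have hp : (1 : ℝ) ≤ 2 ^ (s + 3) := one_le_pow₀ (by norm_num)
    have hρ0 := Pr.ρ0
    have hκ0 := Pr.κ0
    obtain ⟨i, hi, J, hJ, T, hT, P, hP, C1, D1, h1, h2, h3, h4, h5, h6⟩ := St.os E Pr S hRQ
      (nn s m) (nn_pos _ _)
      (κmin * (2 ^ (s + 3)) ^ (m + 1)) (le_mul_of_one_le_right Pr.κ0.le (one_le_pow₀ hp)) hCQ
      (fun r hr => lt_of_lt_of_le (by positivity) (hCR r hr)) hQ hQn (by omega)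
    have hiR : i ∉ R := fun h => lt_irrefl _ (hRQ i h i hi)
    have hJR : ∀ j ∈ J, j ∉ R := fun j hj h => lt_irrefl _ (hRQ j h j (hJ hj))
    have hJi : ∀ j ∈ J, j ≠ i := fun j hj => (h2 j hj).ne'
    set C' : ℕ → Finset V := fun j => if j = i then P else if j ∈ R then D1 j else C1 j with hC'
    have hC'i : C' i = P := by simp [hC']
    have hC'R : ∀ r ∈ R, C' r = D1 r := by
      intro r hr
      have : r ≠ i := fun h => hiR (h ▸ hr)
      simp [hC', this, hr]
    have hC'J : ∀ j ∈ J, C' j = C1 j := by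
      intro j hj
      simp [hC', hJi j hj, hJR j hj]
    have hcases : ∀ j ∈ insert i R ∪ J, j = i ∨ j ∈ R ∨ j ∈ J := by
      intro j hj
      simp only [Finset.mem_union, Finset.mem_insert] at hj
      tauto
    have hC'C : ∀ j ∈ insert i R ∪ J, C' j ⊆ C j := by
      intro j hj
      rcases hcases j hj with rfl | h | h
      · rw [hC'i]; exact hP
      · rw [hC'R j h]; exact (h6 j h).1
      · rw [hC'J j h]; exact (h5 j h).1
    have hsub : insert i R ∪ J ⊆ R ∪ Q := by
      intro j hj
      rcases hcases j hj with rfl | h | h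
      · exact Finset.mem_union_right _ hi
      · exact Finset.mem_union_left _ h
      · exact Finset.mem_union_right _ (hJ h)
    have hlamle : lam' / 2 ^ k ≤ lam' / 2 ^ m := by
      apply div_le_div_of_nonneg_left hl'.le (by positivity)
      exact pow_le_pow_right₀ (by norm_num) (by omega)
    have hcard : (insert i R).card = R.card + 1 := Finset.card_insert_of_notMem hiR
    refine ih (insert i R) J C' (fun r => if r = i then T else X r) (by omega)
      (S.mono hsub hC'C) ?_ h1 ((Finset.card_le_card hJ).trans hQn) (by omega) ?_ ?_ ?_ ?_
    · intro r hr j hj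
      rcases Finset.mem_insert.1 hr with rfl | hr
      · exact h2 j hj
      · exact hRQ r hr j (hJ hj)
    · intro j hj
      rw [hC'J j hj]
      refine le_trans ?_ (h5 j hj).2.2.1
      rw [pow_succ ((2:ℝ) ^ (s+3)) m, ← mul_assoc, mul_div_assoc]
      apply le_mul_of_one_le_right (by positivity)
      rw [one_le_div (by positivity)]
      exact pow_le_pow_right₀ (by norm_num) (by omega)
    · intro r hr
      rcases Finset.mem_insert.1 hr with rfl | hr
      · rw [hC'i]
        refine le_trans ?_ h4
        rw [div_le_iff₀ (by positivity)]
        exact mul_le_mul_of_nonneg_left (pow_le_pow_right₀ (by norm_num) (by omega)) hρ0.le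
      · rw [hC'R r hr]
        have h7 := hCR r hr
        have h8 := (h6 r hr).2.1
        rw [pow_succ, ← mul_assoc, mul_div_assoc] at h7
        have h9 : ρ * 2 ^ m / 2 ^ k = ρ * 2 ^ m * (2 / 2 ^ k) / 2 := by ring
        rw [h9]
        linarith
    · intro r hr
      rcases Finset.mem_insert.1 hr with rfl | hr
      · rw [if_pos rfl, hC'i]
        refine ⟨hT, h3, ?_⟩
        intro j hj hij
        rcases hcases j hj with rfl | h | h
        · exact absurd hij (lt_irrefl _)
        · exact absurd (hRQ j h r hi) (by omega)
        · rw [hC'J j h]; exact (h5 j h).2.1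
      · have hri : r ≠ i := fun h => hiR (h ▸ hr)
        rw [if_neg hri]
        obtain ⟨h7, h8, h9⟩ := hX r hr
        have hrm : r ∈ insert i R ∪ J := Finset.mem_union_left _ (Finset.mem_insert_of_mem hr)
        exact ⟨h7, (hC'C r hrm).trans h8, fun j hj hrj =>
          ant_mono (h9 j (hsub hj) hrj) le_rfl (hC'C j hj)⟩
    · intro r hr j hj hne v hv
      rcases Finset.mem_insert.1 hr with rfl | hr
      · rw [hC'i]
        have h7 : ws wt (nb G {v} ∩ P) ≤ lam' / 2 ^ k * ws wt P := by
          rcases hcases j hj with rfl | h | h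
          · exact absurd rfl hne
          · rw [hC'R j h] at hv; exact (h6 j h).2.2 v hv
          · rw [hC'J j h] at hv; exact (h5 j h).2.2.2 v hv
        exact h7.trans (mul_le_mul_of_nonneg_right hlamle (ws_nonneg _ _))
      · have hrm : r ∈ insert i R ∪ J := Finset.mem_union_left _ (Finset.mem_insert_of_mem hr)
        have h7 := hlink r hr j (hsub hj) hne v (hC'C j hj hv)
        have h8 := ws_mono wt (Finset.inter_subset_inter_left (hC'C r hrm) :
          nb G {v} ∩ C' r ⊆ nb G {v} ∩ C r)
        have h9 := (h6 r hr).2.1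
        rw [← hC'R r hr] at h9
        have h10 : lam' / 2 ^ (m + 1) * ws wt (C r) = lam' / 2 ^ m * (ws wt (C r) / 2) := by
          rw [pow_succ]; field_simp
        rw [h10] at h7
        have h11 : 0 ≤ lam' / 2 ^ m := by positivity
        have h12 := mul_le_mul_of_nonneg_left h9 h11
        linarith

end States

section Init
open Classical
variable {V : Type} [Fintype V]
variable {G : SimpleGraph V} {wt : V → NNReal} {I : Finset ℤ} {A : ℤ → Finset V}
    {lam γ δ ω : ℝ}

/-- the constant lost in each growing step -/
def e0 (T : ℕ) : ℝ := 1 / (2 * (T + 2))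

lemma e0_pos (T : ℕ) : 0 < e0 T := by unfold e0; positivity

lemma e0_le (T : ℕ) : e0 T ≤ 1 / 4 := by
  unfold e0
  apply one_div_le_one_div_of_le (by norm_num)
  have : (0:ℝ) ≤ T := by positivity
  linarith

lemma e0_mul (T : ℕ) : (T + 1) * e0 T ≤ 1 / 2 := by
  unfold e0
  have : (0:ℝ) ≤ T := by positivity
  rw [mul_one_div, div_le_div_iff₀ (by positivity) (by norm_num)]
  linarith

lemma stage1 (E : Env G wt I A lam γ δ ω) (T n : ℕ) (hT : 1 ≤ T) (hn : 1 ≤ n) (κ : ℝ)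
    (hκ0 : 0 < κ) (hκ1 : κ ≤ e0 T * e0 T) (hδ1 : (T + 1) * δ ≤ κ / 2) (hγ : γ ≤ κ / 4)
    (hτ : 4 ≤ κ / 8 / δ) (hω : δ ≤ (κ / 8 / δ / 2) ^ (T - 1) * ω) (hlam : lam ≤ κ)
    (hI : 1 + 2 * (T + 1) + 2 ^ T * (2 ^ T * n) ≤ I.card) :
    ∃ (z : V) (t a : ℕ) (Z X : ℕ → Finset V) (qz qx : ℕ → ℤ) (Q : Finset ℤ) (C : ℤ → Finset V),
      1 ≤ t ∧ t ≤ T ∧ 1 ≤ a ∧ a ≤ T ∧ Z 0 = {z} ∧ X 0 = {z} ∧ Lev G Z t ∧ Lev G X a ∧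
      Q ⊆ I ∧ n ≤ Q.card ∧
      (∀ j ∈ Q, C j ⊆ A j ∧ C j ⊆ nb G (Z t) ∧ C j ⊆ nb G (X a) ∧
        (∀ s < t, ant G (Z s) (C j)) ∧ (∀ s < a, ant G (X s) (C j)) ∧
        e0 T * e0 T ≤ ws wt (C j)) ∧
      (∀ i ≤ a, qx i ∈ I ∧ qx i ∉ Q ∧ X i ⊆ A (qx i)) ∧
      (∀ j, 1 ≤ j → j ≤ t → qz j ∈ I ∧ qz j ∉ Q ∧ Z j ⊆ A (qz j)) ∧
      (∀ i ≤ a, ∀ i' ≤ a, qx i = qx i' → i = i') ∧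
      (∀ j, 1 ≤ j → j ≤ t → ∀ j', 1 ≤ j' → j' ≤ t → qz j = qz j' → j = j') ∧
      (∀ i ≤ a, ∀ j, 1 ≤ j → j ≤ t → qx i ≠ qz j) := by
  have he := e0_pos T
  have he4 := e0_le T
  have hem := e0_mul T
  have hee : e0 T * e0 T ≤ e0 T * (1/4) := mul_le_mul_of_nonneg_left he4 he.le
  have hTr : (0:ℝ) ≤ T := by positivity
  have hdp := E.dpos
  obtain ⟨q0, hq0⟩ : I.Nonempty := Finset.card_pos.1 (by omega)
  have hc0 : (I.erase q0).card = I.card - 1 := Finset.card_erase_of_mem hq0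
  obtain ⟨P0, hP0, hP0c⟩ := Finset.exists_subset_card_eq (s := I.erase q0) (n := T + 1) (by omega)
  have hc1 := Finset.card_sdiff_of_subset hP0
  obtain ⟨P1, hP1, hP1c⟩ :=
    Finset.exists_subset_card_eq (s := I.erase q0 \ P0) (n := T + 1) (by omega)
  have hc2 := Finset.card_sdiff_of_subset hP1
  set Q0 := (I.erase q0 \ P0) \ P1 with hQ0
  have hP0I : P0 ⊆ I := hP0.trans (Finset.erase_subset _ _)
  have hP1I : P1 ⊆ I := (hP1.trans Finset.sdiff_subset).trans (Finset.erase_subset _ _)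
  have hQ0I : Q0 ⊆ I := (Finset.sdiff_subset.trans Finset.sdiff_subset).trans
    (Finset.erase_subset _ _)
  have d01 : Disjoint P0 P1 := by
    rw [Finset.disjoint_left]; intro x hx hx'
    exact (Finset.mem_sdiff.1 (hP1 hx')).2 hx
  have d0Q : Disjoint P0 Q0 := by
    rw [Finset.disjoint_left]; intro x hx hx'
    exact (Finset.mem_sdiff.1 (Finset.mem_sdiff.1 hx').1).2 hx
  have d1Q : Disjoint P1 Q0 := by
    rw [Finset.disjoint_left]; intro x hx hx'
    exact (Finset.mem_sdiff.1 hx').2 hx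
  have hq0P0 : q0 ∉ P0 := fun h => (Finset.mem_erase.1 (hP0 h)).1 rfl
  have hq0P1 : q0 ∉ P1 := fun h => 
    (Finset.mem_erase.1 (Finset.mem_sdiff.1 (hP1 h)).1).1 rfl
  have hq0Q : q0 ∉ Q0 := fun h => 
    (Finset.mem_erase.1 (Finset.mem_sdiff.1 (Finset.mem_sdiff.1 h).1).1).1 rfl
  have hκone : κ ≤ 1 := by linarith
  obtain ⟨B0, hB0⟩ := core_lem E P0 hP0I A (fun _ _ => le_rfl) κ
    (fun j hj => by rw [E.one j (hP0I hj)]; exact hκone) (by rw [hP0c]; push_cast; exact hδ1) hγ hκ0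
  obtain ⟨B1, hB1⟩ := core_lem E P1 hP1I A (fun _ _ => le_rfl) κ
    (fun j hj => by rw [E.one j (hP1I hj)]; exact hκone) (by rw [hP1c]; push_cast; exact hδ1) hγ hκ0
  have hδκ : δ ≤ κ / 2 := by nlinarith
  obtain ⟨p0, hp0⟩ : P0.Nonempty := Finset.card_pos.1 (by omega)
  obtain ⟨p1, hp1⟩ : P1.Nonempty := Finset.card_pos.1 (by omega)
  have cov0 := E.cover (hP0I hp0) hq0 (fun h => hq0P0 (h ▸ hp0)) (hB0 p0 hp0).1
    (le_refl (A q0)) (hδκ.trans (hB0 p0 hp0).2.1)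
  have cov1 := E.cover (hP1I hp1) hq0 (fun h => hq0P1 (h ▸ hp1)) (hB1 p1 hp1).1
    (le_refl (A q0)) (hδκ.trans (hB1 p1 hp1).2.1)
  obtain ⟨z, hz⟩ : (A q0 \ ((A q0 \ nb G (B0 p0)) ∪ (A q0 \ nb G (B1 p1)))).Nonempty := by
    apply nonempty_of_ws (wt := wt)
    have h1 := ws_sdiff_ge wt (A q0) ((A q0 \ nb G (B0 p0)) ∪ (A q0 \ nb G (B1 p1)))
    have h2 := ws_union_le wt (A q0 \ nb G (B0 p0)) (A q0 \ nb G (B1 p1))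
    rw [E.one q0 hq0] at h1
    linarith
  have hzA : z ∈ A q0 := (Finset.mem_sdiff.1 hz).1
  have hz0 : z ∈ nb G (B0 p0) := by
    by_contra h
    exact (Finset.mem_sdiff.1 hz).2 (Finset.mem_union_left _ (Finset.mem_sdiff.2 ⟨hzA, h⟩))
  have hz1 : z ∈ nb G (B1 p1) := by
    by_contra h
    exact (Finset.mem_sdiff.1 hz).2 (Finset.mem_union_right _ (Finset.mem_sdiff.2 ⟨hzA, h⟩))
  have hadj : ∀ (B : Finset V), z ∈ nb G B → (nb G {z} ∩ B).Nonempty := by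
    intro B h
    obtain ⟨x, hx, hxz⟩ := mem_nb.1 h
    exact ⟨x, Finset.mem_inter.2 ⟨mem_nb.2 ⟨z, by simp, hxz.symm⟩, hx⟩⟩
  obtain ⟨t, Z, qz, Q1, C1, t1, tT, Z0, Zlev, Zq, Zinj, hQ1, Q1c, hC1⟩ :=
    growth_lem E P0 Q0 hP0I hQ0I d0Q B0 A (fun j hj => (hB0 j hj).1) (fun _ _ => le_rfl)
    (κ / 8 / δ) 1 (e0 T) T (2 ^ T * n) hτ (Nat.one_le_iff_ne_zero.2 (by positivity)) hT
    (fun i hi j hj hij X hX hw => (hB0 i hi).2.2 j hj hij X hX hw)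
    (fun j hj => (E.one j (hQ0I hj)).ge) hP0c.ge z q0 hq0 hzA hq0Q ⟨p0, hp0, hadj _ hz0⟩
    (by linarith) (by linarith) (by omega) hω
  have hQ1I : Q1 ⊆ I := hQ1.trans hQ0I
  obtain ⟨a, X, qx, Q2, C2, a1, aT, X0, Xlev, Xq, Xinj, hQ2, Q2c, hC2⟩ :=
    growth_lem E P1 Q1 hP1I hQ1I (d1Q.mono_right hQ1) B1 C1 (fun j hj => (hB1 j hj).1)
    (fun j hj => (hC1 j hj).1)
    (κ / 8 / δ) (e0 T) (e0 T * e0 T) T n hτ hn hT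
    (fun i hi j hj hij X hX hw => (hB1 i hi).2.2 j hj hij X hX hw)
    (fun j hj => (hC1 j hj).2.2.2) hP1c.ge z q0 hq0 hzA (fun h => hq0Q (hQ1 h))
    ⟨p1, hp1, hadj _ hz1⟩
    (by linarith) (by nlinarith) (by omega) hω
  have qxP : ∀ i, 1 ≤ i → i ≤ a → qx i ∈ P1 := fun i hi hi' => (Xq i hi hi').1
  set qx' : ℕ → ℤ := fun i => if i = 0 then q0 else qx i with hqx'
  have qx0 : qx' 0 = q0 := by simp [hqx']
  have qxs : ∀ i, 1 ≤ i → qx' i = qx i := by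
    intro i hi; simp only [hqx']; rw [if_neg (by omega)]
  refine ⟨z, t, a, Z, X, qz, qx', Q2, C2, t1, tT, a1, aT, Z0, X0, Zlev, Xlev, hQ2.trans hQ1I, Q2c,
    ?_, ?_, ?_, ?_, Zinj, ?_⟩
  · intro j hj
    obtain ⟨g1, g2, g3, g4⟩ := hC2 j hj
    obtain ⟨f1, f2, f3, f4⟩ := hC1 j (hQ2 hj)
    exact ⟨g1.trans f1, g1.trans f2, g2, fun s hs => ant_mono (f3 s hs) le_rfl g1, g3, g4⟩
  · intro i hi
    rcases Nat.eq_zero_or_pos i with rfl | hi0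
    · rw [qx0, X0]
      exact ⟨hq0, fun h => hq0Q (hQ1 (hQ2 h)), by simpa using hzA⟩
    · rw [qxs i hi0]
      exact ⟨hP1I (qxP i hi0 hi), fun h => Finset.disjoint_left.1 d1Q (qxP i hi0 hi) (hQ1 (hQ2 h)),
        (Xq i hi0 hi).2.trans (hB1 _ (qxP i hi0 hi)).1⟩
  · intro j hj hj'
    have := (Zq j hj hj').1
    exact ⟨hP0I this, fun h => Finset.disjoint_left.1 d0Q this (hQ1 (hQ2 h)),
        (Zq j hj hj').2.trans (hB0 _ this).1⟩
  · intro i hi i' hi' h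
    rcases Nat.eq_zero_or_pos i with rfl | hi0 <;> rcases Nat.eq_zero_or_pos i' with rfl | hi0'
    · rfl
    · rw [qx0, qxs i' hi0'] at h
      exact absurd (h ▸ qxP i' hi0' hi') hq0P1
    · rw [qx0, qxs i hi0] at h
      exact absurd (h ▸ qxP i hi0 hi) hq0P1
    · rw [qxs i hi0, qxs i' hi0'] at h
      exact Xinj i hi0 hi i' hi0' hi' h
  · intro i hi j hj hj' h
    have hj0 := (Zq j hj hj').1
    rcases Nat.eq_zero_or_pos i with rfl | hi0
    · rw [qx0] at h
      exact hq0P0 (h ▸ hj0)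
    · rw [qxs i hi0] at h
      exact Finset.disjoint_left.1 d01 (h ▸ hj0) (qxP i hi0 hi)

end Init

section Init2
open Classical
variable {V : Type} [Fintype V]
variable {G : SimpleGraph V} {wt : V → NNReal} {I : Finset ℤ} {A : ℤ → Finset V}
    {lam γ δ ω : ℝ}

lemma path_lem (X : ℕ → Finset V) (a : ℕ) : Lev G X a → ∀ v ∈ X a,
    ∃ y : ℕ → V, y a = v ∧ (∀ i ≤ a, y i ∈ X i) ∧ ∀ i < a, G.Adj (y i) (y (i + 1)) := by
  induction a with
  | zero =>
    intro _ v hv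
    exact ⟨fun _ => v, rfl, fun i hi => by obtain rfl : i = 0 := by omega
                                           exact hv, fun i hi => by omega⟩
  | succ a ih =>
    intro hX v hv
    obtain ⟨u, hu, huv⟩ := mem_nb.1 (hX.1 a (by omega) hv)
    obtain ⟨y, ya, yX, yadj⟩ := ih ⟨fun i hi => hX.1 i (by omega),
      fun i j hij hj => hX.2 i j hij (by omega)⟩ u hu
    refine ⟨fun i => if i = a + 1 then v else y i, by simp, ?_, ?_⟩
    · intro i hi
      by_cases h : i = a + 1
      · subst h; simpa using hv
      · simp only [h, if_false]; exact yX i (by omega)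
    · intro i hi
      by_cases h : i = a
      · subst h
        simp only [if_true]
        rw [if_neg (by omega), ya]; exact huv
      · beta_reduce; rw [if_neg (by omega), if_neg (by omega)]
        exact yadj i (by omega)

/-- constants -/
def k3 (T : ℕ) : ℝ := e0 T * e0 T / 4
/-- constants -/
def k4 (T : ℕ) : ℝ := k3 T / (2 * (T + 1) ^ 2)
/-- constants -/
def k5 (T : ℕ) : ℝ := k4 T * e0 T

lemma k3_pos (T : ℕ) : 0 < k3 T := by have := e0_pos T; unfold k3; positivity
lemma k4_pos (T : ℕ) : 0 < k4 T := by have := k3_pos T; unfold k4; positivity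
lemma k5_pos (T : ℕ) : 0 < k5 T := by have := k4_pos T; have := e0_pos T; unfold k5; positivity
lemma k4_le (T : ℕ) : k4 T ≤ k3 T / 2 := by
  unfold k4
  apply div_le_div_of_nonneg_left (k3_pos T).le (by norm_num)
  have : (1:ℝ) ≤ (T + 1) ^ 2 := one_le_pow₀ (by linarith [(Nat.cast_nonneg T : (0:ℝ) ≤ T)])
  linarith
lemma k5_le (T : ℕ) : k5 T ≤ k4 T / 4 := by
  unfold k5
  have := mul_le_mul_of_nonneg_left (e0_le T) (k4_pos T).le
  linarith

/-- number of blocks needed to get started -/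
def startN (T n : ℕ) : ℕ :=
  1 + 2 * (T + 1) + 2 ^ T * (2 ^ T * ((T + 1) ^ 2 * (2 ^ T * n) + (T + 1)))

lemma init_lem (E : Env G wt I A lam γ δ ω) (T n : ℕ) (hT : 1 ≤ T) (hn : 1 ≤ n)
    (hδ1 : (T + 1) * δ ≤ k3 T / 2) (hγ : γ ≤ k5 T)
    (hτ : 4 ≤ k3 T / 8 / δ) (hω : δ ≤ (k3 T / 8 / δ / 2) ^ (T - 1) * ω)
    (hlam : lam ≤ k5 T / 4 ^ (n + 1)) (hI : startN T n ≤ I.card) :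
    ∃ (h b : ℕ) (L M : ℕ → Finset V) (Y C : ℕ → Finset V) (ql qm idx : ℕ → ℤ),
      St G I A h b L M (Finset.range n) Y C ql qm idx ∧ h + b ≤ 3 * T ∧
      ∀ j < n, k5 T / 4 ^ n ≤ ws wt (C j) := by
  have he := e0_pos T
  have he4 := e0_le T
  have hem := e0_mul T
  have p3 := k3_pos T
  have p4 := k4_pos T
  have p5 := k5_pos T
  have l4 := k4_le T
  have l5 := k5_le T
  have hTr : (0:ℝ) ≤ T := by positivity
  have hdp := E.dpos
  have hlam5 : lam ≤ k5 T := hlam.trans (div_le_self p5.le (one_le_pow₀ (by norm_num)))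
  have hk3 : k3 T = e0 T * e0 T / 4 := rfl
  obtain ⟨z, t, a, Z, X, qz, qx, Q, C, t1, tT, a1, aT, Z0, X0, Zlev, Xlev, hQI, hQc, hC, hqx, hqz,
    qxi, qzi, qxz⟩ := stage1 E T ((T + 1) ^ 2 * (2 ^ T * n) + (T + 1)) hT (by omega) (k3 T) p3
      (by linarith) hδ1 (by linarith) hτ hω (by linarith) hI
  -- splitting
  obtain ⟨Z', hZ', Q1, hQ1, Q1c, hw1, hw2⟩ := split_lem (G := G) (wt := wt) (Z t) Q C
    ((T + 1) ^ 2 * (2 ^ T * n)) (by omega) (fun j hj => (hC j hj).2.1) (by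
      intro j hj x hx
      have h1 := E.link' (hqz t t1 le_rfl).1 (hQI hj)
        (fun h => (hqz t t1 le_rfl).2.1 (h ▸ hj)) ((hqz t t1 le_rfl).2.2 hx) (hC j hj).1
      have h2 := (hC j hj).2.2.2.2.2
      linarith)
  have hc1 := Finset.card_sdiff_of_subset hQ1
  obtain ⟨P, hP, hPc⟩ := Finset.exists_subset_card_eq (s := Q \ Q1) (n := T + 1) (by omega)
  have hPQ : P ⊆ Q := hP.trans Finset.sdiff_subset
  have hPI : P ⊆ I := hPQ.trans hQI
  obtain ⟨B, hB⟩ := core_lem E P hPI (fun j => C j \ nb G Z')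
    (fun j hj => Finset.sdiff_subset.trans (hC j (hPQ hj)).1) (k3 T) (fun j hj => by
      have h1 := hw2 j (hP hj)
      have h2 := (hC j (hPQ hj)).2.2.2.2.2
      rw [hk3]; linarith) (by rw [hPc]; push_cast; exact hδ1) (by linarith) p3
  have hBC : ∀ j ∈ P, B j ⊆ C j := fun j hj => (hB j hj).1.trans Finset.sdiff_subset
  obtain ⟨p, hp⟩ : P.Nonempty := Finset.card_pos.1 (by omega)
  obtain ⟨u, hu⟩ : (B p).Nonempty := nonempty_of_ws (wt := wt) (by linarith [(hB p hp).2.1])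
  obtain ⟨v, hv, hvu⟩ := mem_nb.1 ((hC p (hPQ hp)).2.2.1 (hBC p hp hu))
  obtain ⟨y, ya, yX, yadj⟩ := path_lem X a Xlev v hv
  have hvA : v ∈ A (qx a) := (hqx a le_rfl).2.2 hv
  -- descending
  set Zm : ℕ → Finset V := fun s => if s = t then Z' else Z s with hZm
  have Zmt : Zm t = Z' := by simp [hZm]
  have Zms : ∀ s, s ≠ t → Zm s = Z s := fun s hs => by simp [hZm, hs]
  have Zmsub : ∀ s, Zm s ⊆ Z s := by
    intro s
    by_cases hs : s = t
    · rw [hs, Zmt]; exact hZ'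
    · rw [Zms s hs]
  have Zmlev : Lev G Zm t := by
    refine ⟨fun i hi => ?_, fun i j hij hj => ant_mono (Zlev.2 i j hij hj) (Zmsub i) (Zmsub j)⟩
    rw [Zms i (by omega)]
    exact (Zmsub _).trans (Zlev.1 i hi)
  have hw1' : ∀ q ∈ Q1, 2 * k3 T ≤ ws wt (C q ∩ nb G Z') := by
    intro q hq
    have h1 := hw1 q hq
    have h2 := (hC q (hQ1 hq)).2.2.2.2.2
    rw [hk3]; linarith
  have hat : (a + 1) * t ≤ (T + 1) ^ 2 := by
    rw [pow_two]; exact Nat.mul_le_mul (by omega) (by omega)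
  have hat1 : 1 ≤ (a + 1) * t := Nat.one_le_iff_ne_zero.2 (by positivity)
  have hdiv : ∀ w : ℝ, 2 * k3 T ≤ w → k4 T ≤ w / (2 * ((a + 1) * t : ℕ)) := by
    intro w hw
    have hat' : (((a + 1) * t : ℕ) : ℝ) ≤ (T + 1) ^ 2 := by exact_mod_cast hat
    have hat1' : (1:ℝ) ≤ (((a + 1) * t : ℕ) : ℝ) := by exact_mod_cast hat1
    unfold k4
    apply div_le_div₀ (by linarith) (by linarith) (by linarith) (by linarith)
  obtain ⟨h, L, ql, Q2, C2, h1, hat2, L0, ql0, Llev, Lq, qli, hQ2, Q2c, hC2⟩ :=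
    desc_lem (wt := wt) Zm t t1 Zmlev z (by rw [Zms 0 (by omega), Z0]) y a (by
      have := yX 0 (by omega)
      rw [X0] at this; simpa using this) yadj
      (fun i j hij hj => Xlev.2 i j hij hj _ (yX i (by omega)) _ (yX j hj)) Q1
      (fun q => C q ∩ nb G Z') (fun q hq => by rw [Zmt]; exact Finset.inter_subset_right)
      (fun q hq s hs => ant_mono ((hC q (hQ1 hq)).2.2.2.1 s hs) (Zmsub s) Finset.inter_subset_left)
      (fun q hq i hi => ant_mono ((hC q (hQ1 hq)).2.2.2.2.1 i hi)
        (by simpa using yX i hi.le) Finset.inter_subset_left)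
      (fun q hq => by
        rw [ya]
        refine le_trans ?_ (hdiv _ (hw1' q hq))
        have := E.link' (hqx a le_rfl).1 (hQI (hQ1 hq))
          (fun h => (hqx a le_rfl).2.1 (h ▸ hQ1 hq)) hvA
          (Finset.inter_subset_left.trans (hC q (hQ1 hq)).1 : C q ∩ nb G Z' ⊆ A q)
        linarith)
      qx qz qxi qzi qxz
  rw [ya] at L0
  have Q2card : 2 ^ T * n ≤ Q2.card := by
    by_contra hcon
    push Not at hcon
    have e1 : (a + 1) * t * Q2.card < (T + 1) ^ 2 * (2 ^ T * n) :=
      (Nat.mul_le_mul_right _ hat).trans_lt (Nat.mul_lt_mul_of_pos_left hcon (by positivity))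
    omega
  have hQ2Q : Q2 ⊆ Q := hQ2.trans hQ1
  have hPd : Disjoint P Q2 := by
    rw [Finset.disjoint_left]; intro x hx hx'
    exact (Finset.mem_sdiff.1 (hP hx)).2 (hQ2 hx')
  have hC2A : ∀ q ∈ Q2, C2 q ⊆ A q := fun q hq =>
    ((hC2 q hq).1.trans Finset.inter_subset_left).trans (hC q (hQ2Q hq)).1
  -- growing from v
  obtain ⟨b, M, qm, Q3, C3, b1, bT, M0, Mlev, Mq, Minj, hQ3, Q3c, hC3⟩ :=
    growth_lem E P Q2 hPI (hQ2Q.trans hQI) hPd B C2 (fun j hj => (hBC j hj).trans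
      (hC j (hPQ hj)).1) hC2A (k3 T / 8 / δ) (k4 T) (k5 T) T n hτ hn hT
      (fun i hi j hj hij X hX hw => (hB i hi).2.2 j hj hij X hX hw)
      (fun j hj => (hdiv _ (hw1' j (hQ2 hj))).trans (hC2 j hj).2.2.2) hPc.ge v (qx a)
      (hqx a le_rfl).1 hvA (fun h => (hqx a le_rfl).2.1 (hQ2Q h))
      ⟨p, hp, ⟨u, Finset.mem_inter.2 ⟨mem_nb.2 ⟨v, by simp, hvu⟩, hu⟩⟩⟩
      hlam5 (by
        have : (T + 1) * k5 T ≤ k4 T / 2 := by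
          unfold k5
          have := mul_le_mul_of_nonneg_left hem p4.le
          linarith
        linarith) (by omega) hω
  have hQ3Q : Q3 ⊆ Q := hQ3.trans hQ2Q
  have qlfact : ∀ s ≤ h, ql s ∈ I ∧ ql s ∉ Q ∧ L s ⊆ A (ql s) := by
    intro s hs
    rcases Nat.eq_zero_or_pos s with rfl | hs0
    · rw [ql0, L0]
      exact ⟨(hqx a le_rfl).1, (hqx a le_rfl).2.1, by simpa using hvA⟩
    · rcases Lq s hs0 hs with ⟨i, hi, e1, e2⟩ | ⟨j, j1, jt, e1, e2⟩
      · rw [e1, e2]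
        exact ⟨(hqx i hi.le).1, (hqx i hi.le).2.1, by simpa using (hqx i hi.le).2.2 (yX i hi.le)⟩
      · rw [e2]
        exact ⟨(hqz j j1 jt).1, (hqz j j1 jt).2.1, (e1.trans (Zmsub j)).trans (hqz j j1 jt).2.2⟩
  -- grading
  obtain ⟨idx, C4, Y, iQ, iinj, hC4, Ycov, Yant⟩ := grade_lem (G := G) (wt := wt) (L h) n Q3 C3
    (k5 T) lam Q3c (fun j hj => (hC3 j hj).1.trans (hC2 j (hQ3 hj)).2.1)
    (fun j hj => (hC3 j hj).2.2.2) (fun j hj x hx => E.link' (qlfact h le_rfl).1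
      (hQI (hQ3Q hj)) (fun e => (qlfact h le_rfl).2.1 (e ▸ hQ3Q hj)) ((qlfact h le_rfl).2.2 hx)
      ((hC3 j hj).1.trans (hC2A j (hQ3 hj)))) hlam p5
  have mr : ∀ {j}, j ∈ Finset.range n → j < n := fun h => Finset.mem_range.1 h
  refine ⟨h, b, L, M, Y, C4, ql, qm, idx, ?_, by omega, fun j hj => (hC4 j hj).2.1⟩
  refine ⟨h1, b1, ⟨v, L0, M0⟩, Llev, Mlev, ?_, ?_, ?_, ?_, ?_, ?_, ?_, ?_, ?_, ?_, qli, Minj, ?_,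
    ?_, ?_, ?_⟩
  · intro s r hs hs' hr hr'
    obtain ⟨qP, Msub⟩ := Mq r hr hr'
    rcases Lq s hs hs' with ⟨i, hi, e1, e2⟩ | ⟨j, j1, jt, e1, e2⟩
    · rw [e1]
      exact ant_mono ((hC _ (hPQ qP)).2.2.2.2.1 i hi) (by simpa using yX i hi.le)
        (Msub.trans (hBC _ qP))
    · by_cases hj : j = t
      · rw [hj, Zmt] at e1
        exact ant_mono ant_sdiff e1 (Msub.trans (hB _ qP).1)
      · exact ant_mono ((hC _ (hPQ qP)).2.2.2.1 j (by omega)) (e1.trans (Zmsub j))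
          (Msub.trans (hBC _ qP))
  · intro j hj s hs
    have jQ := iQ j (mr hj)
    exact ant_mono ((hC2 _ (hQ3 jQ)).2.2.1 s hs) le_rfl ((hC4 j (mr hj)).1.trans (hC3 _ jQ).1)
  · intro j hj s hs
    have jQ := iQ j (mr hj)
    exact ant_mono ((hC3 _ jQ).2.2.1 s hs) le_rfl (hC4 j (mr hj)).1
  · intro j hj
    exact (hC4 j (mr hj)).1.trans (hC3 _ (iQ j (mr hj))).2.1
  · exact fun j hj => (hC4 j (mr hj)).2.2
  · exact fun i hi j hj => Ycov i (mr hi) j (mr hj)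
  · exact fun i hi j hj => Yant i (mr hi) j (mr hj)
  · exact fun s hs => ⟨(qlfact s hs).1, (qlfact s hs).2.2⟩
  · intro s hs hs'
    obtain ⟨qP, Msub⟩ := Mq s hs hs'
    exact ⟨hPI qP, Msub.trans ((hBC _ qP).trans (hC _ (hPQ qP)).1)⟩
  · intro j hj
    have jQ := iQ j (mr hj)
    exact ⟨hQI (hQ3Q jQ), (hC4 j (mr hj)).1.trans ((hC3 _ jQ).1.trans (hC2A _ (hQ3 jQ)))⟩
  · exact fun j hj j' hj' => iinj j (mr hj) j' (mr hj')
  · intro j hj s hs e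
    exact (qlfact s hs).2.1 (e ▸ hQ3Q (iQ j (mr hj)))
  · intro j hj s hs hs' e
    exact Finset.disjoint_left.1 hPd (Mq s hs hs').1 (e ▸ hQ3 (iQ j (mr hj)))
  · intro s hs r hr hr' e
    exact (qlfact s hs).2.1 (e ▸ hPQ (Mq r hr hr').1)

end Init2

section Consts
open Classical
variable {V : Type} [Fintype V]
variable {G : SimpleGraph V} {wt : V → NNReal} {I : Finset ℤ} {A : ℤ → Finset V}
    {lam γ δ ω : ℝ}

lemma nn_mono (s : ℕ) : Monotone (nn s) := by
  apply monotone_nat_of_le_succ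
  intro m
  rw [nn]
  have : 1 ≤ 2 ^ s := Nat.one_le_two_pow
  nlinarith

/-- minimum weight -/
def kmin (T s e : ℕ) : ℝ := k5 T / 4 ^ (nn s e) / (2 ^ (s + 3)) ^ e

lemma kmin_pos (T s e : ℕ) : 0 < kmin T s e := by have := k5_pos T; unfold kmin; positivity

/-- all numerical hypotheses -/
structure Num (N : ℕ) (lam γ δ ω ρ lam' : ℝ) (T s k ℓ : ℕ) : Prop where
  hT : 1 ≤ T
  hδ1 : (T + 1) * δ ≤ k3 T / 2
  hγ : γ ≤ k5 T
  hτ : 4 ≤ k3 T / 8 / δ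
  hω : δ ≤ (k3 T / 8 / δ / 2) ^ (T - 1) * ω
  hlam : lam ≤ k5 T / 4 ^ (nn s (k + ℓ) + 1)
  par : Par N lam γ δ ρ (lam' / 2 ^ k) (kmin T s (k + ℓ)) s (nn s (k + ℓ) + k)

lemma main_lem (E : Env G wt I A lam γ δ ω) {ρ lam' : ℝ} {T s k ℓ : ℕ} (hl' : 0 < lam')
    (hℓ : 3 * T ≤ ℓ) (H : Num (Fintype.card V) lam γ δ ω ρ lam' T s k ℓ)
    (hI : startN T (nn s (k + ℓ)) ≤ I.card) :
    ∃ (h b : ℕ) (L M : ℕ → Finset V) (Y : ℕ → Finset V) (ql qm idx : ℕ → ℤ)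
      (R : Finset ℕ) (C X : ℕ → Finset V), h + b = ℓ ∧ R.card = k ∧
        St G I A h b L M R Y C ql qm idx ∧ (∀ r ∈ R, ρ / 2 ^ k ≤ ws wt (C r)) ∧
        (∀ r ∈ R, X r ⊆ M b ∧ C r ⊆ nb G (X r) ∧ ∀ j ∈ R, r < j → ant G (X r) (C j)) ∧
        (∀ r ∈ R, ∀ j ∈ R, j ≠ r → ∀ v ∈ C j,
          ws wt (nb G {v} ∩ C r) ≤ lam' * ws wt (C r)) := by
  obtain ⟨h, b, L, M, Y, C, ql, qm, idx, S, hb, hw⟩ := init_lem E T (nn s (k + ℓ)) H.hT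
    (nn_pos _ _) H.hδ1 H.hγ H.hτ H.hω H.hlam hI
  have hp := kmin_pos T s (k + ℓ)
  obtain ⟨L', M', Q', C', qm', S', hQ', hQn, hw'⟩ := S.extend_many E H.par k (ℓ - (h + b)) (by
      intro j hj
      refine le_trans ?_ (hw j (Finset.mem_range.1 hj))
      have h1 : kmin T s (k + ℓ) * (2 ^ (s + 3)) ^ (k + ℓ) = k5 T / 4 ^ (nn s (k + ℓ)) := by
        unfold kmin
        exact div_mul_cancel₀ _ (by positivity)
      rw [← h1]
      apply mul_le_mul_of_nonneg_left _ hp.le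
      exact pow_le_pow_right₀ (one_le_pow₀ (by norm_num)) (by omega))
      (by rw [Finset.card_range]; exact nn_mono s (by omega))
      (by rw [Finset.card_range]; omega)
  obtain ⟨R, C'', X, h1, h2, h3, h4, h5⟩ := St.final E H.par hl' k ∅ Q' C' (fun _ => ∅) (by simp)
    (by simpa using S') (by simp) hQ' hQn (by simp) hw' (by simp) (by simp) (by simp)
  exact ⟨h, _, L', M', Y, ql, qm', idx, R, C'', X, by omega, h1, h2, h3, h4, h5⟩

set_option maxHeartbeats 2000000 in
lemma consts (ℓ : ℕ) (c : ℝ) (hc : 0 < c) (k : ℕ) (d lam' : ℝ) (hd0 : 0 < d)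
    (hl0 : 0 < lam') (hl1 : lam' ≤ 1) :
    ∃ (K s : ℕ) (lam : ℝ), 1 ≤ K ∧ 0 < lam ∧ startN ⌈1/c⌉₊ (nn s (k + ℓ)) ≤ K ∧
      ∀ N : ℕ, K ≤ N → Num N lam ((2 : ℝ) ^ (-(6 : ℤ) - 2 * (ℓ : ℤ)) / (K : ℝ))
        ((K : ℝ) ^ (-(K : ℤ)) * (N : ℝ) ^ (-c)) (1 / N) ((N:ℝ) ^ (- min d c)) lam'
          ⌈1/c⌉₊ s k ℓ := by
  set T := ⌈1/c⌉₊ with hTdef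
  set d1 := min d c with hd1
  have hd1p : 0 < d1 := lt_min hd0 hc
  set s := ⌈2/d1⌉₊ with hs
  set κ := kmin T s (k + ℓ) with hκ
  have hκp : 0 < κ := kmin_pos _ _ _
  have hT1 : 1 ≤ T := Nat.one_le_iff_ne_zero.2 (by
    have : 0 < T := Nat.ceil_pos.2 (by positivity)
    omega)
  have hTc : 1 ≤ c * T := by
    have := Nat.le_ceil (1/c)
    rw [div_le_iff₀ hc] at this
    linarith
  have hsd : 2 ≤ d1 * s := by
    have := Nat.le_ceil (2/d1)
    rw [div_le_iff₀ hd1p] at this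
    linarith
  have p3 := k3_pos T
  have p5 := k5_pos T
  set c1 : ℝ := 4 * 2 ^ s / κ with hc1
  have hc1p : 0 < c1 := by positivity
  set c2 : ℝ := (8 * 2 ^ s / κ) ^ s with hc2
  have hc2p : 0 < c2 := by positivity
  obtain ⟨K, hK⟩ := exists_nat_ge ((startN T (nn s (k + ℓ)) : ℝ) + 2 * (T + 1) / k3 T + 32 / k3 T +
    16 / k3 T + 1 / k5 T + 2 ^ (s + 3) / κ + c1 ^ (1 / d1) + (c2 + 1) + 1)
  have q1 : 0 < 2 * ((T:ℝ) + 1) / k3 T := by positivity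
  have q2 : 0 < 32 / k3 T := by positivity
  have q3 : 0 < 16 / k3 T := by positivity
  have q4 : 0 < 1 / k5 T := by positivity
  have q5 : 0 < 2 ^ (s + 3) / κ := by positivity
  have q6 : 0 < c1 ^ (1 / d1) := by positivity
  have q0 : 0 ≤ (startN T (nn s (k + ℓ)) : ℝ) := by positivity
  set lam : ℝ := min (k5 T / 4 ^ (nn s (k + ℓ) + 1))
    (κ / 2 ^ s * (lam' / 2 ^ k) / (16 * ((nn s (k + ℓ) + k : ℕ) + (nn s (k + ℓ) + k : ℕ) + 1)))
    with hlam
  have hK1 : (1:ℝ) ≤ K := by linarith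
  have hK0 : (0:ℝ) < K := by linarith
  have hK1' : 1 ≤ K := by exact_mod_cast hK1
  refine ⟨K, s, lam, hK1', ?_, ?_, ?_⟩
  · exact lt_min (by positivity) (by positivity)
  · have : (startN T (nn s (k + ℓ)) : ℝ) ≤ K := by linarith
    exact_mod_cast this
  intro N hKN
  have hKN' : (K:ℝ) ≤ N := by exact_mod_cast hKN
  have hN1 : (1:ℝ) ≤ N := by linarith
  have hN0 : (0:ℝ) < N := by linarith
  set γ := (2 : ℝ) ^ (-(6 : ℤ) - 2 * (ℓ : ℤ)) / (K : ℝ) with hγdef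
  set δ := (K : ℝ) ^ (-(K : ℤ)) * (N : ℝ) ^ (-c) with hδdef
  have hγ : γ ≤ 1 / K := by
    apply div_le_div_of_nonneg_right _ hK0.le
    apply zpow_le_one_of_nonpos₀ (by norm_num) (by omega)
  have hKK : (K : ℝ) ^ (-(K : ℤ)) ≤ 1 / K := by
    rw [zpow_neg, zpow_natCast, one_div]
    apply inv_anti₀ hK0
    exact le_self_pow₀ hK1 (by omega)
  have hKKp : 0 < (K : ℝ) ^ (-(K : ℤ)) := by positivity
  have hNc : (N : ℝ) ^ (-c) ≤ 1 := Real.rpow_le_one_of_one_le_of_nonpos hN1 (by linarith)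
  have hNcp : 0 < (N : ℝ) ^ (-c) := by positivity
  have hδp : 0 < δ := by positivity
  have hδK : δ ≤ 1 / K := by
    calc δ ≤ (K : ℝ) ^ (-(K : ℤ)) * 1 := mul_le_mul_of_nonneg_left hNc hKKp.le
      _ ≤ _ := by linarith
  have hKle : ∀ x y : ℝ, 0 < x → 0 < y → x / y ≤ K → x * (1 / K) ≤ y := by
    intro x y hx hy h
    rw [div_le_iff₀ hy] at h
    rw [mul_one_div, div_le_iff₀ hK0]
    linarith
  have g1 := hKle _ _ (by positivity) p3 (show 2 * ((T:ℝ) + 1) / k3 T ≤ K by linarith)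
  have g2 := hKle _ _ (by positivity) p3 (show 32 / k3 T ≤ K by linarith)
  have g3 := hKle _ _ (by positivity) p3 (show 16 / k3 T ≤ K by linarith)
  have g4 := hKle _ _ (by positivity) p5 (show 1 / k5 T ≤ K by linarith)
  have g5 := hKle _ _ (by positivity) hκp (show 2 ^ (s + 3) / κ ≤ K by linarith)
  have hTr : (0:ℝ) ≤ T := by positivity
  refine ⟨hT1, ?_, by linarith, ?_, ?_, min_le_left _ _, ?_⟩
  · have := mul_le_mul_of_nonneg_left hδK (show (0:ℝ) ≤ T + 1 by linarith)
    linarith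
  · rw [le_div_iff₀ hδp]
    linarith
  · obtain ⟨T', hT'⟩ : ∃ T', T = T' + 1 := ⟨T - 1, by omega⟩
    have hx : 0 < k3 T / 16 := by positivity
    have h1 : δ ^ T * N ≤ (k3 T / 16) ^ (T - 1) := by
      have e1 : ((N : ℝ) ^ (-c)) ^ T * N ≤ 1 := by
        rw [← Real.rpow_natCast, ← Real.rpow_mul hN0.le]
        nth_rewrite 2 [← Real.rpow_one (N:ℝ)]
        rw [← Real.rpow_add hN0]
        exact Real.rpow_le_one_of_one_le_of_nonpos hN1 (by linarith)
      have e2 : (K : ℝ) ^ (-(K : ℤ)) ≤ k3 T / 16 := by linarith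
      have e3 : ((K : ℝ) ^ (-(K : ℤ))) ^ T ≤ (k3 T / 16) ^ T := pow_le_pow_left₀ hKKp.le e2 _
      have e5 : k3 T / 16 ≤ 1 := by
        have := e0_le T; have := e0_pos T
        have : k3 T ≤ 1 := by unfold k3; nlinarith
        linarith
      have e4 : (k3 T / 16) ^ T ≤ (k3 T / 16) ^ (T - 1) :=
        pow_le_pow_of_le_one hx.le e5 (by omega)
      calc δ ^ T * N = ((K : ℝ) ^ (-(K : ℤ))) ^ T * (((N : ℝ) ^ (-c)) ^ T * N) := by
            rw [hδdef, mul_pow]; ring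
        _ ≤ ((K : ℝ) ^ (-(K : ℤ))) ^ T * 1 := mul_le_mul_of_nonneg_left e1 (by positivity)
        _ ≤ _ := by linarith
    have h2 : k3 T / 8 / δ / 2 = (k3 T / 16) / δ := by ring
    rw [h2, div_pow, mul_one_div, div_div, le_div_iff₀ (by positivity)]
    have h3 : δ * (δ ^ (T - 1) * N) = δ ^ T * N := by
      rw [hT']; simp only [Nat.add_sub_cancel]; ring
    rw [h3]; exact h1
  · set ρ := (N:ℝ) ^ (-d1) with hρ
    have hρp : 0 < ρ := by positivity
    refine ⟨hκp, hρp, ?_, ?_, ?_, by positivity, ?_, ?_, ?_⟩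
    · calc δ ≤ 1 * (N:ℝ) ^ (-c) := mul_le_mul_of_nonneg_right (by
            refine hKK.trans ?_
            rw [div_le_one hK0]; exact hK1) hNcp.le
        _ ≤ ρ := by
            rw [one_mul]
            exact Real.rpow_le_rpow_of_exponent_le hN1 (by linarith [min_le_right d c])
    · have e1 : c1 ^ (1 / d1) ≤ (N:ℝ) := by linarith
      have e2 : c1 ≤ (N:ℝ) ^ d1 := by
        have := Real.rpow_le_rpow q6.le e1 hd1p.le
        rwa [← Real.rpow_mul hc1p.le, one_div_mul_cancel hd1p.ne', Real.rpow_one] at this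
      have e3 : κ / 2 ^ s / 4 = c1⁻¹ := by rw [hc1]; field_simp
      rw [e3, hρ, Real.rpow_neg hN0.le]
      exact inv_anti₀ hc1p e2
    · have e1 : ρ ^ s ≤ (N:ℝ) ^ (-2 : ℝ) := by
        rw [hρ, ← Real.rpow_natCast, ← Real.rpow_mul hN0.le]
        exact Real.rpow_le_rpow_of_exponent_le hN1 (by linarith)
      have e2 : (N:ℝ) ^ (-2 : ℝ) = 1 / (N * N) := by
        rw [Real.rpow_neg hN0.le, one_div]
        norm_num [pow_two]
      have e3 : (8 * ρ / (κ / 2 ^ s)) ^ s = c2 * ρ ^ s := by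
        rw [hc2, ← mul_pow]; congr 1; field_simp
      rw [e3]
      rw [e2] at e1
      have e4 : (N:ℝ) * (c2 * ρ ^ s) ≤ N * (c2 * (1 / (N * N))) := by gcongr
      have e5 : (N:ℝ) * (c2 * (1 / (N * N))) = c2 / N := by field_simp
      have e6 : c2 / N < 1 := by rw [div_lt_one hN0]; linarith
      linarith
    · rw [div_le_one (by positivity)]
      exact hl1.trans (one_le_pow₀ (by norm_num))
    · have := min_le_right (k5 T / 4 ^ (nn s (k + ℓ) + 1))
        (κ / 2 ^ s * (lam' / 2 ^ k) / (16 * ((nn s (k + ℓ) + k : ℕ) + (nn s (k + ℓ) + k : ℕ) + 1)))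
      rw [← hlam, le_div_iff₀ (by positivity)] at this
      linarith
    · rw [le_div_iff₀ (by positivity)]
      have := mul_le_mul_of_nonneg_left hγ (show (0:ℝ) ≤ 2 ^ (s + 3) by positivity)
      linarith

end Consts

section Convert
open Classical
variable {V : Type} [Fintype V]
variable {G : SimpleGraph V} {wt : V → NNReal} {I : Finset ℤ} {A : ℤ → Finset V}
    {lam γ δ ω : ℝ}

lemma lev_conv {L : ℕ → Finset V} {h : ℕ} (h1 : 1 ≤ h) {v : V} (L0 : L 0 = {v}) (hL : Lev G L h)
    (hdis : ∀ s ≤ h, ∀ s' ≤ h, s ≠ s' → Disjoint (L s) (L s')) :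
    IsLevelling G (fun i => (L i : Set V)) h := by
  refine ⟨h1, by simp [L0], ?_, ?_, ?_⟩
  · intro i hi j hj hij
    exact Finset.disjoint_coe.2 (hdis i hi j hj hij)
  · intro i hi hih b hb
    obtain ⟨i, rfl⟩ : ∃ i', i = i' + 1 := ⟨i - 1, by omega⟩
    have := mem_nb.1 (hL.1 i (by omega) (by simpa using hb))
    simpa using this
  · intro i hi hih g hg x hx y hy
    exact hL.2 g i hg hih x (by simpa using hx) y (by simpa using hy)

lemma reach_conv {L : ℕ → Finset V} {h : ℕ} (hL : IsLevelling G (fun i => (L i : Set V)) h)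
    (U : Set V) (hU1 : ∀ u ∈ U, u ∈ nb G (L h)) (hU2 : ∀ s < h, ∀ x ∈ L s, ∀ u ∈ U, ¬ G.Adj x u)
    (hU3 : ∀ s ≤ h, Disjoint (L s : Set V) U) :
    Reaches G (fun i => (L i : Set V)) h U := by
  obtain ⟨h1, h2, h3, h4, h5⟩ := hL
  refine ⟨by omega, ?_, ?_, ?_, ?_⟩
  · beta_reduce
    rw [if_neg (by omega)]; exact h2
  · intro i hi j hj hij
    beta_reduce
    by_cases e1 : i = h + 1
    · rw [if_pos e1, if_neg (by omega)]
      exact (hU3 j (by omega)).symm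
    · rw [if_neg e1]
      by_cases e2 : j = h + 1
      · rw [if_pos e2]; exact hU3 i (by omega)
      · rw [if_neg e2]; exact h3 i (by omega) j (by omega) hij
  · intro i hi hih
    beta_reduce
    rw [if_neg (show ¬ i - 1 = h + 1 by omega)]
    by_cases e1 : i = h + 1
    · rw [if_pos e1]
      intro b hb
      obtain ⟨x, hx, hxb⟩ := mem_nb.1 (hU1 b hb)
      exact ⟨x, by rw [e1]; simpa using hx, hxb⟩
    · rw [if_neg e1]; exact h4 i hi (by omega)
  · intro i hi hih g hg
    beta_reduce
    rw [if_neg (show ¬ g = h + 1 by omega)]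
    by_cases e1 : i = h + 1
    · rw [if_pos e1]
      intro x hx u hu
      exact hU2 g (by omega) x (by simpa using hx) u hu
    · rw [if_neg e1]; exact h5 i hi (by omega) g hg

/-- blocks indexed by integers -/
def Jof (R : Finset ℕ) : Finset ℤ := R.map Nat.castEmbedding

lemma mem_Jof {R : Finset ℕ} {j : ℤ} : j ∈ Jof R ↔ ∃ r ∈ R, (r : ℤ) = j := by
  simp [Jof]

/-- blocks indexed by integers -/
def Bof (C : ℕ → Finset V) (j : ℤ) : Set V := (C j.toNat : Set V)

lemma Bof_cast (C : ℕ → Finset V) (r : ℕ) : Bof C (r : ℤ) = (C r : Set V) := by simp [Bof]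

lemma St.convert {h b : ℕ} {L M : ℕ → Finset V} {R : Finset ℕ} {Y C X : ℕ → Finset V}
    {ql qm idx : ℕ → ℤ} (S : St G I A h b L M R Y C ql qm idx)
    (hA : ∀ i ∈ I, ∀ j ∈ I, i ≠ j → Disjoint (A i) (A j))
    (hne : ∀ r ∈ R, (C r).Nonempty)
    (hX : ∀ r ∈ R, X r ⊆ M b ∧ C r ⊆ nb G (X r) ∧ ∀ j ∈ R, r < j → ant G (X r) (C j)) :
    IsBiGrading G (fun i => (L i : Set V)) h (fun i => (M i : Set V)) b (Jof R) (Bof C) ∧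
    RainbowBiLevelling I (fun i => (A i : Set V)) (fun i => (L i : Set V)) h
      (fun i => (M i : Set V)) b (Jof R) (Bof C) := by
  obtain ⟨v, L0, M0⟩ := S.root
  have hdis : ∀ {i j : ℤ} {P Q : Finset V}, i ∈ I → P ⊆ A i → j ∈ I → Q ⊆ A j → i ≠ j →
      Disjoint P Q := fun hi hP hj hQ hij => (hA _ hi _ hj hij).mono hP hQ
  have dL : ∀ s ≤ h, ∀ s' ≤ h, s ≠ s' → Disjoint (L s) (L s') := fun s hs s' hs' e =>
    hdis (S.qlA s hs).1 (S.qlA s hs).2 (S.qlA s' hs').1 (S.qlA s' hs').2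
      (fun e' => e (S.ql_inj s hs s' hs' e'))
  have dLM : ∀ s ≤ h, ∀ t, 1 ≤ t → t ≤ b → Disjoint (L s) (M t) := fun s hs t ht ht' =>
    hdis (S.qlA s hs).1 (S.qlA s hs).2 (S.qmA t ht ht').1 (S.qmA t ht ht').2
      (S.qlm s hs t ht ht')
  have LM0 : L 0 = M 0 := by rw [L0, M0]
  have dM : ∀ s ≤ b, ∀ s' ≤ b, s ≠ s' → Disjoint (M s) (M s') := by
    intro s hs s' hs' e
    rcases Nat.eq_zero_or_pos s with rfl | h0
    · rw [← LM0]; exact dLM 0 (by omega) s' (by omega) hs'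
    · rcases Nat.eq_zero_or_pos s' with rfl | h0'
      · rw [← LM0]; exact (dLM 0 (by omega) s (by omega) hs).symm
      · exact hdis (S.qmA s h0 hs).1 (S.qmA s h0 hs).2 (S.qmA s' h0' hs').1 (S.qmA s' h0' hs').2
          (fun e' => e (S.qm_inj s h0 hs s' h0' hs' e'))
  have dLC : ∀ s ≤ h, ∀ r ∈ R, Disjoint (L s) (C r) := fun s hs r hr =>
    hdis (S.qlA s hs).1 (S.qlA s hs).2 (S.qcA r hr).1 (S.qcA r hr).2
      (fun e => S.qcl r hr s hs e.symm)
  have dMC : ∀ s ≤ b, ∀ r ∈ R, Disjoint (M s) (C r) := by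
    intro s hs r hr
    rcases Nat.eq_zero_or_pos s with rfl | h0
    · rw [← LM0]; exact dLC 0 (by omega) r hr
    · exact hdis (S.qmA s h0 hs).1 (S.qmA s h0 hs).2 (S.qcA r hr).1 (S.qcA r hr).2
        (fun e => S.qcm r hr s h0 hs e.symm)
  have levL := lev_conv S.h1 L0 S.levL dL
  have levM := lev_conv S.b1 M0 S.levM dM
  have memU : ∀ u, u ∈ (⋃ j ∈ Jof R, Bof C j) → ∃ r ∈ R, u ∈ C r := by
    intro u hu
    simp only [Set.mem_iUnion] at hu
    obtain ⟨j, hj, hu⟩ := hu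
    obtain ⟨r, hr, rfl⟩ := mem_Jof.1 hj
    exact ⟨r, hr, by simpa [Bof_cast] using hu⟩
  have rL : Reaches G (fun i => (L i : Set V)) h (⋃ j ∈ Jof R, Bof C j) := by
    apply reach_conv levL
    · intro u hu
      obtain ⟨r, hr, hu⟩ := memU u hu
      exact nb_mono (S.YL r hr) (S.Ycov r hr r hr le_rfl hu)
    · intro s hs x hx u hu
      obtain ⟨r, hr, hu⟩ := memU u hu
      exact S.CL r hr s hs x hx u hu
    · intro s hs
      rw [Set.disjoint_left]
      intro u hu hu'
      obtain ⟨r, hr, hu'⟩ := memU u hu'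
      exact Finset.disjoint_left.1 (dLC s hs r hr) (by simpa using hu) hu'
  have rM : Reaches G (fun i => (M i : Set V)) b (⋃ j ∈ Jof R, Bof C j) := by
    apply reach_conv levM
    · intro u hu
      obtain ⟨r, hr, hu⟩ := memU u hu
      exact S.Mcov r hr hu
    · intro s hs x hx u hu
      obtain ⟨r, hr, hu⟩ := memU u hu
      exact S.CM r hr s hs x hx u hu
    · intro s hs
      rw [Set.disjoint_left]
      intro u hu hu'
      obtain ⟨r, hr, hu'⟩ := memU u hu'
      exact Finset.disjoint_left.1 (dMC s hs r hr) (by simpa using hu) hu'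
  have memI : ∀ (F : ℕ → Finset V) (m : ℕ) (u : V),
      u ∈ (⋃ j ∈ Finset.Icc 1 m, (F j : Set V)) → ∃ j, 1 ≤ j ∧ j ≤ m ∧ u ∈ F j := by
    intro F m u hu
    simp only [Set.mem_iUnion, Finset.mem_Icc] at hu
    obtain ⟨j, hj, hu⟩ := hu
    exact ⟨j, hj.1, hj.2, by simpa using hu⟩
  refine ⟨⟨⟨⟨?_, ?_⟩, levL, levM, ⟨?_, ?_, ?_⟩, rM, rL, ?_⟩, rM, ?_⟩, ?_⟩
  · intro j hj
    obtain ⟨r, hr, rfl⟩ := mem_Jof.1 hj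
    rw [Bof_cast]; exact Finset.coe_nonempty.2 (hne r hr)
  · intro i hi j hj hij
    obtain ⟨r, hr, rfl⟩ := mem_Jof.1 hi
    obtain ⟨r', hr', rfl⟩ := mem_Jof.1 hj
    rw [Bof_cast, Bof_cast]
    refine Finset.disjoint_coe.2 (hdis (S.qcA r hr).1 (S.qcA r hr).2 (S.qcA r' hr').1
      (S.qcA r' hr').2 (fun e => hij ?_))
    rw [S.qc_inj r hr r' hr' e]
  · beta_reduce; rw [LM0]
  · rw [Set.disjoint_left]
    intro u hu hu'
    obtain ⟨t, t1, tb, ht⟩ := memI M b u hu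
    obtain ⟨s, s1, sh, hs⟩ := memI L h u hu'
    exact Finset.disjoint_left.1 (dLM s sh t t1 tb) hs ht
  · intro u hu u' hu' hadj
    obtain ⟨t, t1, tb, ht⟩ := memI M b u hu
    obtain ⟨s, s1, sh, hs⟩ := memI L h u' hu'
    exact S.par s t s1 sh t1 tb u' hs u ht hadj.symm
  · intro j hj
    obtain ⟨r, hr, rfl⟩ := mem_Jof.1 hj
    refine ⟨(Y r : Set V), Finset.coe_subset.2 (S.YL r hr), ?_, ?_⟩
    · intro i hi hij
      obtain ⟨r', hr', rfl⟩ := mem_Jof.1 hi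
      rw [Bof_cast]
      intro u hu
      have := mem_nb.1 (S.Ycov r hr r' hr' (by exact_mod_cast hij) (by simpa using hu))
      simpa using this
    · intro i hi hij
      obtain ⟨r', hr', rfl⟩ := mem_Jof.1 hi
      rw [Bof_cast]
      intro x hx u hu
      exact S.Yant r hr r' hr' (by exact_mod_cast hij) x (by simpa using hx) u (by simpa using hu)
  · intro j hj
    obtain ⟨r, hr, rfl⟩ := mem_Jof.1 hj
    refine ⟨(((R.filter (fun r' => r' ≤ r)).biUnion X : Finset V) : Set V), ?_, ?_, ?_⟩
    · apply Finset.coe_subset.2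
      apply Finset.biUnion_subset.2
      intro r' hr'
      exact (hX r' (Finset.mem_filter.1 hr').1).1
    · intro i hi hij
      obtain ⟨r', hr', rfl⟩ := mem_Jof.1 hi
      rw [Bof_cast]
      intro u hu
      obtain ⟨x, hx, hxu⟩ := mem_nb.1 ((hX r' hr').2.1 (by simpa using hu))
      refine ⟨x, ?_, hxu⟩
      apply Finset.mem_coe.2
      exact Finset.mem_biUnion.2 ⟨r', Finset.mem_filter.2 ⟨hr', by exact_mod_cast hij⟩, hx⟩
    · intro i hi hij
      obtain ⟨r', hr', rfl⟩ := mem_Jof.1 hi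
      rw [Bof_cast]
      intro x hx u hu
      obtain ⟨r2, hr2, hx⟩ := Finset.mem_biUnion.1 (Finset.mem_coe.1 hx)
      obtain ⟨hr2, hle⟩ := Finset.mem_filter.1 hr2
      have hij' : r < r' := by exact_mod_cast hij
      exact (hX r2 hr2).2.2 r' hr' (by omega) x hx u (by simpa using hu)
  · refine ⟨fun j => idx j.toNat, ql, qm, ?_, ?_, ?_, ?_, S.ql_inj, S.qm_inj, ?_, ?_, S.qlm⟩
    · intro j hj
      obtain ⟨r, hr, rfl⟩ := mem_Jof.1 hj
      rw [Bof_cast]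
      simp only [Int.toNat_natCast]
      exact ⟨(S.qcA r hr).1, Finset.coe_subset.2 (S.qcA r hr).2⟩
    · exact fun i hi => ⟨(S.qlA i hi).1, Finset.coe_subset.2 (S.qlA i hi).2⟩
    · exact fun i hi hi' => ⟨(S.qmA i hi hi').1, Finset.coe_subset.2 (S.qmA i hi hi').2⟩
    · intro j hj j' hj' e
      obtain ⟨r, hr, rfl⟩ := mem_Jof.1 hj
      obtain ⟨r', hr', rfl⟩ := mem_Jof.1 hj'
      simp only [Int.toNat_natCast] at e
      rw [S.qc_inj r hr r' hr' e]
    · intro j hj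
      obtain ⟨r, hr, rfl⟩ := mem_Jof.1 hj
      simp only [Int.toNat_natCast]
      exact S.qcl r hr
    · intro j hj
      obtain ⟨r, hr, rfl⟩ := mem_Jof.1 hj
      simp only [Int.toNat_natCast]
      exact S.qcm r hr

/-- the weight giving each block total weight one -/
def wtOf (I : Finset ℤ) (A : ℤ → Finset V) (v : V) : NNReal :=
  if h : ∃ i ∈ I, v ∈ A i then ((A h.choose).card : NNReal)⁻¹ else 1

lemma wtOf_eq (hA : ∀ i ∈ I, ∀ j ∈ I, i ≠ j → Disjoint (A i) (A j)) {i : ℤ} (hi : i ∈ I) {v : V}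
    (hv : v ∈ A i) : (wtOf I A v : ℝ) = ((A i).card : ℝ)⁻¹ := by
  have h : ∃ i ∈ I, v ∈ A i := ⟨i, hi, hv⟩
  have hs := h.choose_spec
  have : h.choose = i := by
    by_contra hne
    exact Finset.disjoint_left.1 (hA _ hs.1 i hi hne) hs.2 hv
  unfold wtOf
  rw [dif_pos h, this]
  simp

lemma ws_eq (hA : ∀ i ∈ I, ∀ j ∈ I, i ≠ j → Disjoint (A i) (A j)) {i : ℤ} (hi : i ∈ I)
    {S : Finset V} (hS : S ⊆ A i) : ws (wtOf I A) S = (S.card : ℝ) / (A i).card := by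
  unfold ws
  rw [Finset.sum_congr rfl (fun v hv => wtOf_eq hA hi (hS hv))]
  rw [Finset.sum_const, nsmul_eq_mul, div_eq_mul_inv]

lemma nb_single (v : V) (S : Finset V) :
    ((nb G {v} ∩ S : Finset V) : Set V) = G.neighborSet v ∩ (S : Set V) := by
  ext x
  simp [mem_nb]

lemma mkEnv (hne : ∀ i ∈ I, (A i).Nonempty)
    (hA : ∀ i ∈ I, ∀ j ∈ I, i ≠ j → Disjoint (A i) (A j)) (hV : 1 ≤ Fintype.card V)
    (hlam : 0 < lam) (hδ : 0 < δ) (hlink : LinkageLE G I (fun i => (A i : Set V)) lam)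
    (hnd : ¬ Divergent G I (fun i => (A i : Set V)) γ δ) :
    Env G (wtOf I A) I A lam γ δ (1 / (Fintype.card V : ℝ)) := by
  have hN : (1:ℝ) ≤ Fintype.card V := by exact_mod_cast hV
  have hcp : ∀ i ∈ I, (0:ℝ) < (A i).card := fun i hi => by
    exact_mod_cast Finset.card_pos.2 (hne i hi)
  refine ⟨by positivity, ?_, ?_, hA, ?_, ?_, hδ, hlam⟩
  · intro v
    by_cases h : ∃ i ∈ I, v ∈ A i
    · obtain ⟨i, hi, hv⟩ := h
      rw [wtOf_eq hA hi hv, one_div]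
      apply inv_anti₀ (hcp i hi)
      exact_mod_cast Finset.card_le_univ (A i)
    · unfold wtOf
      rw [dif_neg h]
      rw [div_le_iff₀ (by positivity)]
      simpa using hN
  · intro i hi
    rw [ws_eq hA hi le_rfl, div_self (hcp i hi).ne']
  · intro i hi j hj hij v hv
    rw [ws_eq hA hj Finset.inter_subset_right, div_le_iff₀ (hcp j hj)]
    have := hlink i hi j hj hij v (by simpa using hv)
    rw [← nb_single] at this
    simpa only [Set.ncard_coe_finset] using this
  · intro i hi j hj hij P hP Q hQ hPw hQw
    by_contra hcon
    push Not at hcon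
    apply hnd
    refine ⟨i, hi, j, hj, hij, (P : Set V), Finset.coe_subset.2 hP, (Q : Set V),
      Finset.coe_subset.2 hQ, ?_, ?_, ?_⟩
    · rw [ws_eq hA hi hP, le_div_iff₀ (hcp i hi)] at hPw
      simpa only [Set.ncard_coe_finset] using hPw
    · rw [ws_eq hA hj hQ, le_div_iff₀ (hcp j hj)] at hQw
      simpa only [Set.ncard_coe_finset] using hQw
    · intro x hx y hy
      exact hcon x (by simpa using hx) y (by simpa using hy)

lemma card_le_of_blockade (hne : ∀ i ∈ I, (A i).Nonempty)
    (hA : ∀ i ∈ I, ∀ j ∈ I, i ≠ j → Disjoint (A i) (A j)) : I.card ≤ Fintype.card V := by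
  calc I.card = ∑ i ∈ I, 1 := by simp
    _ ≤ ∑ i ∈ I, (A i).card := Finset.sum_le_sum (fun i hi => Finset.card_pos.2 (hne i hi))
    _ = (I.biUnion A).card := (Finset.card_biUnion hA).symm
    _ ≤ _ := Finset.card_le_univ _

end Convert

/-- obtaining a rainbow bi-grading of length `k` and height `ℓ`. -/
theorem statement_17 (ℓ : ℕ) (c : ℝ) (hc : 0 < c) (hℓ : 3 * ⌈1/c⌉₊ + 1 ≤ ℓ)
    (k : ℕ) (hk : 1 ≤ k) (d lam' : ℝ) (hd0 : 0 < d) (hd1 : d ≤ 1)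
    (hl0 : 0 < lam') (hl1 : lam' ≤ 1) :
    ∃ (K : ℕ) (lam : ℝ), 1 ≤ K ∧ 0 < lam ∧
      ∀ {V : Type} [Fintype V] (G : SimpleGraph V) (I : Finset ℤ) (A : ℤ → Set V),
        IsBlockade I A → I.card = K → LinkageLE G I A lam →
        ¬ Divergent G I A ((2 : ℝ) ^ (-(6 : ℤ) - 2 * (ℓ : ℤ)) / (K : ℝ))
            ((K : ℝ) ^ (-(K : ℤ)) * (Fintype.card V : ℝ) ^ (-c)) →
        ∃ (L : ℕ → Set V) (a : ℕ) (M : ℕ → Set V) (b : ℕ)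
          (J : Finset ℤ) (B : ℤ → Set V),
          IsBiGrading G L a M b J B ∧ RainbowBiLevelling I A L a M b J B ∧
          J.card = k ∧ a + b = ℓ ∧
          SizeGE I A J B ((2 : ℝ) ^ (-(k : ℤ) - 2 * (ℓ : ℤ)) * (K : ℝ) ^ (-(K : ℤ)) *
            (Fintype.card V : ℝ) ^ (-d)) ∧
          LinkageLE G J B lam' := by
  classical
  obtain ⟨K, s, lam, hK1, hlam, hKs, hnum⟩ := consts ℓ c hc k d lam' hd0 hl0 hl1
  refine ⟨K, lam, hK1, hlam, ?_⟩
  intro V _ G I A hA hIK hlink hnd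
  obtain ⟨Af, rfl⟩ : ∃ Af : ℤ → Finset V, A = fun i => (Af i : Set V) :=
    ⟨fun i => (A i).toFinset, by funext i; simp⟩
  obtain ⟨hne', hdis'⟩ := hA
  have hne : ∀ i ∈ I, (Af i).Nonempty := fun i hi => Finset.coe_nonempty.1 (hne' i hi)
  have hdis : ∀ i ∈ I, ∀ j ∈ I, i ≠ j → Disjoint (Af i) (Af j) := fun i hi j hj hij =>
    Finset.disjoint_coe.1 (hdis' i hi j hj hij)
  have hKN : K ≤ Fintype.card V := hIK ▸ card_le_of_blockade hne hdis
  have hN1 : (1:ℝ) ≤ Fintype.card V := by exact_mod_cast hK1.trans hKN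
  have hK0 : (1:ℝ) ≤ K := by exact_mod_cast hK1
  have E := mkEnv hne hdis (hK1.trans hKN) hlam (by positivity) hlink hnd
  obtain ⟨h, b, L, M, Y, ql, qm, idx, R, C, X, hhb, hRk, S, hw, hX, hl⟩ :=
    main_lem E hl0 (by omega) (hnum _ hKN) (by rw [hIK]; exact hKs)
  have hρ : 0 < ((Fintype.card V : ℝ) ^ (- min d c)) / 2 ^ k := by positivity
  have hCne : ∀ r ∈ R, (C r).Nonempty := fun r hr =>
    nonempty_of_ws (lt_of_lt_of_le hρ (hw r hr))
  obtain ⟨c1, c2⟩ := S.convert hdis hCne hX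
  refine ⟨_, h, _, b, Jof R, Bof C, c1, c2, by simpa [Jof] using hRk, hhb, ?_, ?_⟩
  · intro j hj i hi hCi
    obtain ⟨r, hr, rfl⟩ := mem_Jof.1 hj
    rw [Bof_cast] at hCi ⊢
    have hCi' : C r ⊆ Af i := Finset.coe_subset.1 hCi
    have h1 := hw r hr
    have hcp : (0:ℝ) < (Af i).card := by exact_mod_cast Finset.card_pos.2 (hne i hi)
    rw [ws_eq hdis hi hCi', le_div_iff₀ hcp] at h1
    simp only [Set.ncard_coe_finset]
    refine le_trans (mul_le_mul_of_nonneg_right ?_ hcp.le) h1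
    have e1 : (2 : ℝ) ^ (-(k : ℤ) - 2 * (ℓ : ℤ)) ≤ 1 / 2 ^ k := by
      calc (2 : ℝ) ^ (-(k : ℤ) - 2 * (ℓ : ℤ)) ≤ (2:ℝ) ^ (-(k:ℤ)) :=
            zpow_le_zpow_right₀ (by norm_num) (by omega)
        _ = _ := by rw [zpow_neg, zpow_natCast, one_div]
    have e2 : (K : ℝ) ^ (-(K : ℤ)) ≤ 1 := zpow_le_one_of_nonpos₀ hK0 (by omega)
    have e3 : (Fintype.card V : ℝ) ^ (-d) ≤ (Fintype.card V : ℝ) ^ (- min d c) :=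
      Real.rpow_le_rpow_of_exponent_le hN1 (by linarith [min_le_left d c])
    calc (2 : ℝ) ^ (-(k : ℤ) - 2 * (ℓ : ℤ)) * (K : ℝ) ^ (-(K : ℤ)) * (Fintype.card V : ℝ) ^ (-d)
        ≤ (1 / 2 ^ k) * 1 * (Fintype.card V : ℝ) ^ (- min d c) := by gcongr
      _ = _ := by ring
  · intro i hi j hj hij v hv
    obtain ⟨r, hr, rfl⟩ := mem_Jof.1 hi
    obtain ⟨r', hr', rfl⟩ := mem_Jof.1 hj
    rw [Bof_cast] at hv
    rw [Bof_cast, ← nb_single]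
    have h1 := hl r' hr' r hr (fun e => hij (by rw [e])) v (by simpa using hv)
    have hq := S.qcA r' hr'
    have hcp : (0:ℝ) < (Af (idx r')).card := by
      exact_mod_cast Finset.card_pos.2 (hne _ hq.1)
    rw [ws_eq hdis hq.1 hq.2, ws_eq hdis hq.1 (Finset.inter_subset_right.trans hq.2),
      ← mul_div_assoc, div_le_div_iff_of_pos_right hcp] at h1
    simpa only [Set.ncard_coe_finset] using h1

end PurePairs
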